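/- arXiv:1811.00042 — 10 statements merged into one kernel-verified Lean document; each statement's English description precedes it below -/
import Mathlib

section
/- Let R be a commutative Noetherian ring, M and N finite R-modules, and r ∈ R an element that is a non-zerodivisor on both R and M, with rN = 0. Then for every i ≥ 0 there is an isomorphism Ext^{i+1}_R(N, M) ≅ Ext^i_{R/rR}(N, M/rM). -/
open CategoryTheory IsLocalRing

/-- The length of a module, as the Krull dimension of its lattice of submodules. -/
noncomputable def mlen (R M : Type) [Ring R] [AddCommGroup M] [Module R M] : WithBot ℕ∞ :=
  Order.krullDim (Submodule R M)

/-- `extM R M N n` is `Ext^n_R(M, N)`. -/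
noncomputable def extM (R : Type) [CommRing R] (M N : Type)
    [AddCommGroup M] [Module R M] [AddCommGroup N] [Module R N] (n : ℕ) : ModuleCat R :=
  ((Ext R (ModuleCat R) n).obj (Opposite.op (ModuleCat.of R M))).obj (ModuleCat.of R N)

/-- The length of the localization `M_P` over `R_P`. -/
noncomputable def locLen (R : Type) [CommRing R] (M : Type) [AddCommGroup M] [Module R M]
    (P : PrimeSpectrum R) : WithBot ℕ∞ :=
  mlen (Localization.AtPrime P.asIdeal) (LocalizedModule P.asIdeal.primeCompl M)


/-- The comparison map: apply `F` and then compose with the degree one class `ε`. -/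
noncomputable def reesMap {C D : Type 1} [Category.{0} C] [Abelian C] [Category.{0} D] [Abelian D]
    [HasExt.{0} C] [HasExt.{0} D] (F : C ⥤ D) [F.Additive]
    [Limits.PreservesFiniteLimits F] [Limits.PreservesFiniteColimits F]
    {Y : C} {A : D} (ε : Abelian.Ext.{0} (F.obj Y) A 1) (X : C) (i : ℕ) :
    Abelian.Ext.{0} X Y i →+ Abelian.Ext.{0} (F.obj X) A (i + 1) :=
  (ε.postcomp (F.obj X) (show i + 1 = i + 1 from rfl)).comp (F.mapExtAddHom X Y i)

theorem reesMap_apply {C D : Type 1} [Category.{0} C] [Abelian C] [Category.{0} D] [Abelian D]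
    [HasExt.{0} C] [HasExt.{0} D] (F : C ⥤ D) [F.Additive]
    [Limits.PreservesFiniteLimits F] [Limits.PreservesFiniteColimits F]
    {Y : C} {A : D} (ε : Abelian.Ext.{0} (F.obj Y) A 1) (X : C) (i : ℕ)
    (x : Abelian.Ext.{0} X Y i) :
    reesMap F ε X i x = (x.mapExactFunctor F).comp ε rfl := rfl

theorem reesMap_comp {C D : Type 1} [Category.{0} C] [Abelian C] [Category.{0} D] [Abelian D]
    [HasExt.{0} C] [HasExt.{0} D] (F : C ⥤ D) [F.Additive]
    [Limits.PreservesFiniteLimits F] [Limits.PreservesFiniteColimits F]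
    {Y : C} {A : D} (ε : Abelian.Ext.{0} (F.obj Y) A 1) (X X' : C) (a i j : ℕ) (h : a + i = j)
    (α : Abelian.Ext.{0} X X' a) (x : Abelian.Ext.{0} X' Y i) :
    reesMap F ε X j (α.comp x h) =
      (α.mapExactFunctor F).comp (reesMap F ε X' i x) (by lia) := by
  rw [reesMap_apply, reesMap_apply, Abelian.Ext.mapExactFunctor_comp]
  exact Abelian.Ext.comp_assoc _ _ _ _ _ (by lia)

open Abelian in
theorem rees_core {C D : Type 1} [Category.{0} C] [Abelian C] [Category.{0} D] [Abelian D]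
    [HasExt.{0} C] [HasExt.{0} D] (F : C ⥤ D) [F.Additive]
    [Limits.PreservesFiniteLimits F] [Limits.PreservesFiniteColimits F]
    [F.Full] [F.Faithful] (Y : C) (A : D) (ε : Abelian.Ext.{0} (F.obj Y) A 1)
    (h0 : ∀ X : C, Function.Bijective
      (fun g : Abelian.Ext.{0} (F.obj X) (F.obj Y) 0 => g.comp ε (zero_add 1)))
    (hP : ∀ X : C, ∃ (K P : C) (f : K ⟶ P) (g : P ⟶ X) (w : f ≫ g = 0),
      (ShortComplex.mk f g w).ShortExact ∧ Projective P ∧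
      ∀ n (x : Abelian.Ext.{0} (F.obj P) A (n + 2)), x = 0) (i : ℕ) (X : C) :
    Function.Bijective (reesMap F ε X i) := by
  induction i generalizing X with
  | zero =>
    refine (h0 X).comp ?_
    rw [Functor.mapExtAddHom_coe, Ext.mapExactFunctor₀]
    simpa using! ⟨F.map_injective, F.map_surjective⟩
  | succ i ih =>
    obtain ⟨K, P, f, g, w, hS, hp, hv⟩ := hP X
    have hSF := hS.map_of_exact F
    have hc : ∀ x₁ : Abelian.Ext.{0} K Y i,
        reesMap F ε X (i+1) (hS.extClass.comp x₁ (add_comm 1 i)) =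
        hSF.extClass.comp (reesMap F ε K i x₁) (add_comm 1 (i+1)) := fun x₁ => by
      refine (reesMap_comp ..).trans ?_
      rw [Ext.mapExactFunctor_extClass]
      rfl
    constructor
    · rw [injective_iff_map_eq_zero]
      intro x hx
      obtain ⟨x₁, rfl⟩ := Ext.contravariant_sequence_exact₃ hS Y x
        (Ext.eq_zero_of_projective _) (add_comm 1 i)
      have e1 := (hc x₁).symm.trans hx
      obtain ⟨z, hz⟩ := Ext.contravariant_sequence_exact₁ hSF A _ _ e1
      obtain ⟨x₂, rfl⟩ := (ih P).2 z
      have e2 : (Ext.mk₀ f).comp x₂ (zero_add i) = x₁ := by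
        apply (ih K).1
        refine Eq.trans ?_ hz
        refine (reesMap_comp ..).trans ?_
        rw [Ext.mapExactFunctor_mk₀]
        rfl
      rw [← e2]
      exact hS.extClass_comp_assoc x₂
    · intro y
      obtain ⟨y₁, rfl⟩ := Ext.contravariant_sequence_exact₃ hSF A y (hv _ _) (add_comm 1 (i+1))
      obtain ⟨x₁, rfl⟩ := (ih K).2 y₁
      exact ⟨hS.extClass.comp x₁ (add_comm 1 i), hc x₁⟩

theorem rees_extMk_zero {C : Type*} [Category C] [Abelian C] [HasExt.{0} C] {X Y : C}
    (P : ProjectiveResolution X) (f : P.complex.X 0 ⟶ Y)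
    (hf : P.complex.d 1 0 ≫ f = 0) : P.extMk f 1 rfl hf = 0 ↔ f = 0 := by
  constructor
  · intro h
    simp only [← P.extEquivCohomologyClass.apply_eq_iff_eq,
      ProjectiveResolution.extEquivCohomologyClass_extMk,
      ProjectiveResolution.extEquivCohomologyClass_zero,
      CochainComplex.HomComplex.CohomologyClass.mk_eq_zero_iff] at h
    rw [CochainComplex.HomComplex.Cocycle.toSingleMk_mem_coboundaries_iff _ _ _ _ _ 1 (by lia)] at h
    obtain ⟨g, hg⟩ := h
    have hz : Limits.IsZero (P.cochainComplex.X 1) :=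
      P.cochainComplex.isZero_of_isStrictlyLE 0 1 (by lia)
    rw [hz.eq_of_src g 0, Limits.comp_zero] at hg
    rw [← cancel_epi (P.cochainComplexXIso (-(0:ℕ)) 0 rfl).hom, ← hg, Limits.comp_zero]
  · rintro rfl
    simp

theorem rees_extMk_congr {C : Type*} [Category C] [Abelian C] [HasExt.{0} C] {X Y : C}
    (P : ProjectiveResolution X) {n : ℕ} {f g : P.complex.X n ⟶ Y} (h : f = g)
    (hf : P.complex.d (n+1) n ≫ f = 0) (hg : P.complex.d (n+1) n ≫ g = 0) :
    P.extMk f (n+1) rfl hf = P.extMk g (n+1) rfl hg := by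
  subst h; rfl

theorem rees_bridge (R : Type) [CommRing R] (X Y : ModuleCat.{0} R) (n : ℕ) :
    Nonempty ((((Ext R (ModuleCat R) n).obj (Opposite.op X)).obj Y) ≃+ Abelian.Ext.{0} X Y n) := by
  let P := ProjectiveResolution.of X
  let K := P.complex.linearYonedaObj R Y
  have hcyc : ∀ z : K.cycles n, P.complex.d (n+1) n ≫ (K.iCycles n z : P.complex.X n ⟶ Y) = 0 := by
    intro z
    exact ConcreteCategory.congr_hom (K.iCycles_d n (n+1)) z
  let φ : K.cycles n →+ Abelian.Ext.{0} X Y n :=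
    { toFun := fun z => P.extMk (K.iCycles n z : P.complex.X n ⟶ Y) (n+1) rfl (hcyc z)
      map_zero' := (rees_extMk_congr P (map_zero (K.iCycles n).hom) _ Limits.comp_zero).trans
        (P.extMk_zero (n+1) rfl)
      map_add' := fun a b =>
        (rees_extMk_congr P (map_add (K.iCycles n).hom a b) _
          ((Preadditive.comp_add _ _ _ _ _ _).trans (by rw [hcyc, hcyc, add_zero]))).trans
          (P.add_extMk _ _ (n+1) rfl (hcyc a) (hcyc b)).symm }
  have hinj : Function.Injective (K.iCycles n) := (ModuleCat.mono_iff_injective _).1 inferInstance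
  have hφ : Function.Surjective φ := by
    intro α
    obtain ⟨f, hf, rfl⟩ := P.extMk_surjective α (n+1) rfl
    have hex : (ShortComplex.mk (K.iCycles n) (K.d n (n+1)) (by simp)).Exact :=
      ShortComplex.exact_of_f_is_kernel _ (K.cyclesIsKernel n (n+1) (by simp))
    rw [ShortComplex.moduleCat_exact_iff] at hex
    obtain ⟨z, hz⟩ := hex f hf
    refine ⟨z, ?_⟩
    exact rees_extMk_congr P hz (hcyc z) hf
  let ψ : K.cycles n →+ K.homology n := (K.homologyπ n).hom.toAddMonoidHom
  have hψ : Function.Surjective ψ := (ModuleCat.epi_iff_surjective (K.homologyπ n)).1 inferInstance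
  have hker : φ.ker = ψ.ker := by
    ext z
    rw [AddMonoidHom.mem_ker, AddMonoidHom.mem_ker]
    change P.extMk _ (n + 1) rfl (hcyc z) = 0 ↔ K.homologyπ n z = 0
    cases n with
    | zero =>
      refine (rees_extMk_zero P _ (hcyc z)).trans ?_
      have : IsIso (K.homologyπ 0) := inferInstance
      have h1 : Function.Injective (K.homologyπ 0) :=
        (ModuleCat.mono_iff_injective _).1 inferInstance
      rw [map_eq_zero_iff _ h1]
      exact map_eq_zero_iff _ hinj
    | succ p =>
      refine (P.extMk_eq_zero_iff _ _ rfl (hcyc z) p rfl).trans ?_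
      have hex : (ShortComplex.mk (K.toCycles p (p+1)) (K.homologyπ (p+1)) (by simp)).Exact :=
        ShortComplex.exact_of_g_is_cokernel _ (K.homologyIsCokernel p (p+1) (by simp))
      rw [ShortComplex.moduleCat_exact_iff] at hex
      constructor
      · rintro ⟨g, hg⟩
        have : K.toCycles p (p+1) g = z := by
          apply hinj
          refine Eq.trans ?_ hg
          exact ConcreteCategory.congr_hom (K.toCycles_i p (p+1)) g
        rw [← this]
        exact ConcreteCategory.congr_hom (K.toCycles_comp_homologyπ p (p+1)) g
      · intro h
        obtain ⟨g, rfl⟩ := hex z h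
        refine ⟨g, ?_⟩
        exact (ConcreteCategory.congr_hom (K.toCycles_i p (p+1)) g).symm
  exact ⟨(P.isoExt n Y).toLinearEquiv.toAddEquiv.trans
    ((QuotientAddGroup.quotientKerEquivOfSurjective ψ hψ).symm.trans
      ((QuotientAddGroup.quotientAddEquivOfEq hker.symm).trans
        (QuotientAddGroup.quotientKerEquivOfSurjective φ hφ)))⟩

section
variable (R : Type) [CommRing R] (r : R)

/-- restriction of scalars along `R → R/rR` -/
noncomputable abbrev reesRes : ModuleCat.{0} (R ⧸ Ideal.span {r}) ⥤ ModuleCat.{0} R :=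
  ModuleCat.restrictScalars (Ideal.Quotient.mk (Ideal.span {r}))

instance : (reesRes R r).Full where
  map_surjective {X Y} f := by
    refine ⟨ModuleCat.ofHom
      { toFun := fun x => f.hom x
        map_add' := fun a b => map_add f.hom a b
        map_smul' := fun s x => ?_ }, ?_⟩
    · obtain ⟨s, rfl⟩ := Ideal.Quotient.mk_surjective s
      exact f.hom.map_smul' s x
    · ext x; rfl

theorem rees_ses {R : Type} [CommRing R] {A B C : Type} [AddCommGroup A] [Module R A]
    [AddCommGroup B] [Module R B] [AddCommGroup C] [Module R C] (f : A →ₗ[R] B) (g : B →ₗ[R] C)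
    (hf : Function.Injective f) (hg : Function.Surjective g) (h : Function.Exact f g) :
    (ModuleCat.shortComplexOfCompEqZero f g h.linearMap_comp_eq_zero).ShortExact where
  exact := ModuleCat.shortComplex_exact _ h
  mono_f := (ModuleCat.mono_iff_injective _).2 hf
  epi_g := (ModuleCat.epi_iff_surjective _).2 hg

/-- The quotient map from a free `R`-module to a free `R/rR`-module. -/
noncomputable def reesFreeMap (I : Type) : (I →₀ R) →ₗ[R]
    (reesRes R r).obj (ModuleCat.of (R ⧸ Ideal.span {r}) (I →₀ R ⧸ Ideal.span {r})) where
  toFun x := Finsupp.mapRange (Ideal.Quotient.mk (Ideal.span {r})) (map_zero _) x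
  map_add' x y := Finsupp.mapRange_add (map_add _) x y
  map_smul' s x := by
    refine Finsupp.ext fun i => ?_
    exact map_mul (Ideal.Quotient.mk (Ideal.span {r})) s (x i)

theorem reesFree_vanish (hrR : ∀ x : R, r * x = 0 → x = 0) (I : Type) (A : ModuleCat.{0} R) (n : ℕ)
    (x : Abelian.Ext.{0} ((reesRes R r).obj
      (ModuleCat.of (R ⧸ Ideal.span {r}) (I →₀ R ⧸ Ideal.span {r}))) A (n + 2)) : x = 0 := by
  have hS := rees_ses (LinearMap.lsmul R (I →₀ R) r) (reesFreeMap R r I)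
    (by
      rw [injective_iff_map_eq_zero]
      intro a ha
      refine Finsupp.ext fun i => hrR _ ?_
      exact DFunLike.congr_fun ha i)
    (Finsupp.mapRange_surjective _ (map_zero _) Ideal.Quotient.mk_surjective)
    (by
      intro y
      constructor
      · intro hy
        have h1 : ∀ i, ∃ c, r * c = y i := fun i => by
          have h2 : Ideal.Quotient.mk (Ideal.span {r}) (y i) = 0 := 
            DFunLike.congr_fun (F := I →₀ R ⧸ Ideal.span {r}) hy i
          rw [Ideal.Quotient.eq_zero_iff_mem, Ideal.mem_span_singleton] at h2
          obtain ⟨c, hc⟩ := h2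
          exact ⟨c, hc.symm⟩
        choose c hc using h1
        refine ⟨Finsupp.onFinset y.support c fun i hi => ?_, ?_⟩
        · rw [Finsupp.mem_support_iff, ← hc]
          exact fun h => hi (hrR _ h)
        · ext i
          simpa using hc i
      · rintro ⟨c, rfl⟩
        refine Finsupp.ext fun i => ?_
        change Ideal.Quotient.mk (Ideal.span {r}) (r * c i) = 0
        rw [Ideal.Quotient.eq_zero_iff_mem]
        exact Ideal.mul_mem_right _ _ (Ideal.mem_span_singleton_self r))
  have p : Projective (ModuleCat.of R (I →₀ R)) := inferInstance
  obtain ⟨x₁, rfl⟩ := Abelian.Ext.contravariant_sequence_exact₃ hS A x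
    (@Abelian.Ext.eq_zero_of_projective _ _ _ _ _ _ _ p _) (add_comm 1 (n+1))
  have : x₁ = 0 := @Abelian.Ext.eq_zero_of_projective _ _ _ _ _ _ _ p _
  rw [this, Abelian.Ext.comp_zero]

theorem rees_cover (hrR : ∀ x : R, r * x = 0 → x = 0) (A : ModuleCat.{0} R)
    (X : ModuleCat.{0} (R ⧸ Ideal.span {r})) :
    ∃ (K P : ModuleCat.{0} (R ⧸ Ideal.span {r})) (f : K ⟶ P) (g : P ⟶ X) (w : f ≫ g = 0),
      (ShortComplex.mk f g w).ShortExact ∧ Projective P ∧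
      ∀ n (x : Abelian.Ext.{0} ((reesRes R r).obj P) A (n + 2)), x = 0 := by
  have hg : Function.Surjective (Finsupp.linearCombination (R ⧸ Ideal.span {r}) (id : X → X)) :=
    fun x => ⟨Finsupp.single x 1, by simp⟩
  exact ⟨_, ModuleCat.of (R ⧸ Ideal.span {r}) (X →₀ R ⧸ Ideal.span {r}), _, _, _,
    LinearMap.shortExact_shortComplexKer hg, inferInstance,
    fun n x => reesFree_vanish R r hrR X A n x⟩

theorem rees_main (hrR : ∀ x : R, r * x = 0 → x = 0) (M : Type) [AddCommGroup M] [Module R M]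
    (hrM : ∀ m : M, r • m = 0 → m = 0) (X : ModuleCat.{0} (R ⧸ Ideal.span {r})) (i : ℕ) :
    Nonempty (Abelian.Ext.{0} ((reesRes R r).obj X) (ModuleCat.of R M) (i + 1) ≃+
      Abelian.Ext.{0} X (ModuleCat.of (R ⧸ Ideal.span {r})
        (M ⧸ ((Ideal.span {r} : Ideal R) • (⊤ : Submodule R M)))) i) := by
  let Y := ModuleCat.of (R ⧸ Ideal.span {r})
        (M ⧸ ((Ideal.span {r} : Ideal R) • (⊤ : Submodule R M)))
  let q : M →ₗ[R] (reesRes R r).obj Y :=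
    { toFun := fun m => Submodule.Quotient.mk m
      map_add' := fun _ _ => rfl
      map_smul' := fun _ _ => rfl }
  have hS := rees_ses (LinearMap.lsmul R M r) q
    (by
      rw [injective_iff_map_eq_zero]
      intro a ha
      exact hrM a ha)
    (fun y => Submodule.Quotient.mk_surjective _ y)
    (by
      intro y
      refine (Submodule.Quotient.mk_eq_zero _).trans ?_
      rw [Submodule.ideal_span_singleton_smul, Submodule.mem_smul_pointwise_iff_exists]
      simp)
  have hX : ∀ X : ModuleCat.{0} (R ⧸ Ideal.span {r}), r • 𝟙 ((reesRes R r).obj X) = 0 := by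
    intro X
    ext x
    change (Ideal.Quotient.mk (Ideal.span {r}) r) • (show X from x) = 0
    rw [Ideal.Quotient.eq_zero_iff_mem.2 (Ideal.mem_span_singleton_self r), zero_smul]
  have hz : ∀ (X : ModuleCat.{0} (R ⧸ Ideal.span {r})) (n : ℕ)
      (x : Abelian.Ext.{0} ((reesRes R r).obj X) (ModuleCat.of R M) n), r • x = 0 := by
    intro X n x
    rw [← Abelian.Ext.mk₀_id_comp x, ← Abelian.Ext.smul_comp, ← Abelian.Ext.mk₀_smul, hX,
      Abelian.Ext.mk₀_zero, Abelian.Ext.zero_comp]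
  have hf : ∀ (X : ModuleCat.{0} (R ⧸ Ideal.span {r})) (n : ℕ)
      (x : Abelian.Ext.{0} ((reesRes R r).obj X) (ModuleCat.of R M) n),
      x.comp (Abelian.Ext.mk₀ (ModuleCat.ofHom (LinearMap.lsmul R M r))) (add_zero n) = 0 := by
    intro X n x
    rw [← hz X n x, Abelian.Ext.smul_eq_comp_mk₀]
    rfl
  refine ⟨(AddEquiv.ofBijective _ (rees_core (reesRes R r) Y (ModuleCat.of R M) hS.extClass ?_
    (rees_cover R r hrR _) i X)).symm⟩
  intro X
  constructor
  · refine (injective_iff_map_eq_zero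
      (hS.extClass.postcomp ((reesRes R r).obj X) (zero_add 1))).2 fun x hx => ?_
    obtain ⟨y, rfl⟩ := Abelian.Ext.covariant_sequence_exact₃ _ hS x (zero_add 1) hx
    have hy : y = 0 := by
      apply (@Abelian.Ext.postcomp_mk₀_injective_of_mono _ _ _ _ ((reesRes R r).obj X) _ _ _
        hS.mono_f)
      rw [map_zero]
      exact hf X 0 y
    rw [hy, Abelian.Ext.zero_comp]
  · intro y
    exact Abelian.Ext.covariant_sequence_exact₁ _ hS y (hf X 1 y) (zero_add 1)
end

/-- **Rees's lemma.** If `r` is a non-zerodivisor on `R` and on `M` and `rN = 0`, then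
`Ext^{i+1}_R(N, M) ≅ Ext^i_{R/rR}(N, M/rM)` for all `i ≥ 0`. -/
theorem rees_lemma (R : Type) [CommRing R] [IsNoetherianRing R]
    (M N : Type) [AddCommGroup M] [Module R M] [AddCommGroup N] [Module R N]
    [Module.Finite R M] [Module.Finite R N]
    (r : R)
    (hrR : ∀ x : R, r * x = 0 → x = 0)
    (hrM : ∀ m : M, r • m = 0 → m = 0)
    (hrN : ∀ n : N, r • n = 0)
    [Module (R ⧸ Ideal.span {r}) N] [IsScalarTower R (R ⧸ Ideal.span {r}) N]
    (i : ℕ) :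
    Nonempty
      ((extM R N M (i + 1)) ≃+
        (extM (R ⧸ Ideal.span {r}) N
          (M ⧸ ((Ideal.span {r} : Ideal R) • (⊤ : Submodule R M))) i)) := by
  let e : (reesRes R r).obj (ModuleCat.of (R ⧸ Ideal.span {r}) N) ≅ ModuleCat.of R N :=
    LinearEquiv.toModuleIso (X₁ := (reesRes R r).obj (ModuleCat.of (R ⧸ Ideal.span {r}) N))
      (@AddEquiv.toLinearEquiv R ((reesRes R r).obj (ModuleCat.of (R ⧸ Ideal.span {r}) N)) N _ _ _
        ((reesRes R r).obj (ModuleCat.of (R ⧸ Ideal.span {r}) N)).isModule _ (AddEquiv.refl N)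
        (fun s x => algebraMap_smul (R ⧸ Ideal.span {r}) s (show N from x)))
  obtain ⟨e₁⟩ := rees_bridge R ((reesRes R r).obj (ModuleCat.of (R ⧸ Ideal.span {r}) N))
    (ModuleCat.of R M) (i + 1)
  obtain ⟨e₂⟩ := rees_main R r hrR M hrM (ModuleCat.of (R ⧸ Ideal.span {r}) N) i
  obtain ⟨e₃⟩ := rees_bridge (R ⧸ Ideal.span {r}) (ModuleCat.of (R ⧸ Ideal.span {r}) N)
    (ModuleCat.of (R ⧸ Ideal.span {r}) (M ⧸ ((Ideal.span {r} : Ideal R) • (⊤ : Submodule R M)))) i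
  have e₀ := (((Ext R (ModuleCat R) (i + 1)).mapIso e.op).app
    (ModuleCat.of R M)).toLinearEquiv.toAddEquiv
  exact ⟨e₀.trans (e₁.trans (e₂.trans e₃.symm))⟩
end

section
/- Let (R, m) be a 1-dimensional Noetherian local ring satisfying Serre's condition S1, with minimal primes P_1, …, P_n. Let F be a finite torsion-free R-module and r ∈ m a non-zerodivisor. Then length_R(F/rF) = Σ_i length_{R_{P_i}}(F_{P_i}) · length_R((R/P_i)/r(R/P_i)). -/
open CategoryTheory IsLocalRing

section HerbrandAux

open scoped Pointwise

theorem hq_ker_range (R : Type) [CommRing R] {M N : Type} [AddCommGroup M] [Module R M]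
    [AddCommGroup N] [Module R N] (f : M →ₗ[R] N) :
    Module.length R M = Module.length R (LinearMap.ker f) + Module.length R (LinearMap.range f) :=
  Module.length_eq_add_of_exact (LinearMap.ker f).subtype f.rangeRestrict
    (Submodule.injective_subtype _) f.surjective_rangeRestrict (by
      rw [LinearMap.exact_iff]; simp)

theorem hq_mid (R : Type) [CommRing R] {M N K : Type} [AddCommGroup M] [Module R M]
    [AddCommGroup N] [Module R N] [AddCommGroup K] [Module R K] (f : M →ₗ[R] N) (g : N →ₗ[R] K)
    (h : Function.Exact f g) :
    Module.length R N = Module.length R (LinearMap.range f) + Module.length R (LinearMap.range g) := by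
  rw [hq_ker_range R g, h.linearMap_ker_eq]

/-- multiplication by `r` -/
noncomputable def hqMul (R : Type) [CommRing R] (r : R) (M : Type) [AddCommGroup M] [Module R M] :
    M →ₗ[R] M := LinearMap.lsmul R M r

theorem hqMul_apply (R : Type) [CommRing R] (r : R) (M : Type) [AddCommGroup M] [Module R M]
    (x : M) : hqMul R r M x = r • x := rfl

theorem hq_exact_mk (R : Type) [CommRing R] (r : R) (M : Type) [AddCommGroup M] [Module R M] :
    Function.Exact (hqMul R r M) (Submodule.mkQ (r • (⊤ : Submodule R M))) := by
  intro x
  simp only [Submodule.mkQ_apply, Submodule.Quotient.mk_eq_zero, Set.mem_range, hqMul_apply]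
  rw [Submodule.mem_smul_pointwise_iff_exists]
  simp

theorem hq_snake (R : Type) [CommRing R] (r : R) {A B C : Type}
    [AddCommGroup A] [Module R A] [AddCommGroup B] [Module R B] [AddCommGroup C] [Module R C]
    (f : A →ₗ[R] B) (g : B →ₗ[R] C) (hf : Function.Injective f) (hg : Function.Surjective g)
    (h : Function.Exact f g) :
    Module.length R (QuotSMulTop r B) + Module.length R (LinearMap.ker (hqMul R r A))
        + Module.length R (LinearMap.ker (hqMul R r C)) =
      Module.length R (QuotSMulTop r A) + Module.length R (QuotSMulTop r C)
        + Module.length R (LinearMap.ker (hqMul R r B)) ∧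
    Module.length R (LinearMap.ker (hqMul R r B)) ≤
      Module.length R (LinearMap.ker (hqMul R r A)) +
      Module.length R (LinearMap.ker (hqMul R r C)) := by
  have h1 : f.comp (hqMul R r A) = (hqMul R r B).comp f := by ext; simp [hqMul_apply]
  have h2 : g.comp (hqMul R r B) = (hqMul R r C).comp g := by ext; simp [hqMul_apply]
  let kf : LinearMap.ker (hqMul R r A) →ₗ[R] LinearMap.ker (hqMul R r B) :=
    f.restrict (fun x hx => by
      rw [LinearMap.mem_ker, hqMul_apply] at *; rw [← map_smul, hx, map_zero])
  let kg : LinearMap.ker (hqMul R r B) →ₗ[R] LinearMap.ker (hqMul R r C) :=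
    g.restrict (fun x hx => by
      rw [LinearMap.mem_ker, hqMul_apply] at *; rw [← map_smul, hx, map_zero])
  have hkf : Function.Injective kf := fun x y hxy => by
    apply Subtype.ext; apply hf; exact congrArg Subtype.val hxy
  have hk : Function.Exact kf kg := by
    rintro ⟨x, hx⟩
    constructor
    · intro hx'
      obtain ⟨y, hy⟩ := (h x).1 (congrArg Subtype.val hx')
      refine ⟨⟨y, ?_⟩, Subtype.ext hy⟩
      rw [LinearMap.mem_ker, hqMul_apply] at *
      apply hf
      rw [map_smul, hy, hx, map_zero]
    · rintro ⟨y, hy⟩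
      apply Subtype.ext
      have : f y = x := congrArg Subtype.val hy
      exact (h x).2 ⟨y, this⟩
  let d := SnakeLemma.δ' (hqMul R r A) (hqMul R r B) (hqMul R r C) f g h f g h h1 h2
    (LinearMap.ker (hqMul R r C)).subtype (LinearMap.exact_subtype_ker_map _)
    (Submodule.mkQ (r • (⊤ : Submodule R A))) (hq_exact_mk R r A) hg hf
  have hd1 : Function.Exact kg d :=
    SnakeLemma.exact_δ'_right (hqMul R r A) (hqMul R r B) (hqMul R r C) f g h f g h h1 h2
      (LinearMap.ker (hqMul R r B)).subtype (LinearMap.exact_subtype_ker_map _)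
      _ _ _ _ _ _ kg rfl (Submodule.injective_subtype _)
  have hd2 : Function.Exact d (QuotSMulTop.map r f) :=
    SnakeLemma.exact_δ'_left (hqMul R r A) (hqMul R r B) (hqMul R r C) f g h f g h h1 h2
      _ _ _ _ (Submodule.mkQ (r • (⊤ : Submodule R B))) (hq_exact_mk R r B) _ _
      (QuotSMulTop.map r f) rfl (Submodule.mkQ_surjective _)
  have hd3 := QuotSMulTop.map_exact r h hg
  have e2 := hq_mid R kf kg hk
  have e3 := hq_mid R kg d hd1
  have e4 := hq_mid R d _ hd2
  have e5 := hq_mid R _ _ hd3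
  have e1 := (LinearEquiv.ofInjective kf hkf).length_eq
  have e6 : Module.length R (LinearMap.range (QuotSMulTop.map r g)) =
      Module.length R (QuotSMulTop r C) := by
    rw [LinearMap.range_eq_top.2 (QuotSMulTop.map_surjective r hg), Module.length_top]
  rw [e6] at e5
  constructor
  · rw [e5, e1, e3, e4, e2]; ring
  · rw [e2, e1, e3, ← add_assoc]; exact le_self_add

theorem hq_loc_add (R : Type) [CommRing R] (P : PrimeSpectrum R) {A B C : Type}
    [AddCommGroup A] [Module R A] [AddCommGroup B] [Module R B] [AddCommGroup C] [Module R C]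
    (f : A →ₗ[R] B) (g : B →ₗ[R] C) (hf : Function.Injective f) (hg : Function.Surjective g)
    (h : Function.Exact f g) :
    Module.length (Localization.AtPrime P.asIdeal) (LocalizedModule P.asIdeal.primeCompl B) =
    Module.length (Localization.AtPrime P.asIdeal) (LocalizedModule P.asIdeal.primeCompl A) +
    Module.length (Localization.AtPrime P.asIdeal) (LocalizedModule P.asIdeal.primeCompl C) :=
  Module.length_eq_add_of_exact (LocalizedModule.map P.asIdeal.primeCompl f)
    (LocalizedModule.map P.asIdeal.primeCompl g)
    (LocalizedModule.map_injective _ _ hf) (LocalizedModule.map_surjective _ _ hg)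
    (LocalizedModule.map_exact _ _ _ h)

theorem hq_loc_one (R : Type) [CommRing R] (P : PrimeSpectrum R) (N : Type)
    [AddCommGroup N] [Module R N] (e : N ≃ₗ[R] R ⧸ P.1) :
    Module.length (Localization.AtPrime P.asIdeal)
      (LocalizedModule P.asIdeal.primeCompl N) = 1 := by
  rw [Module.length_eq_one_iff, isSimpleModule_iff_toSpanSingleton_surjective]
  have hgen : ∀ x : N, ∃ a : R, x = a • e.symm 1 := fun x => by
    obtain ⟨a, ha⟩ := Ideal.Quotient.mk_surjective (e x)
    refine ⟨a, ?_⟩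
    apply e.injective
    rw [map_smul, e.apply_symm_apply, ← ha, Algebra.smul_def, mul_one]; rfl
  have hann : ∀ a : R, a • e.symm 1 = 0 ↔ a ∈ P.asIdeal := fun a => by
    rw [← map_smul, LinearEquiv.map_eq_zero_iff, Algebra.smul_def, mul_one]
    exact Ideal.Quotient.eq_zero_iff_mem
  constructor
  · by_contra hns
    rw [not_nontrivial_iff_subsingleton, LocalizedModule.subsingleton_iff] at hns
    obtain ⟨s, hs, h0⟩ := hns (e.symm 1)
    exact hs ((hann s).1 h0)
  · intro x hx y
    induction x using LocalizedModule.induction_on with | _ x s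
    induction y using LocalizedModule.induction_on with | _ y t
    obtain ⟨a, rfl⟩ := hgen x
    obtain ⟨b, rfl⟩ := hgen y
    have ha : a ∈ P.asIdeal.primeCompl := fun ha => hx (by
      rw [(hann a).2 ha, LocalizedModule.zero_mk])
    refine ⟨Localization.mk (b * s) (t * ⟨a, ha⟩), ?_⟩
    rw [LinearMap.toSpanSingleton_apply, LocalizedModule.mk_smul_mk, LocalizedModule.mk_eq]
    refine ⟨1, ?_⟩
    simp only [one_smul, Submonoid.smul_def, Submonoid.coe_mul, smul_smul]
    congr 1; ring

theorem hq_loc_zero (R : Type) [CommRing R] (P Q : PrimeSpectrum R) (N : Type)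
    [AddCommGroup N] [Module R N] (e : N ≃ₗ[R] R ⧸ Q.1) (hPQ : ¬ Q.asIdeal ≤ P.asIdeal) :
    Module.length (Localization.AtPrime P.asIdeal)
      (LocalizedModule P.asIdeal.primeCompl N) = 0 := by
  rw [Module.length_eq_zero_iff, LocalizedModule.subsingleton_iff]
  obtain ⟨a, ha, ha'⟩ := Set.not_subset.1 hPQ
  refine fun m => ⟨a, ha', ?_⟩
  apply e.injective
  rw [map_smul, map_zero, Algebra.smul_def]
  have : algebraMap R (R ⧸ Q.1) a = 0 := Ideal.Quotient.eq_zero_iff_mem.2 ha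
  rw [this, zero_mul]

theorem hq_quot (R : Type) [CommRing R] (Q : PrimeSpectrum R) (N : Type) (r : R)
    [AddCommGroup N] [Module R N] (e : N ≃ₗ[R] R ⧸ Q.1) :
    Module.length R (QuotSMulTop r N) =
      Module.length R (R ⧸ (Q.asIdeal ⊔ Ideal.span {r})) := by
  let φ : R →ₗ[R] QuotSMulTop r N := (Submodule.mkQ (r • (⊤ : Submodule R N))).comp
    (e.symm.toLinearMap.comp (Submodule.mkQ Q.1))
  have hφ : Function.Surjective φ := (Submodule.mkQ_surjective _).comp
    (e.symm.surjective.comp (Submodule.mkQ_surjective _))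
  have hk : LinearMap.ker φ = Q.asIdeal ⊔ Ideal.span {r} := by
    ext x
    rw [LinearMap.mem_ker]
    change Submodule.mkQ (r • (⊤ : Submodule R N)) (e.symm (Submodule.mkQ Q.1 x)) = 0 ↔ _
    rw [(hq_exact_mk R r N) _, Submodule.mem_sup]
    constructor
    · rintro ⟨y, hy⟩
      obtain ⟨z, hz⟩ := Submodule.mkQ_surjective _ (e y)
      refine ⟨x - r * z, ?_, r * z, ?_, by ring⟩
      · rw [← Submodule.Quotient.mk_eq_zero, ← Submodule.mkQ_apply, map_sub, sub_eq_zero]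
        rw [← smul_eq_mul, map_smul, hz, ← map_smul, LinearEquiv.eq_symm_apply] at *
        exact hy.symm
      · exact Ideal.mem_span_singleton.2 ⟨z, rfl⟩
    · rintro ⟨a, ha, b, hb, rfl⟩
      obtain ⟨z, rfl⟩ := Ideal.mem_span_singleton.1 hb
      refine ⟨e.symm (Submodule.mkQ Q.1 z), ?_⟩
      rw [hqMul_apply, ← map_smul, ← map_smul, map_add]
      rw [Submodule.mkQ_apply _ a, (Submodule.Quotient.mk_eq_zero _).2 ha, zero_add]; rfl
  rw [← hk]
  exact (φ.quotKerEquivOfSurjective hφ).length_eq.symm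

theorem hq_cancel (a b c : ℕ∞) (hc : c ≠ ⊤) (h : a + c = b + c) : a = b :=
  (ENat.addLECancellable_of_ne_top hc).inj.1 (by rw [add_comm c a, add_comm c b, h])

theorem hq_main (R : Type) [CommRing R] [IsNoetherianRing R] [IsLocalRing R]
    (hdim : ringKrullDim R = 1) (r : R) (hr : r ∈ maximalIdeal R)
    (hmin : ∀ P ∈ minimalPrimes R, r ∉ P) (S : Finset (PrimeSpectrum R))
    (hS : ∀ P, P ∈ S ↔ P.asIdeal ∈ minimalPrimes R)
    (F : Type) [AddCommGroup F] [Module R F] [hFin : Module.Finite R F] :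
    Module.length R (LinearMap.ker (hqMul R r F)) ≠ ⊤ ∧
    Module.length R (QuotSMulTop r F) = Module.length R (LinearMap.ker (hqMul R r F)) +
      ∑ P ∈ S, Module.length (Localization.AtPrime P.asIdeal)
        (LocalizedModule P.asIdeal.primeCompl F) *
        Module.length R (R ⧸ (P.asIdeal ⊔ Ideal.span {r})) := by
  have : Ring.KrullDimLE 1 R := by
    rw [Ring.krullDimLE_iff, hdim]; rfl
  induction hFin using IsNoetherianRing.induction_on_isQuotientEquivQuotientPrime R with
  | subsingleton N =>
    have hz : ∀ P : PrimeSpectrum R, Module.length (Localization.AtPrime P.asIdeal)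
        (LocalizedModule P.asIdeal.primeCompl N) = 0 := fun P => by
      rw [Module.length_eq_zero_iff, LocalizedModule.subsingleton_iff]
      exact fun m => ⟨1, Submonoid.one_mem _, Subsingleton.elim _ _⟩
    have : Subsingleton (QuotSMulTop r N) := (Submodule.mkQ_surjective _).subsingleton
    simp [Module.length_eq_zero]
  | quotient N p e =>
    by_cases hp : p.asIdeal ∈ minimalPrimes R
    · have hk : Module.length R (LinearMap.ker (hqMul R r N)) = 0 := by
        rw [Module.length_eq_zero_iff, Submodule.subsingleton_iff_eq_bot, LinearMap.ker_eq_bot']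
        intro m hm
        obtain ⟨a, ha⟩ := Ideal.Quotient.mk_surjective (e m)
        have h2 : e (r • m) = 0 := by rw [← hqMul_apply, hm, map_zero]
        rw [map_smul, ← ha, Algebra.smul_def] at h2
        have h3 : Ideal.Quotient.mk p.1 (r * a) = 0 := by rw [map_mul]; exact h2
        rw [Ideal.Quotient.eq_zero_iff_mem] at h3
        have h4 := (p.2.mem_or_mem h3).resolve_left (hmin _ hp)
        apply e.injective
        rw [map_zero, ← ha]
        exact Ideal.Quotient.eq_zero_iff_mem.2 h4
      rw [hk, zero_add]
      refine ⟨ENat.zero_ne_top, ?_⟩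
      rw [Finset.sum_eq_single p]
      · rw [hq_loc_one R p N e, one_mul, hq_quot R p N r e]
      · intro P hP hne
        rw [hq_loc_zero R P p N e, zero_mul]
        intro hle
        apply hne
        ext1
        exact le_antisymm (((hS P).1 hP).2 ⟨p.2, bot_le⟩ hle) hle
      · intro h; exact absurd ((hS p).2 hp) h
    · have hmax : p.asIdeal.IsMaximal :=
        ((Ring.krullDimLE_one_iff.1 this) p.asIdeal p.2).resolve_left hp
      have hpm := IsLocalRing.eq_maximalIdeal hmax
      have hz : ∑ P ∈ S, Module.length (Localization.AtPrime P.asIdeal)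
          (LocalizedModule P.asIdeal.primeCompl N) *
          Module.length R (R ⧸ (P.asIdeal ⊔ Ideal.span {r})) = 0 := by
        refine Finset.sum_eq_zero fun P hP => ?_
        rw [hq_loc_zero R P p N e, zero_mul]
        intro hle
        apply hmin _ ((hS P).1 hP)
        apply hle
        rw [hpm]; exact hr
      have hrz : hqMul R r N = 0 := by
        ext m
        rw [hqMul_apply]
        apply e.injective
        have : algebraMap R (R ⧸ p.1) r = 0 := Ideal.Quotient.eq_zero_iff_mem.2 (hpm ▸ hr)
        rw [map_smul, LinearMap.zero_apply, map_zero, Algebra.smul_def, this, zero_mul]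
      have hN : Module.length R N = 1 := by
        rw [e.length_eq, Module.length_eq_one_iff, isSimpleModule_iff_isCoatom]
        exact hmax.out
      rw [hz, add_zero, hq_quot R p N r e, hrz, LinearMap.ker_zero, Module.length_top, hN]
      refine ⟨ENat.one_ne_top, ?_⟩
      rw [sup_eq_left.2, ← hN, e.length_eq]
      rw [Ideal.span_singleton_le_iff_mem, hpm]; exact hr
  | exact A B C f g hf hg h hA hC =>
    obtain ⟨hA1, hA2⟩ := hA
    obtain ⟨hC1, hC2⟩ := hC
    obtain ⟨h1, h2⟩ := hq_snake R r f g hf hg h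
    have hfin : Module.length R (LinearMap.ker (hqMul R r A)) +
        Module.length R (LinearMap.ker (hqMul R r C)) ≠ (⊤ : ℕ∞) := WithTop.add_ne_top.2 ⟨hA1, hC1⟩
    refine ⟨ne_top_of_le_ne_top hfin h2, ?_⟩
    simp only [hq_loc_add R _ f g hf hg h, add_mul, Finset.sum_add_distrib]
    rw [add_assoc, hA2, hC2] at h1
    refine hq_cancel _ _ _ hfin ?_
    rw [h1]
    ring

end HerbrandAux

/-- **Herbrand quotient formula.** For a 1-dimensional Noetherian `S₁` local ring `R`,
a finite torsion-free module `F` and a non-zerodivisor `r` in the maximal ideal,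
`length_R(F/rF) = Σ_P length_{R_P}(F_P) · length_R(R/(P + rR))`, the sum being over the
minimal primes `P` of `R` (note `(R/P)/r(R/P) ≅ R/(P + rR)`). -/
theorem herbrand_quotient (R : Type) [CommRing R] [IsNoetherianRing R] [IsLocalRing R]
    (hdim : ringKrullDim R = 1)
    (hS1 : ∀ P ∈ associatedPrimes R R, P ∈ minimalPrimes R)
    (F : Type) [AddCommGroup F] [Module R F] [Module.Finite R F]
    (hF : ∀ P ∈ associatedPrimes R F, P ∈ minimalPrimes R)
    (r : R) (hr : r ∈ maximalIdeal R) (hreg : ∀ x : R, r * x = 0 → x = 0) :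
    mlen R (F ⧸ ((Ideal.span {r} : Ideal R) • (⊤ : Submodule R F))) =
      ∑ᶠ P ∈ {P : PrimeSpectrum R | P.asIdeal ∈ minimalPrimes R},
        locLen R F P * mlen R (R ⧸ (P.asIdeal ⊔ Ideal.span {r})) := by
  have hmin : ∀ P ∈ minimalPrimes R, r ∉ P := fun P hP hrP =>
    Set.disjoint_left.1 (Ideal.disjoint_nonZeroDivisors_of_mem_minimalPrimes hP) hrP
      (mem_nonZeroDivisors_iff.2 ⟨fun x hx => hreg x hx, fun x hx => hreg x (by rwa [mul_comm])⟩)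
  have hfin : {P : PrimeSpectrum R | P.asIdeal ∈ minimalPrimes R}.Finite :=
    (minimalPrimes.finite_of_isNoetherianRing R).preimage
      (fun P _ Q _ h => PrimeSpectrum.ext h)
  obtain ⟨-, key⟩ := hq_main R hdim r hr hmin hfin.toFinset (by simp) F
  have hk : Module.length R (LinearMap.ker (hqMul R r F)) = 0 := by
    rw [Module.length_eq_zero_iff, Submodule.subsingleton_iff_eq_bot, LinearMap.ker_eq_bot']
    intro m hm
    by_contra hne
    have : r ∈ ⋃ p ∈ associatedPrimes R F, (p : Set R) := by
      rw [biUnion_associatedPrimes_eq_zero_divisors]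
      exact ⟨m, hne, hm⟩
    simp only [Set.mem_iUnion] at this
    obtain ⟨p, hp, hrp⟩ := this
    exact hmin p (hF p hp) hrp
  rw [hk, zero_add] at key
  have hL : mlen R (F ⧸ ((Ideal.span {r} : Ideal R) • (⊤ : Submodule R F))) =
      (Module.length R (QuotSMulTop r F) : WithBot ℕ∞) := by
    rw [mlen, ← Module.coe_length, Submodule.ideal_span_singleton_smul]
  rw [hL, key, finsum_mem_eq_finite_toFinset_sum _ hfin]
  simp only [locLen, mlen, ← Module.coe_length, ← WithBot.coe_mul]
  generalize hfin.toFinset = S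
  exact map_sum (WithBot.addHom : ℕ∞ →+ WithBot ℕ∞) _ _
end

section
/- Let (A, m) be an Artinian local ring with residue field k = A/m, and Ω a finite A-module with Hom_A(k, Ω) ≅ k and length_A(Ω) ≥ length_A(A). Then Ω is isomorphic to the injective hull E(k) of k, and in particular length_A(Ω) = length_A(A). -/
open CategoryTheory IsLocalRing

/-- `E` is an injective hull of the residue field of `A`: it is injective and an essential
extension of the residue field. -/
def IsInjHullResidue (A : Type) [CommRing A] [IsLocalRing A]
    (E : Type) [AddCommGroup E] [Module A E] : Prop :=
  Module.Injective A E ∧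
    ∃ f : ResidueField A →ₗ[A] E, Function.Injective f ∧
      ∀ N : Submodule A E, N ≠ ⊥ → N ⊓ LinearMap.range f ≠ ⊥

/-- A proper ideal of an Artinian local ring admits a socle element modulo it. -/
lemma exists_socle_elt (A : Type) [CommRing A] [IsArtinianRing A] [IsLocalRing A]
    (J : Ideal A) (hJ : J ≠ ⊤) : ∃ x, x ∉ J ∧ ∀ a ∈ maximalIdeal A, a * x ∈ J := by
  obtain ⟨J', hc, -⟩ := exists_covBy_le_of_lt (lt_top_iff_ne_top.mpr hJ)
  obtain ⟨x, hx', hx⟩ := SetLike.exists_of_lt hc.lt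
  refine ⟨x, hx, fun a ha => ?_⟩
  by_contra hax
  have hlt : J < J ⊔ Ideal.span {a * x} := by
    refine lt_of_le_of_ne le_sup_left fun h => hax ?_
    rw [h]
    exact Ideal.mem_sup_right (Ideal.mem_span_singleton_self _)
  have hle : J ⊔ Ideal.span {a * x} ≤ J' :=
    sup_le hc.le ((Ideal.span_singleton_le_iff_mem _).mpr (J'.mul_mem_left a hx'))
  have heq := hc.eq_or_eq hlt.le hle
  have heq' : J ⊔ Ideal.span {a * x} = J' := by
    rcases heq with h | h
    · exact absurd h hlt.ne'
    · exact h
  rw [← heq'] at hx'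
  obtain ⟨j, hj, y, hy, hxy⟩ := Submodule.mem_sup.mp hx'
  obtain ⟨b, rfl⟩ := Ideal.mem_span_singleton'.mp hy
  have hu : IsUnit (1 - b * a) := by
    by_contra hn
    have h1 : (1 - b * a) ∈ maximalIdeal A := hn
    have h2 : (1 : A) ∈ maximalIdeal A := by
      have := Ideal.add_mem _ h1 ((maximalIdeal A).mul_mem_left b ha)
      simpa using this
    exact (Ideal.ne_top_iff_one _).mp (maximalIdeal.isMaximal A).ne_top h2
  have hmem : (1 - b * a) * x ∈ J := by
    have : (1 - b * a) * x = j := by linear_combination -hxy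
    rwa [this]
  exact hx ((Ideal.unit_mul_mem_iff_mem J hu).mp hmem)

/-- The length of a module whose socle has length at most one is at most that of the ring. -/
lemma length_le_of_socle (A : Type) [CommRing A] [IsArtinianRing A] [IsLocalRing A]
    (M : Type) [AddCommGroup M] [Module A M] (S : Submodule A M)
    (hS : Module.length A S ≤ 1)
    (hsoc : ∀ y : M, (∀ a ∈ maximalIdeal A, a • y = 0) → y ∈ S) :
    Module.length A M ≤ Module.length A A := by
  have key : ∀ J : Ideal A, Module.length A (Submodule.torsionBySet A M (J : Set A)) ≤
      Module.length A (A ⧸ J) := by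
    intro J
    induction J using WellFoundedGT.induction with
    | ind J ih =>
    by_cases hJ : J = ⊤
    · have : Subsingleton (Submodule.torsionBySet A M (J : Set A)) := by
        refine ⟨fun p q => ?_⟩
        have h : ∀ p : Submodule.torsionBySet A M (J : Set A), p = 0 := fun p => by
          have := (Submodule.mem_torsionBySet_iff _ _).mp p.2 ⟨1, by simp [hJ]⟩
          ext
          simpa using this
        rw [h p, h q]
      rw [Module.length_eq_zero]
      exact zero_le
    obtain ⟨x, hx, hmx⟩ := exists_socle_elt A J hJ
    set J' := J ⊔ Ideal.span {x} with hJ'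
    have hxJ' : x ∈ J' := Ideal.mem_sup_right (Ideal.mem_span_singleton_self _)
    have hlt : J < J' := lt_of_le_of_ne le_sup_left fun h => hx (by rw [h]; exact hxJ')
    have ih' := ih J' hlt
    let T := Submodule.torsionBySet A M (J : Set A)
    have hT : ∀ t : T, x • (t : M) ∈ S := fun t => hsoc _ fun a ha => by
      rw [smul_smul]
      exact (Submodule.mem_torsionBySet_iff _ _).mp t.2 ⟨_, hmx a ha⟩
    let φ : T →ₗ[A] S := LinearMap.codRestrict S ((LinearMap.lsmul A M x).comp T.subtype) hT
    have e1 := Module.length_eq_add_of_exact φ.ker.subtype φ.rangeRestrict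
      (Submodule.injective_subtype _) φ.surjective_rangeRestrict
      (by rw [LinearMap.exact_iff]; simp)
    have e2 : Module.length A φ.range ≤ 1 :=
      (Module.length_le_of_injective φ.range.subtype (Submodule.injective_subtype _)).trans hS
    have hk : ∀ t : φ.ker, ((t : T) : M) ∈ Submodule.torsionBySet A M (J' : Set A) := by
      intro t
      rw [Submodule.mem_torsionBySet_iff]
      rintro ⟨b, hb⟩
      obtain ⟨j, hj, y, hy, rfl⟩ := Submodule.mem_sup.mp hb
      obtain ⟨c, rfl⟩ := Ideal.mem_span_singleton'.mp hy
      have h1 : j • ((t : T) : M) = 0 :=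
        (Submodule.mem_torsionBySet_iff _ _).mp (t : T).2 ⟨j, hj⟩
      have h2 : x • ((t : T) : M) = 0 := congrArg Subtype.val (LinearMap.mem_ker.mp t.2)
      change (j + c * x) • ((t : T) : M) = 0
      rw [add_smul, mul_smul, h1, h2]
      simp
    have e3 : Module.length A φ.ker ≤
        Module.length A (Submodule.torsionBySet A M (J' : Set A)) := by
      refine Module.length_le_of_injective
        (LinearMap.codRestrict _ (T.subtype.comp φ.ker.subtype) hk) ?_
      intro p q h
      have := congrArg Subtype.val h
      exact Subtype.ext (Subtype.ext this)
    let π : (A ⧸ J) →ₗ[A] (A ⧸ J') := Submodule.mapQ J J' LinearMap.id hlt.le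
    have hπ : Function.Surjective π := by
      intro y
      obtain ⟨a, rfl⟩ := Submodule.Quotient.mk_surjective _ y
      exact ⟨Submodule.Quotient.mk a, rfl⟩
    have e4 := Module.length_eq_add_of_exact π.ker.subtype π
      (Submodule.injective_subtype _) hπ (by rw [LinearMap.exact_iff]; simp)
    have hnt : Nontrivial π.ker := by
      refine ⟨⟨⟨Submodule.Quotient.mk x, ?_⟩, 0, ?_⟩⟩
      · rw [LinearMap.mem_ker]
        exact (Submodule.Quotient.mk_eq_zero J').mpr hxJ'
      · intro h
        exact hx ((Submodule.Quotient.mk_eq_zero J).mp (congrArg Subtype.val h))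
    have e5 : 1 ≤ Module.length A π.ker := Order.one_le_iff_ne_zero.mpr Module.length_pos.ne'
    calc Module.length A T = _ := e1
      _ ≤ Module.length A (A ⧸ J') + 1 := add_le_add (e3.trans ih') e2
      _ ≤ Module.length A (A ⧸ J') + Module.length A π.ker := add_le_add le_rfl e5
      _ = _ := by rw [add_comm, e4]
  have h0 := key ⊥
  have h1 : Module.length A M ≤
      Module.length A (Submodule.torsionBySet A M ((⊥ : Ideal A) : Set A)) := by
    refine Module.length_le_of_injective
      (LinearMap.codRestrict _ LinearMap.id fun m => ?_) ?_
    · rw [Submodule.mem_torsionBySet_iff]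
      rintro ⟨b, hb⟩
      have : b = 0 := by simpa using hb
      simp [this]
    · intro p q h
      exact congrArg Subtype.val h
  exact h1.trans (h0.trans
    (Module.length_le_of_surjective (Submodule.mkQ (⊥ : Ideal A)) (Submodule.mkQ_surjective _)))

lemma length_residueField (A : Type) [CommRing A] [IsLocalRing A] :
    Module.length A (ResidueField A) = 1 := by
  rw [Module.length_eq_one_iff]
  exact isSimpleModule_iff_isCoatom.mpr (maximalIdeal.isMaximal A).out

lemma length_range_le (A : Type) [CommRing A] [IsLocalRing A]
    (M : Type) [AddCommGroup M] [Module A M] (g : ResidueField A →ₗ[A] M) :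
    Module.length A g.range ≤ 1 := by
  rw [← length_residueField A]
  exact Module.length_le_of_surjective g.rangeRestrict g.surjective_rangeRestrict

/-- If `A` is Artinian local with residue field `k`, and `Ω` is a finite module with
`Hom_A(k, Ω) ≅ k` and `length(Ω) ≥ length(A)`, then `Ω` is the injective hull of `k`
and `length(Ω) = length(A)`. -/
theorem omega_is_injective_hull (A : Type) [CommRing A] [IsArtinianRing A] [IsLocalRing A]
    (Ω : Type) [AddCommGroup Ω] [Module A Ω] [Module.Finite A Ω]
    (hsoc : Nonempty ((ResidueField A →ₗ[A] Ω) ≃ₗ[A] ResidueField A))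
    (hlen : mlen A A ≤ mlen A Ω) :
    (∀ (E : Type) [AddCommGroup E] [Module A E],
        IsInjHullResidue A E → Nonempty (Ω ≃ₗ[A] E)) ∧
      mlen A Ω = mlen A A := by
  obtain ⟨e⟩ := hsoc
  have hsimple : IsSimpleModule A (ResidueField A) :=
    Module.length_eq_one_iff.mp (length_residueField A)
  let g : ResidueField A →ₗ[A] Ω := e.symm 1
  have hg0 : g ≠ 0 := fun h => one_ne_zero (e.symm.map_eq_zero_iff.mp h)
  have hginj : Function.Injective g := (LinearMap.injective_or_eq_zero g).resolve_right hg0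
  have hsocΩ : ∀ y : Ω, (∀ a ∈ maximalIdeal A, a • y = 0) → y ∈ LinearMap.range g := by
    intro y hy
    let φ : ResidueField A →ₗ[A] Ω :=
      Submodule.liftQ (maximalIdeal A) (LinearMap.toSpanSingleton A Ω y)
        (fun a ha => by simpa using hy a ha)
    have hφ1 : φ (residue A 1) = y := by
      change (LinearMap.toSpanSingleton A Ω y) 1 = y
      simp
    obtain ⟨a, ha⟩ := residue_surjective (R := A) (e φ)
    have hφ : φ = a • g := by
      apply e.injective
      rw [map_smul, e.apply_symm_apply, ← ha, Algebra.smul_def, mul_one]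
      rfl
    refine ⟨a • residue A 1, ?_⟩
    rw [map_smul, ← LinearMap.smul_apply, ← hφ, hφ1]
  have hΩle : Module.length A Ω ≤ Module.length A A :=
    length_le_of_socle A Ω (LinearMap.range g) (length_range_le A Ω g) hsocΩ
  have hlen' : Module.length A A ≤ Module.length A Ω := by
    unfold mlen at hlen
    rw [← Module.coe_length, ← Module.coe_length] at hlen
    exact WithBot.coe_le_coe.mp hlen
  refine ⟨?_, ?_⟩
  · intro E _ _ hE
    obtain ⟨hinj, f, hf, hess⟩ := hE
    have hsocE : ∀ y : E, (∀ a ∈ maximalIdeal A, a • y = 0) → y ∈ LinearMap.range f := by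
      intro y hy
      by_cases hy0 : y = 0
      · rw [hy0]; exact zero_mem _
      have h1 := hess (Submodule.span A {y}) (by simpa using hy0)
      obtain ⟨z, ⟨hz1, hz2⟩, hz0⟩ := Submodule.exists_mem_ne_zero_of_ne_bot h1
      obtain ⟨a, rfl⟩ := Submodule.mem_span_singleton.mp hz1
      have hu : IsUnit a := by
        by_contra hn
        exact hz0 (hy a hn)
      exact (Submodule.smul_mem_iff_of_isUnit _ hu).mp hz2
    have hEle : Module.length A E ≤ Module.length A A :=
      length_le_of_socle A E (LinearMap.range f) (length_range_le A E f) hsocE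
    obtain ⟨h, hh⟩ := hinj.out g hginj f
    have hhinj : Function.Injective h := by
      rw [injective_iff_map_eq_zero]
      intro y hy
      by_contra hy0
      obtain ⟨x, hx, hmx⟩ := exists_socle_elt A (LinearMap.ker (LinearMap.toSpanSingleton A Ω y))
        (fun ht => hy0 (by
          have : (1 : A) ∈ LinearMap.ker (LinearMap.toSpanSingleton A Ω y) := by
            rw [ht]; trivial
          simpa using this))
      have hxy : x • y ∈ LinearMap.range g := hsocΩ _ fun a ha => by
        have := hmx a ha
        rw [LinearMap.mem_ker, LinearMap.toSpanSingleton_apply] at this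
        rw [smul_smul, this]
      obtain ⟨c, hc⟩ := hxy
      have hfc : f c = 0 := by rw [← hh, hc, map_smul, hy, smul_zero]
      have hc0 : c = 0 := hf (by rw [hfc, map_zero])
      apply hx
      rw [LinearMap.mem_ker, LinearMap.toSpanSingleton_apply, ← hc, hc0, map_zero]
    have hfin : Module.length A E ≠ ⊤ :=
      ne_top_of_le_ne_top Module.length_ne_top hEle
    obtain ⟨_, _⟩ := isFiniteLength_iff_isNoetherian_isArtinian.mp
      (Module.length_ne_top_iff.mp hfin)
    have hsurj : LinearMap.range h = ⊤ := by
      by_contra hne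
      have h1 := Submodule.length_lt hne
      have h2 := Module.length_le_of_injective h.rangeRestrict
        (fun p q hpq => hhinj (congrArg Subtype.val hpq))
      exact absurd (h1.trans_le (hEle.trans (hlen'.trans h2))) (lt_irrefl _)
    exact ⟨LinearEquiv.ofBijective h ⟨hhinj, LinearMap.range_eq_top.mp hsurj⟩⟩
  · unfold mlen
    rw [← Module.coe_length, ← Module.coe_length, le_antisymm hΩle hlen']
end

section
/- Let (A, m) be an Artinian local ring with residue field k. Then the injective hull E(k) of k satisfies length_A(E(k)) = length_A(A). -/
open CategoryTheory IsLocalRing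

theorem aux_hom_residue (A : Type) [CommRing A] [IsLocalRing A]
    (E : Type) [AddCommGroup E] [Module A E] (hE : IsInjHullResidue A E) :
    Module.length A (ResidueField A →ₗ[A] E) = 1 := by
  obtain ⟨-, f, hf, hess⟩ := hE
  have key : ∀ (g : ResidueField A →ₗ[A] E) (a : A), g (residue A a) = a • g 1 := by
    intro g a
    rw [← map_smul, Algebra.smul_def, mul_one]
    rfl
  have hsurj : Function.Surjective (LinearMap.toSpanSingleton A (ResidueField A →ₗ[A] E) f) := by
    intro g
    by_cases hx : g 1 = 0
    · refine ⟨0, ?_⟩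
      ext c
      obtain ⟨c, rfl⟩ := residue_surjective c
      simp [key g, hx]
    · have h1 := hess (Submodule.span A {g 1}) (by simpa using hx)
      obtain ⟨y, hy, hy0⟩ := Submodule.exists_mem_ne_zero_of_ne_bot h1
      obtain ⟨hy1, c, hc⟩ := hy
      obtain ⟨a, rfl⟩ := Submodule.mem_span_singleton.1 hy1
      obtain ⟨c, rfl⟩ := residue_surjective c
      have ha : IsUnit a := by
        by_contra hn
        apply hy0
        have : residue A a = 0 := (residue_eq_zero_iff a).2 hn
        rw [← key, this, map_zero]
      obtain ⟨u, rfl⟩ := ha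
      refine ⟨(↑u⁻¹ : A) * c, ?_⟩
      have h2 : g 1 = ((↑u⁻¹ : A) * c) • f 1 := by
        rw [mul_smul, ← key, hc, smul_smul, Units.inv_mul, one_smul]
      ext d
      obtain ⟨d, rfl⟩ := residue_surjective d
      rw [key g, h2, LinearMap.toSpanSingleton_apply, LinearMap.smul_apply, key f, smul_comm]
  have hker : LinearMap.ker (LinearMap.toSpanSingleton A (ResidueField A →ₗ[A] E) f)
      = maximalIdeal A := by
    ext a
    rw [LinearMap.mem_ker, LinearMap.toSpanSingleton_apply, ← residue_eq_zero_iff]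
    constructor
    · intro h
      apply hf
      rw [key, map_zero, ← LinearMap.smul_apply, h, LinearMap.zero_apply]
    · intro h
      ext d
      obtain ⟨d, rfl⟩ := residue_surjective d
      rw [LinearMap.smul_apply, key, smul_comm, ← key, h, map_zero, smul_zero,
        LinearMap.zero_apply]
  rw [← (LinearMap.quotKerEquivOfSurjective _ hsurj).length_eq, hker, Module.length_eq_one_iff,
    isSimpleModule_iff_isCoatom]
  exact (maximalIdeal.isMaximal A).out

theorem aux_hom_length (A : Type) [CommRing A] [IsLocalRing A]
    (E : Type) [AddCommGroup E] [Module A E] (hE : IsInjHullResidue A E)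
    (M : Type) [AddCommGroup M] [Module A M] (hM : IsFiniteLength A M) :
    Module.length A (M →ₗ[A] E) = Module.length A M := by
  induction hM with
  | of_subsingleton =>
    rw [Module.length_eq_zero, Module.length_eq_zero]
  | @of_simple_quotient M _ _ N hs hN ih =>
    have h1 : Module.length A ((M ⧸ N) →ₗ[A] E) = 1 := by
      obtain ⟨I, hI, ⟨e⟩⟩ := isSimpleModule_iff_quot_maximal.1 hs
      obtain rfl := eq_maximalIdeal hI
      have e' : (M ⧸ N) ≃ₗ[A] ResidueField A := e
      rw [(e'.congrLeft E A).length_eq]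
      exact aux_hom_residue A E hE
    have hinj := hE.1
    rw [Module.length_eq_add_of_exact N.subtype N.mkQ N.subtype_injective N.mkQ_surjective
      (LinearMap.exact_subtype_mkQ N),
      Module.length_eq_add_of_exact (LinearMap.lcomp A E N.mkQ) (LinearMap.lcomp A E N.subtype)
        ?_ ?_ ?_, h1, ih, Module.length_eq_one A (M ⧸ N), add_comm]
    · intro g h hgh
      exact (LinearMap.cancel_right N.mkQ_surjective).1 hgh
    · intro g
      obtain ⟨h, hh⟩ := hinj.out N.subtype N.subtype_injective g
      exact ⟨h, LinearMap.ext hh⟩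
    · intro g
      constructor
      · intro h
        have hk : N ≤ LinearMap.ker g := fun x hx => LinearMap.congr_fun h ⟨x, hx⟩
        exact ⟨N.liftQ g hk, N.liftQ_mkQ g hk⟩
      · rintro ⟨g, rfl⟩
        ext x
        have hx : N.mkQ (x : M) = 0 := by simp
        change g (N.mkQ (x : M)) = 0
        rw [hx, map_zero]

/-- For an Artinian local ring `A` with residue field `k`, the injective hull `E(k)`
satisfies `length_A(E(k)) = length_A(A)`. -/
theorem length_injective_hull (A : Type) [CommRing A] [IsArtinianRing A] [IsLocalRing A]
    (E : Type) [AddCommGroup E] [Module A E] (hE : IsInjHullResidue A E) :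
    mlen A E = mlen A A := by
  have h := aux_hom_length A E hE A
    (isFiniteLength_iff_isNoetherian_isArtinian.2 ⟨inferInstance, inferInstance⟩)
  rw [(LinearMap.ringLmapEquivSelf A A E).length_eq] at h
  unfold mlen
  rw [← Module.coe_length, ← Module.coe_length, h]
end

section
/- Let (A, m) be an Artinian local ring with residue field k and Ω a finite A-module such that Hom_A(k, Ω) ≅ k and Ext^1_A(k, Ω) = 0. Then Ω is isomorphic to the injective hull E(k) of k; in particular Ext^i_A(k, Ω) = 0 for all i > 0. -/
open CategoryTheory IsLocalRing

lemma ext_subsingleton_iff {A : Type} [CommRing A] {X : ModuleCat.{0} A}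
    (P : ProjectiveResolution X) (Y : ModuleCat.{0} A) (n : ℕ) :
    Subsingleton (((Ext A (ModuleCat A) (n+1)).obj (Opposite.op X)).obj Y) ↔
      ∀ f : P.complex.X (n+1) ⟶ Y, P.complex.d (n+2) (n+1) ≫ f = 0 →
        ∃ g : P.complex.X n ⟶ Y, P.complex.d (n+1) n ≫ g = f := by
  rw [← ModuleCat.isZero_iff_subsingleton, (P.isoExt (n+1) Y).isZero_iff,
    ← HomologicalComplex.exactAt_iff_isZero_homology,
    HomologicalComplex.exactAt_iff' _ n (n+1) (n+2) (by simp) (by simp),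
    ShortComplex.moduleCat_exact_iff]
  rfl

lemma exists_socle {A : Type} [CommRing A] (m : Ideal A) {M : Type} [AddCommGroup M] [Module A M]
    (J : Submodule A M) (n : ℕ) : ∀ y : M, y ∉ J → (∀ a ∈ m ^ n, a • y ∈ J) →
      ∃ r : A, r • y ∉ J ∧ ∀ a ∈ m, a • r • y ∈ J := by
  induction n with
  | zero => 
    intro y hy h
    exact absurd (by simpa using h 1 (by simp)) hy
  | succ n ih =>
    intro y hy h
    by_cases hm : ∀ a ∈ m, a • y ∈ J
    · exact ⟨1, by simpa using hy, by simpa using hm⟩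
    · push Not at hm
      obtain ⟨a, ha, hay⟩ := hm
      obtain ⟨r, hr, hr'⟩ := ih (a • y) hay (fun b hb => by
        rw [smul_smul]
        exact h _ (by rw [pow_succ]; exact Ideal.mul_mem_mul hb ha))
      exact ⟨r * a, by rwa [mul_smul], fun b hb => by rw [mul_smul]; exact hr' b hb⟩

lemma exists_socle' {A : Type} [CommRing A] [IsArtinianRing A] [IsLocalRing A]
    {M : Type} [AddCommGroup M] [Module A M]
    (J : Submodule A M) (y : M) (hy : y ∉ J) :
      ∃ r : A, r • y ∉ J ∧ ∀ a ∈ maximalIdeal A, a • r • y ∈ J := by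
  obtain ⟨n, hn⟩ : IsNilpotent (maximalIdeal A) := by
    rw [← IsLocalRing.jacobson_eq_maximalIdeal (⊥ : Ideal A) bot_ne_top]
    exact IsArtinianRing.isNilpotent_jacobson_bot
  refine exists_socle _ J n y hy (fun a ha => ?_)
  rw [hn] at ha
  have : a = 0 := ha
  simp [this]

/-- every map from the maximal ideal extends -/
lemma extend_max {A : Type} [CommRing A] [IsLocalRing A]
    {Ω : Type} [AddCommGroup Ω] [Module A Ω]
    (hext1 : Subsingleton (extM A (ResidueField A) Ω 1)) (g : maximalIdeal A →ₗ[A] Ω) :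
    ∃ w : Ω, ∀ x : maximalIdeal A, g x = (x : A) • w := by
  let X := ModuleCat.of A (ResidueField A)
  let P := ProjectiveResolution.of X
  have H := (ext_subsingleton_iff P (ModuleCat.of A Ω) 0).1 hext1
  let ε : P.complex.X 0 ⟶ X := P.π.f 0
  have hε : Epi ε := inferInstanceAs (Epi (P.π.f 0))
  let π : ModuleCat.of A A ⟶ X := ModuleCat.ofHom (Algebra.linearMap A (ResidueField A))
  have hπ : Epi π := (ModuleCat.epi_iff_surjective _).2 IsLocalRing.residue_surjective
  let φ : P.complex.X 0 ⟶ ModuleCat.of A A := Projective.factorThru ε π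
  have hφ : φ ≫ π = ε := Projective.factorThru_comp _ _
  have hdε : P.complex.d 1 0 ≫ ε = 0 := P.complex_d_comp_π_f_zero
  have hex : ∀ y : P.complex.X 0, ε y = 0 → ∃ q, P.complex.d 1 0 q = y := by
    have := P.exact₀
    rw [ShortComplex.moduleCat_exact_iff] at this
    intro y hy
    exact this y hy
  have hφm : ∀ y, ε y = 0 → φ y ∈ maximalIdeal A := by
    intro y hy
    rw [← hφ] at hy
    exact (IsLocalRing.residue_eq_zero_iff _).1 hy
  have hd : ∀ q, φ (P.complex.d 1 0 q) ∈ maximalIdeal A := fun q =>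
    hφm _ (by simpa using congrArg (fun f => f.hom q) hdε)
  let c : P.complex.X 1 →ₗ[A] Ω :=
    g ∘ₗ LinearMap.codRestrict _ (φ.hom ∘ₗ (P.complex.d 1 0).hom) hd
  obtain ⟨ψ, hψ⟩ := H (ModuleCat.ofHom c) (by
    ext z
    have : P.complex.d 1 0 (P.complex.d 2 1 z) = 0 := congrArg (fun f => f.hom z) (P.complex.d_comp_d 2 1 0)
    change g ⟨φ (P.complex.d 1 0 (P.complex.d 2 1 z)), _⟩ = 0
    convert map_zero g
    rw [this, map_zero]
    rfl)
  obtain ⟨p, hp⟩ := (ModuleCat.epi_iff_surjective ε).1 hε (1 : ResidueField A)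
  have hu : IsUnit (φ p : A) := by
    rw [← IsLocalRing.residue_ne_zero_iff_isUnit]
    have : π (φ p) = (1 : ResidueField A) := by rw [← hp, ← hφ]; rfl
    intro h0
    exact one_ne_zero (this.symm.trans h0)
  obtain ⟨u, hu⟩ := hu
  refine ⟨(↑u⁻¹ : A) • ψ p, fun x => ?_⟩
  obtain ⟨q, hq⟩ := hex ((x : A) • p) (by
    rw [map_smul, hp]
    change (x : A) • (1 : ResidueField A) = 0
    rw [Algebra.smul_def, mul_one]
    exact (IsLocalRing.residue_eq_zero_iff _).2 x.2)
  have h1 : ψ (P.complex.d 1 0 q) = c q := by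
    simpa using congrArg (fun f => f.hom q) hψ
  have h2 : c q = (u : A) • g x := by
    rw [← map_smul]
    change g _ = g _
    congr 1
    ext
    change φ (P.complex.d 1 0 q) = (u : A) * x
    rw [hq, map_smul, hu]
    exact mul_comm _ _
  rw [hq, map_smul, h2] at h1
  rw [smul_comm, h1, smul_smul]
  simp

lemma baer_of_max {A : Type} [CommRing A] [IsArtinianRing A] [IsLocalRing A]
    {Ω : Type} [AddCommGroup Ω] [Module A Ω]
    (h : ∀ g : maximalIdeal A →ₗ[A] Ω, ∃ w : Ω, ∀ x : maximalIdeal A, g x = (x : A) • w) :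
    Module.Baer A Ω := by
  have key : ∀ (J : Ideal A) (f : A →ₗ.[A] Ω), f.domain = J →
      ∃ w : Ω, ∀ x : f.domain, f x = (x : A) • w := by
    intro J
    induction J using WellFoundedGT.induction with
    | ind J ih =>
      intro f hf
      by_cases hJ : J = ⊤
      · have h1 : (1 : A) ∈ f.domain := by rw [hf, hJ]; trivial
        refine ⟨f ⟨1, h1⟩, fun x => ?_⟩
        rw [← f.map_smul]
        congr 1
        ext; simp
      · have h1 : (1 : A) ∉ f.domain := by rw [hf]; exact (Ideal.ne_top_iff_one _).1 hJ
        obtain ⟨r, hr, hr'⟩ := exists_socle' f.domain (1 : A) h1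
        simp only [smul_eq_mul, mul_one] at hr hr'
        let μ : maximalIdeal A →ₗ[A] f.domain :=
          LinearMap.codRestrict _ ((LinearMap.mulRight A r) ∘ₗ (maximalIdeal A).subtype)
            (fun x => hr' x x.2)
        obtain ⟨w, hw⟩ := h (f.toFun ∘ₗ μ)
        have hmem : ∀ a : A, a * r ∈ f.domain → a ∈ maximalIdeal A := by
          intro a ha
          by_contra hna
          have hau : IsUnit a := by simpa using hna
          obtain ⟨v, rfl⟩ := hau
          exact hr (by simpa using f.domain.smul_mem (↑v⁻¹ : A) ha)
        have hval : ∀ (a : A) (ha : a * r ∈ f.domain), f ⟨a * r, ha⟩ = a • w := by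
          intro a ha
          exact hw ⟨a, hmem a ha⟩
        let s : A →ₗ.[A] Ω := LinearPMap.mkSpanSingleton' r w (by
          intro c hc
          rw [smul_eq_mul] at hc
          have h0 : c * r ∈ f.domain := by rw [hc]; exact zero_mem _
          rw [RingHom.id_apply, ← hval c h0, ← f.map_zero]
          congr 1
          ext; exact hc)
        have hs : ∀ (x : f.domain) (y : s.domain), (x : A) = y → f x = s y := by
          rintro ⟨x, hx⟩ ⟨y, hy⟩ hxy
          obtain ⟨a, rfl⟩ := Submodule.mem_span_singleton.1 hy
          change x = a • r at hxy
          subst hxy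
          rw [LinearPMap.mkSpanSingleton'_apply]
          exact hval a hx
        obtain ⟨w', hw'⟩ := ih (f.domain ⊔ s.domain) (by
          rw [← hf]
          refine lt_of_le_of_ne le_sup_left (fun he => hr ?_)
          rw [he]
          exact Submodule.mem_sup_right (Submodule.mem_span_singleton_self r)) (f.sup s hs) rfl
        refine ⟨w', fun x => ?_⟩
        have hle := LinearPMap.left_le_sup f s hs
        rw [hle.2 (x := x) (y := ⟨x, hle.1 x.2⟩) rfl, hw']
  intro I g
  obtain ⟨w, hw⟩ := key I ⟨I, g⟩ rfl
  exact ⟨LinearMap.toSpanSingleton A Ω w, fun x hx => (hw ⟨x, hx⟩).symm⟩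

lemma isInjHull_of_soc {A : Type} [CommRing A] [IsArtinianRing A] [IsLocalRing A]
    {Ω : Type} [AddCommGroup Ω] [Module A Ω] (hinj : Module.Injective A Ω)
    (hsoc : Nonempty ((ResidueField A →ₗ[A] Ω) ≃ₗ[A] ResidueField A)) :
    IsInjHullResidue A Ω := by
  obtain ⟨e⟩ := hsoc
  refine ⟨hinj, e.symm 1, ?_, ?_⟩
  · have hne : e.symm 1 ≠ 0 := by simp
    rw [← LinearMap.ker_eq_bot, LinearMap.ker_eq_bot']
    intro t ht
    by_contra h0
    apply hne
    obtain ⟨a, ha⟩ := IsLocalRing.residue_surjective t⁻¹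
    have : (1 : ResidueField A) = a • t := by
      rw [Algebra.smul_def]
      change _ = residue A a * t
      rw [ha, inv_mul_cancel₀ h0]
    refine LinearMap.ext fun z => ?_
    obtain ⟨b, rfl⟩ := IsLocalRing.residue_surjective z
    have hb : residue A b = b • (1 : ResidueField A) := by
      rw [Algebra.smul_def, mul_one]; rfl
    have h1 : e.symm 1 (1 : ResidueField A) = 0 := by
      calc e.symm 1 (1 : ResidueField A) = e.symm 1 (a • t) := by rw [← this]
        _ = 0 := by rw [map_smul, ht, smul_zero]
    rw [hb, map_smul, h1, smul_zero]; rfl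
  · intro N hN
    obtain ⟨y, hyN, hy0⟩ := N.exists_mem_ne_zero_of_ne_bot hN
    obtain ⟨r, hr, hr'⟩ := exists_socle' (⊥ : Submodule A Ω) y (by simpa using hy0)
    let h : ResidueField A →ₗ[A] Ω :=
      Submodule.liftQ (maximalIdeal A) (LinearMap.toSpanSingleton A Ω (r • y)) (by
        intro a ha
        simpa using hr' a ha)
    have h1 : h 1 = r • y := by
      change (LinearMap.toSpanSingleton A Ω (r • y)) 1 = _
      simp
    obtain ⟨a, ha⟩ := IsLocalRing.residue_surjective (e h)
    have hh : h = a • e.symm 1 := by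
      rw [← map_smul, LinearEquiv.eq_symm_apply, ← ha, Algebra.smul_def, mul_one]
      rfl
    intro hbot
    apply hr
    rw [← hbot]
    refine ⟨N.smul_mem _ hyN, a • 1, ?_⟩
    rw [← h1, hh, map_smul]; rfl

lemma hull_unique {A : Type} [CommRing A] [IsLocalRing A]
    {Ω E : Type} [AddCommGroup Ω] [Module A Ω] [AddCommGroup E] [Module A E]
    (h1 : IsInjHullResidue A Ω) (h2 : IsInjHullResidue A E) : Nonempty (Ω ≃ₗ[A] E) := by
  obtain ⟨i1, f, hf, ess1⟩ := h1
  obtain ⟨i2, g, hg, ess2⟩ := h2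
  obtain ⟨F, hF⟩ := i2.out f hf g
  have hFi : Function.Injective F := by
    rw [← LinearMap.ker_eq_bot]
    by_contra hne
    refine ess1 _ hne ((Submodule.eq_bot_iff _).2 ?_)
    rintro _ ⟨hx, t, rfl⟩
    have : g t = 0 := by rw [← hF]; exact hx
    rw [(map_eq_zero_iff g hg).1 this, map_zero]
  obtain ⟨G, hG⟩ := i1.out F hFi LinearMap.id
  have hGi : Function.Injective G := by
    rw [← LinearMap.ker_eq_bot]
    by_contra hne
    refine ess2 _ hne ((Submodule.eq_bot_iff _).2 ?_)
    rintro _ ⟨hx, t, rfl⟩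
    have : f t = 0 := by
      have := hG (f t)
      rw [hF] at this
      exact this.symm.trans hx
    rw [(map_eq_zero_iff f hf).1 this, map_zero]
  exact ⟨(LinearEquiv.ofBijective G ⟨hGi, fun x => ⟨F x, hG x⟩⟩).symm⟩

/-- If `A` is Artinian local with residue field `k` and `Ω` is a finite module with
`Hom_A(k, Ω) ≅ k` and `Ext^1_A(k, Ω) = 0`, then `Ω` is the injective hull of `k`;
in particular `Ext^i_A(k, Ω) = 0` for all `i > 0`. -/
theorem omega_injective_hull_of_ext_one (A : Type) [CommRing A] [IsArtinianRing A]
    [IsLocalRing A]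
    (Ω : Type) [AddCommGroup Ω] [Module A Ω] [Module.Finite A Ω]
    (hsoc : Nonempty ((ResidueField A →ₗ[A] Ω) ≃ₗ[A] ResidueField A))
    (hext1 : Subsingleton (extM A (ResidueField A) Ω 1)) :
    (∀ (E : Type) [AddCommGroup E] [Module A E],
        IsInjHullResidue A E → Nonempty (Ω ≃ₗ[A] E)) ∧
      ∀ i : ℕ, 0 < i → Subsingleton (extM A (ResidueField A) Ω i) := by
  have hinj : Module.Injective A Ω := (baer_of_max (extend_max hext1)).injective
  refine ⟨fun E _ _ hE => hull_unique (isInjHull_of_soc hinj hsoc) hE, fun i hi => ?_⟩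
  obtain ⟨n, rfl⟩ := Nat.exists_eq_succ_of_ne_zero hi.ne'
  have hI : Injective (ModuleCat.of A Ω) := Module.injective_object_of_injective_module A Ω
  let P := ProjectiveResolution.of (ModuleCat.of A (ResidueField A))
  refine (ext_subsingleton_iff P (ModuleCat.of A Ω) n).2 (fun f hf => ?_)
  exact ⟨(P.exact_succ n).descToInjective f hf, (P.exact_succ n).comp_descToInjective f hf⟩
end

section
/- Let R be a Noetherian ring and F a finite R-module satisfying S₂. Any short exact sequence 0 → F → F′ → Q → 0 of finite R-modules with Supp(Q) ⊆ Supp(F) of codimension ≥ 2 in Supp(F) splits. -/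
open CategoryTheory IsLocalRing

/-- The depth of a module over a local ring, as the least `i` with `Ext^i(k, M) ≠ 0`. -/
noncomputable def edepth (R : Type) [CommRing R] [IsLocalRing R]
    (M : Type) [AddCommGroup M] [Module R M] : ℕ∞ :=
  sInf {n : ℕ∞ | ∃ i : ℕ, (i : ℕ∞) = n ∧ Nontrivial (extM R (ResidueField R) M i)}

/-- Serre's condition `S₂` for a module: for every prime `P`,
`depth_{R_P}(M_P) ≥ min(2, dim Supp(M_P))`. -/
def IsS2 (R : Type) [CommRing R] (M : Type) [AddCommGroup M] [Module R M] : Prop :=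
  ∀ P : PrimeSpectrum R,
    min 2 (ringKrullDim ((Localization.AtPrime P.asIdeal) ⧸
        Module.annihilator (Localization.AtPrime P.asIdeal)
          (LocalizedModule P.asIdeal.primeCompl M))) ≤
      ((edepth (Localization.AtPrime P.asIdeal)
        (LocalizedModule P.asIdeal.primeCompl M) : ℕ∞) : WithBot ℕ∞)

lemma extend_aux (A : Type) [CommRing A] [IsLocalRing A] (M P2 P1 P0 : Type) [AddCommGroup M] [Module A M]
    [AddCommGroup P2] [Module A P2] [AddCommGroup P1] [Module A P1] [AddCommGroup P0] [Module A P0] [Module.Projective A P0]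
    (d2 : P2 →ₗ[A] P1) (d1 : P1 →ₗ[A] P0) (ε : P0 →ₗ[A] ResidueField A) (hε : Function.Surjective ε)
    (h21 : d1 ∘ₗ d2 = 0)
    (h10 : Function.Exact d1 ε)
    (h : ∀ c : P1 →ₗ[A] M, c ∘ₗ d2 = 0 → ∃ b : P0 →ₗ[A] M, b ∘ₗ d1 = c)
    (φ : maximalIdeal A →ₗ[A] M) : ∃ u : M, ∀ a : maximalIdeal A, φ a = (a : A) • u := by
  obtain ⟨ψ, hψ⟩ := Module.projective_lifting_property (Algebra.linearMap A (ResidueField A)) ε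
    (IsLocalRing.residue_surjective)
  have hψ' : ∀ x, residue A (ψ x) = ε x := fun x => LinearMap.congr_fun hψ x
  have hm : ∀ x, (ψ ∘ₗ d1) x ∈ maximalIdeal A := fun x => by
    rw [← IsLocalRing.residue_eq_zero_iff, LinearMap.comp_apply, hψ']
    exact (h10 _).2 ⟨x, rfl⟩
  obtain ⟨b, hb⟩ := h (φ ∘ₗ (ψ ∘ₗ d1).codRestrict (maximalIdeal A) hm) (by
    ext x
    have : d1 (d2 x) = 0 := LinearMap.congr_fun h21 x
    have h0 : (ψ ∘ₗ d1).codRestrict (maximalIdeal A) hm (d2 x) = 0 := by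
      ext; simp [this]
    simp [h0])
  obtain ⟨e, he⟩ := hε 1
  have hu : IsUnit (ψ e) := by
    rw [← IsLocalRing.residue_ne_zero_iff_isUnit, hψ', he]; exact one_ne_zero
  obtain ⟨w, hw⟩ := hu
  have key : ∀ a : maximalIdeal A, (a : A) • b e = (w : A) • φ a := by
    intro a
    obtain ⟨q, hq⟩ := (h10 ((a : A) • e)).1 (by
      rw [map_smul, he, Algebra.smul_def, mul_one]
      exact (IsLocalRing.residue_eq_zero_iff _).2 a.2)
    rw [← map_smul, ← hq, ← LinearMap.comp_apply, hb, LinearMap.comp_apply, ← map_smul]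
    congr 1
    ext
    simp [hq, ← hw, mul_comm]
  refine ⟨(↑w⁻¹ : A) • b e, fun a => ?_⟩
  rw [smul_comm, key, smul_smul]; simp

lemma ext_extend (A : Type) [CommRing A] [IsLocalRing A] (M : Type) [AddCommGroup M] [Module A M]
    (h : ¬ Nontrivial (extM A (ResidueField A) M 1))
    (φ : maximalIdeal A →ₗ[A] M) : ∃ u : M, ∀ a : maximalIdeal A, φ a = (a : A) • u := by
  rw [not_nontrivial_iff_subsingleton] at h
  let P := projectiveResolution (ModuleCat.of A (ResidueField A))
  have hz : Limits.IsZero (extM A (ResidueField A) M 1) := ModuleCat.isZero_of_subsingleton _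
  have hz2 := hz.of_iso (P.isoExt (R := A) 1 (ModuleCat.of A M)).symm
  rw [← HomologicalComplex.exactAt_iff_isZero_homology,
    HomologicalComplex.exactAt_iff' _ 0 1 2 (by simp) (by simp),
    ShortComplex.moduleCat_exact_iff] at hz2
  have : Module.Projective A (P.complex.X 0) := (IsProjective.iff_projective _).2 (P.projective 0)
  have h0 := P.exact₀
  rw [ShortComplex.moduleCat_exact_iff_range_eq_ker] at h0
  have hepi : Epi (P.π.f 0) := inferInstance
  let ε : P.complex.X 0 ⟶ ModuleCat.of A (ResidueField A) := P.π.f 0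
  refine extend_aux A M (P2 := P.complex.X 2) (P1 := P.complex.X 1) (P0 := P.complex.X 0) (P.complex.d 2 1).hom
    (P.complex.d 1 0).hom ε.hom ((ModuleCat.epi_iff_surjective _).1 hepi) ?_ ?_ ?_ φ
  · rw [← ModuleCat.hom_comp, P.complex.d_comp_d]; rfl
  · exact LinearMap.exact_iff.2 h0.symm
  · intro c hc
    obtain ⟨b, hb⟩ := hz2 (ModuleCat.ofHom c : P.complex.X 1 ⟶ ModuleCat.of A M) (by
      apply ModuleCat.hom_ext
      exact hc)
    exact ⟨ModuleCat.Hom.hom b, congrArg ModuleCat.Hom.hom hb⟩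

lemma local_step (R : Type) [CommRing R] [IsNoetherianRing R] (F : Type) [AddCommGroup F] [Module R F]
    (P : Ideal R) [P.IsPrime]
    (h : ¬ Nontrivial (extM (Localization.AtPrime P) (ResidueField (Localization.AtPrime P))
      (LocalizedModule P.primeCompl F) 1))
    (φ : P →ₗ[R] F) : ∃ s ∈ P.primeCompl, ∃ a : F, ∀ p : P, s • φ p = (p : R) • a := by
  let ψ := IsLocalizedModule.mapExtendScalars P.primeCompl
    (Algebra.idealMap (Localization.AtPrime P) P) (LocalizedModule.mkLinearMap P.primeCompl F)
    (Localization.AtPrime P) φ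
  have hψ : ∀ p : P, ψ (Algebra.idealMap (Localization.AtPrime P) P p) = LocalizedModule.mk (φ p) 1 := by
    intro p
    exact IsLocalizedModule.map_apply _ _ _ _ _
  have hm : maximalIdeal (Localization.AtPrime P) = P.map (algebraMap R (Localization.AtPrime P)) :=
    (Localization.AtPrime.map_eq_maximalIdeal).symm
  obtain ⟨u, hu⟩ := ext_extend _ _ h (ψ ∘ₗ (LinearEquiv.ofEq _ _ hm).toLinearMap)
  have hu' : ∀ p : P, LocalizedModule.mk (φ p) 1 = (p : R) • u := by
    intro p
    have := hu ⟨algebraMap R _ p, hm ▸ Ideal.mem_map_of_mem _ p.2⟩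
    rw [← hψ p, ← algebraMap_smul (Localization.AtPrime P) (p : R) u]
    exact this
  induction u using LocalizedModule.induction_on with
  | h a s =>
  have h1 : ∀ p : P, ∃ t : P.primeCompl, t • (s : R) • φ p = t • (p : R) • a := by
    intro p
    have := hu' p
    rw [LocalizedModule.smul'_mk, LocalizedModule.mk_eq] at this
    obtain ⟨t, ht⟩ := this
    exact ⟨t, by simpa [Submonoid.smul_def] using ht⟩
  obtain ⟨n, v, hv⟩ := Module.Finite.exists_fin (R := R) (M := P)
  choose t ht using fun i => h1 (v i)
  refine ⟨(∏ i, (t i : R)) * s, mul_mem (prod_mem fun i _ => (t i).2) s.2, (∏ i, (t i : R)) • a, ?_⟩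
  intro p
  have hp : p ∈ Submodule.span R (Set.range v) := hv ▸ Submodule.mem_top
  induction hp using Submodule.span_induction with
  | mem x hx =>
    obtain ⟨i, rfl⟩ := hx
    have hi := ht i
    rw [Submonoid.smul_def, Submonoid.smul_def] at hi
    rw [← Finset.prod_erase_mul _ _ (Finset.mem_univ i), mul_assoc, mul_smul, mul_smul, hi,
      mul_smul]
    simp only [smul_smul]
    congr 1
    ring
  | zero => simp
  | add x y _ _ hx hy => simp [hx, hy, add_smul]
  | smul r x _ hx => 
    rw [map_smul, smul_comm, hx, smul_smul]; rfl

lemma main_aux (R : Type) [CommRing R] [IsNoetherianRing R]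
    (F F' Q : Type) [AddCommGroup F] [Module R F] [AddCommGroup F'] [Module R F']
    [AddCommGroup Q] [Module R Q] [Module.Finite R F']
    (f : F →ₗ[R] F') (g : F' →ₗ[R] Q)
    (hf : Function.Injective f)
    (hfg : LinearMap.range f = LinearMap.ker g)
    (H : ∀ P : PrimeSpectrum R, Nontrivial (LocalizedModule P.asIdeal.primeCompl Q) →
      ∀ φ : P.asIdeal →ₗ[R] F, ∃ s ∈ P.asIdeal.primeCompl, ∃ a : F, ∀ p : P.asIdeal,
        s • φ p = (p : R) • a) :
    ∃ s : F' →ₗ[R] F, s.comp f = LinearMap.id := by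
  have hwf : WellFoundedGT (Submodule R F') := inferInstance
  obtain ⟨T, hT, hmax⟩ := hwf.wf.has_min {T : Submodule R F' | Disjoint (LinearMap.range f) T}
    ⟨⊥, disjoint_bot_right⟩
  have hT' : Disjoint (LinearMap.range f) T := hT
  -- projection on the `F`-component
  have hinj : Function.Injective (T.mkQ ∘ₗ f) := by
    rw [← LinearMap.ker_eq_bot, LinearMap.ker_eq_bot']
    intro x hx
    have hx' : f x ∈ T := by simpa using hx
    have := Submodule.disjoint_def.1 hT' (f x) ⟨x, rfl⟩ hx'
    exact hf (by simpa using this)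
  let e := LinearEquiv.ofInjective (T.mkQ ∘ₗ f) hinj
  have htop : LinearMap.range f ⊔ T = ⊤ := by
    by_contra hne
    have : Nontrivial (F' ⧸ (LinearMap.range f ⊔ T)) := Submodule.Quotient.nontrivial_iff.2 hne
    obtain ⟨P, hP⟩ := associatedPrimes.nonempty R (F' ⧸ (LinearMap.range f ⊔ T))
    obtain ⟨hPp, x', hx'⟩ := isAssociatedPrime_iff.1 hP
    obtain ⟨x, rfl⟩ := Submodule.mkQ_surjective _ x'
    have hx : ∀ r : R, r ∈ P ↔ r • x ∈ LinearMap.range f ⊔ T := by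
      intro r
      rw [hx', Submodule.mem_colon_singleton, ← map_smul, Submodule.mem_bot,
        Submodule.mkQ_apply, Submodule.Quotient.mk_eq_zero]
    have hdec : ∀ p : P, T.mkQ ((p : R) • x) ∈ LinearMap.range (T.mkQ ∘ₗ f) := by
      intro p
      obtain ⟨_, ⟨y, rfl⟩, t, ht, hyt⟩ := Submodule.mem_sup.1 ((hx p).1 p.2)
      refine ⟨y, ?_⟩
      rw [← hyt, map_add]
      simp [ht]
    let φ : P →ₗ[R] F := e.symm.toLinearMap ∘ₗ
      ((T.mkQ ∘ₗ LinearMap.toSpanSingleton R F' x ∘ₗ P.subtype).codRestrict _ hdec)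
    have hφ : ∀ p : P, (p : R) • x - f (φ p) ∈ T := by
      intro p
      have : e (φ p) = (⟨T.mkQ ((p : R) • x), hdec p⟩ : LinearMap.range (T.mkQ ∘ₗ f)) :=
        e.apply_symm_apply _
      have h2 : T.mkQ (f (φ p)) = T.mkQ ((p : R) • x) := congrArg Subtype.val this
      rw [← Submodule.Quotient.mk_eq_zero, Submodule.Quotient.mk_sub, sub_eq_zero]
      exact h2.symm
    obtain ⟨s, hs, a, ha⟩ := H ⟨P, hPp⟩ (by
      refine ⟨LocalizedModule.mk (g x) 1, 0, ?_⟩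
      rw [Ne, ← LocalizedModule.zero_mk 1, LocalizedModule.mk_eq]
      rintro ⟨u, hu⟩
      apply u.2
      change (u : R) ∈ P
      rw [hx]
      apply Submodule.mem_sup_left
      rw [hfg, LinearMap.mem_ker, map_smul]
      simpa [Submonoid.smul_def] using hu) φ
    let y := s • x - f a
    have hy : ∀ p ∈ P, p • y ∈ T := by
      intro p hp
      have h1 := T.smul_mem s (hφ ⟨p, hp⟩)
      rw [smul_sub, ← map_smul, ha ⟨p, hp⟩] at h1
      have h2 : p • y = s • p • x - f (p • a) := by
        rw [smul_sub, map_smul, smul_comm p s x]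
      rw [h2]
      exact h1
    have hy2 : ∀ r : R, r • y ∈ LinearMap.range f ⊔ T → r ∈ P := by
      intro r hr
      have : (r * s) • x ∈ LinearMap.range f ⊔ T := by
        have h3 : r • f a ∈ LinearMap.range f ⊔ T :=
          Submodule.mem_sup_left ⟨r • a, by simp⟩
        have := add_mem hr h3
        simpa [y, smul_sub, mul_smul] using this
      exact (hPp.mem_or_mem ((hx _).2 this)).resolve_right hs
    refine hmax (T ⊔ Submodule.span R {y}) ?_ ?_
    · change Disjoint _ _
      rw [Submodule.disjoint_def]
      intro z hz hz'
      obtain ⟨t, ht, w, hw, rfl⟩ := Submodule.mem_sup.1 hz'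
      obtain ⟨r, rfl⟩ := Submodule.mem_span_singleton.1 hw
      have hr : r ∈ P := by
        apply hy2
        have := sub_mem (Submodule.mem_sup_left (T := T) hz) (Submodule.mem_sup_right ht)
        simpa using this
      exact Submodule.disjoint_def.1 hT' _ hz (add_mem ht (hy r hr))
    · change T < _
      refine lt_of_le_of_ne le_sup_left fun heq => ?_
      have hyT : y ∈ T := by
        rw [heq]
        exact Submodule.mem_sup_right (Submodule.mem_span_singleton_self y)
      exact hPp.ne_top ((Ideal.eq_top_iff_one _).2
        (hy2 1 (by rw [one_smul]; exact Submodule.mem_sup_right hyT)))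
  have hall : ∀ x : F', T.mkQ x ∈ LinearMap.range (T.mkQ ∘ₗ f) := by
    intro x
    obtain ⟨_, ⟨y, rfl⟩, t, ht, hyt⟩ := Submodule.mem_sup.1
      (show x ∈ LinearMap.range f ⊔ T from htop ▸ Submodule.mem_top)
    refine ⟨y, ?_⟩
    rw [← hyt, map_add]
    simp [ht]
  refine ⟨e.symm.toLinearMap ∘ₗ T.mkQ.codRestrict _ hall, ?_⟩
  ext x
  exact e.symm_apply_apply x

/-- If `F` is a finite `S₂` module, then any short exact sequence `0 → F → F′ → Q → 0`
with `Supp Q ⊆ Supp F` of codimension `≥ 2` in `Supp F` splits. -/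
theorem s2_splitting (R : Type) [CommRing R] [IsNoetherianRing R]
    (F F' Q : Type) [AddCommGroup F] [Module R F] [AddCommGroup F'] [Module R F']
    [AddCommGroup Q] [Module R Q]
    [Module.Finite R F] [Module.Finite R F'] [Module.Finite R Q]
    (hF : IsS2 R F)
    (f : F →ₗ[R] F') (g : F' →ₗ[R] Q)
    (hf : Function.Injective f) (hg : Function.Surjective g)
    (hfg : LinearMap.range f = LinearMap.ker g)
    (hsupp : ∀ P : PrimeSpectrum R, Nontrivial (LocalizedModule P.asIdeal.primeCompl Q) →
      Nontrivial (LocalizedModule P.asIdeal.primeCompl F))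
    (hcodim : ∀ P : PrimeSpectrum R, Nontrivial (LocalizedModule P.asIdeal.primeCompl Q) →
      2 ≤ ringKrullDim ((Localization.AtPrime P.asIdeal) ⧸
        Module.annihilator (Localization.AtPrime P.asIdeal)
          (LocalizedModule P.asIdeal.primeCompl F))) :
    ∃ s : F' →ₗ[R] F, s.comp f = LinearMap.id := by
  refine main_aux R F F' Q f g hf hfg fun P hP φ => local_step R F P.asIdeal ?_ φ
  intro hnt
  have h2 : (2 : WithBot ℕ∞) ≤ ((edepth (Localization.AtPrime P.asIdeal)
        (LocalizedModule P.asIdeal.primeCompl F) : ℕ∞) : WithBot ℕ∞) :=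
    le_trans (le_min le_rfl (hcodim P hP)) (hF P)
  have h3 : edepth (Localization.AtPrime P.asIdeal)
        (LocalizedModule P.asIdeal.primeCompl F) ≤ ((1 : ℕ) : ℕ∞) := sInf_le ⟨1, rfl, hnt⟩
  have h4 : (2 : ℕ∞) ≤ edepth (Localization.AtPrime P.asIdeal)
        (LocalizedModule P.asIdeal.primeCompl F) := WithBot.coe_le_coe.1 h2
  have h5 : ((2 : ℕ) : ℕ∞) ≤ ((1 : ℕ) : ℕ∞) := h4.trans h3
  have h6 : 2 ≤ 1 := by exact_mod_cast h5
  omega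
end

section
/- Let (R, m) be a 1-dimensional Noetherian S₁ local ring with dualizing module Ω. Then for every finite R-module M, Ext^i_R(M, Ω) = 0 for all i ≥ 2, and if M is torsion free then Ext^1_R(M, Ω) = 0 as well. -/
open CategoryTheory IsLocalRing

/-- `Ω` is a dualizing module over the 1-dimensional local ring `R`:
`Ext^i_R(k, Ω) = δ_{i,1} · k`. -/
def IsDualizing1 (R : Type) [CommRing R] [IsLocalRing R]
    (Ω : Type) [AddCommGroup Ω] [Module R Ω] : Prop :=
  (∀ i : ℕ, i ≠ 1 → Subsingleton (extM R (ResidueField R) Ω i)) ∧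
    Nonempty ((extM R (ResidueField R) Ω 1) ≃ₗ[R] ResidueField R)

theorem bridge (R : Type) [CommRing R] (X Y : ModuleCat.{0} R) (n : ℕ) :
    Subsingleton (((Ext R (ModuleCat R) (n+1)).obj (Opposite.op X)).obj Y) ↔
    Subsingleton (Abelian.Ext X Y (n+1)) := by
  let P := projectiveResolution X
  have h1 : Subsingleton (((Ext R (ModuleCat R) (n+1)).obj (Opposite.op X)).obj Y) ↔
      ∀ f : P.complex.X (n+1) ⟶ Y, P.complex.d (n+2) (n+1) ≫ f = 0 →
        ∃ g : P.complex.X n ⟶ Y, P.complex.d (n+1) n ≫ g = f := by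
    rw [← ModuleCat.isZero_iff_subsingleton, (P.isoExt (n+1) Y).isZero_iff,
      ← HomologicalComplex.exactAt_iff_isZero_homology,
      HomologicalComplex.exactAt_iff' _ n (n+1) (n+2) (by simp) (by simp),
      ShortComplex.moduleCat_exact_iff]
    rfl
  rw [h1]
  constructor
  · intro h
    refine subsingleton_of_forall_eq 0 fun x => ?_
    obtain ⟨f, hf, rfl⟩ := P.extMk_surjective x (n+2) rfl
    rw [P.extMk_eq_zero_iff f (n+2) rfl hf n rfl]
    exact h f hf
  · intro h f hf
    rw [← P.extMk_eq_zero_iff f (n+2) rfl hf n rfl]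
    exact Subsingleton.elim _ _

theorem ext_nak (R : Type) [CommRing R] [IsNoetherianRing R] [IsLocalRing R]
    (M L : ModuleCat.{0} R) [Module.Finite R M] [Module.Finite R L] (x : R)
    (mem : x ∈ maximalIdeal R) (reg : IsSMulRegular M x) (n : ℕ)
    (zero : Subsingleton (Abelian.Ext (ModuleCat.of R (QuotSMulTop x M)) L (n + 1))) :
    Subsingleton (Abelian.Ext M L n) := by
  let S := M.smulShortComplex x
  have hS : S.ShortExact := reg.smulShortComplex_shortExact
  by_contra! ntr
  have : x ∈ (Module.annihilator R (Abelian.Ext M L n)).jacobson :=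
    (IsLocalRing.maximalIdeal_le_jacobson _) mem
  absurd Submodule.top_ne_pointwise_smul_of_mem_jacobson_annihilator this
  rw [eq_comm, eq_top_iff]
  intro y hy
  obtain ⟨z, hz⟩ := Abelian.Ext.contravariant_sequence_exact₁ hS L y (add_comm 1 n)
    (@Subsingleton.elim _ zero _ _)
  change Abelian.Ext M L n at z
  change (Abelian.Ext.mk₀ (x • 𝟙 M)).comp (Y := M) z (zero_add n) = y at hz
  rw [Abelian.Ext.mk₀_smul, Abelian.Ext.smul_comp, Abelian.Ext.mk₀_id_comp] at hz
  rw [← hz]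
  exact Submodule.smul_mem_pointwise_smul _ _ ⊤ trivial

theorem ext_mid (R : Type) [CommRing R] (S : ShortComplex (ModuleCat.{0} R)) (hS : S.ShortExact)
    (L : ModuleCat.{0} R) (n : ℕ)
    (h₁ : Subsingleton (Abelian.Ext S.X₁ L n)) (h₃ : Subsingleton (Abelian.Ext S.X₃ L n)) :
    Subsingleton (Abelian.Ext S.X₂ L n) := by
  refine subsingleton_of_forall_eq 0 fun x => ?_
  obtain ⟨y, rfl⟩ := Abelian.Ext.contravariant_sequence_exact₂ hS L x (Subsingleton.elim _ _)
  rw [Subsingleton.elim y 0, Abelian.Ext.comp_zero]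

theorem ext_of_iso (R : Type) [CommRing R] (X Y L : ModuleCat.{0} R) (e : X ≅ Y) (n : ℕ)
    (h : Subsingleton (Abelian.Ext Y L n)) : Subsingleton (Abelian.Ext X L n) := by
  refine subsingleton_of_forall_eq 0 fun x => ?_
  rw [← Abelian.Ext.mk₀_id_comp x, ← e.hom_inv_id, ← Abelian.Ext.mk₀_comp_mk₀_assoc,
    Subsingleton.elim ((Abelian.Ext.mk₀ e.inv).comp x (zero_add n)) 0, Abelian.Ext.comp_zero]

theorem ext_dev (R : Type) [CommRing R] [IsNoetherianRing R]
    (L : ModuleCat.{0} R) (S : Set (PrimeSpectrum R))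
    (hS : ∀ q ∈ S, ∀ i, 2 ≤ i → Subsingleton (Abelian.Ext (ModuleCat.of R (R ⧸ q.asIdeal)) L i))
    (M : Type) [AddCommGroup M] [Module R M] [hM : Module.Finite R M]
    (hsupp : Module.support R M ⊆ S) (i : ℕ) (hi : 2 ≤ i) :
    Subsingleton (Abelian.Ext (ModuleCat.of R M) L i) := by
  induction hM using
    IsNoetherianRing.induction_on_isQuotientEquivQuotientPrime R with
  | subsingleton N =>
    refine subsingleton_of_forall_eq 0 fun x => ?_
    have : Limits.IsZero (ModuleCat.of R N) := ModuleCat.isZero_of_subsingleton _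
    rw [← Abelian.Ext.mk₀_id_comp x, this.eq_of_src (𝟙 _) 0, Abelian.Ext.mk₀_zero,
      Abelian.Ext.zero_comp]
  | quotient N p f =>
    refine ext_of_iso R _ _ L f.toModuleIso i (hS p (hsupp ?_) i hi)
    rw [f.support_eq, Module.mem_support_iff_of_finite, Ideal.annihilator_quotient]
  | exact N₁ N₂ N₃ f g hf hg hfg h₁ h₃ =>
    rw [Module.support_of_exact hfg hf hg] at hsupp
    exact ext_mid R (ModuleCat.shortComplexOfCompEqZero f g hfg.linearMap_comp_eq_zero)
      { exact := ModuleCat.shortComplex_exact _ hfg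
        mono_f := (ModuleCat.mono_iff_injective _).2 hf
        epi_g := (ModuleCat.epi_iff_surjective _).2 hg } L i
      (h₁ (Set.subset_union_left.trans hsupp)) (h₃ (Set.subset_union_right.trans hsupp))

theorem ext_prime (R : Type) [CommRing R] [IsNoetherianRing R] [IsLocalRing R]
    (L : ModuleCat.{0} R) [Module.Finite R L]
    (hL : ∀ i, 2 ≤ i → Subsingleton (Abelian.Ext (ModuleCat.of R (ResidueField R)) L i))
    (p : PrimeSpectrum R) :
    ∀ i, 2 ≤ i → Subsingleton (Abelian.Ext (ModuleCat.of R (R ⧸ p.asIdeal)) L i) := by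
  induction p using (InvImage.wf (fun p : PrimeSpectrum R => p.asIdeal)
    (wellFounded_gt (α := Ideal R))).induction with
  | h p ih =>
  intro i hi
  by_cases hp : p.asIdeal = maximalIdeal R
  · rw [hp]
    exact hL i hi
  · have hle : p.asIdeal ≤ maximalIdeal R := le_maximalIdeal p.2.ne_top
    obtain ⟨x, hx, hxp⟩ := SetLike.exists_of_lt (lt_of_le_of_ne hle hp)
    refine ext_nak R _ L x hx ?_ i ?_
    · rw [isSMulRegular_iff_right_eq_zero_of_smul]
      intro y hy
      obtain ⟨y, rfl⟩ := Ideal.Quotient.mk_surjective y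
      change Ideal.Quotient.mk p.asIdeal (x * y) = 0 at hy
      rw [Ideal.Quotient.eq_zero_iff_mem] at hy ⊢
      exact (p.2.mem_or_mem hy).resolve_left hxp
    · refine ext_dev R L {q | p < q} (fun q hq => ih q hq) _ ?_ (i + 1) (by lia)
      rw [Module.support_quotSMulTop]
      rintro q ⟨hq1, hq2⟩
      rw [Module.mem_support_iff_of_finite, Ideal.annihilator_quotient] at hq1
      refine lt_of_le_of_ne hq1 ?_
      intro heq
      exact hxp (heq.symm ▸ hq2 rfl)


/-- Over a 1-dimensional Noetherian `S₁` local ring with dualizing module `Ω`: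
`Ext^i_R(M, Ω) = 0` for all `i ≥ 2` for every finite `M`, and `Ext^1_R(M, Ω) = 0`
if `M` is moreover torsion free. -/
theorem ext_vanishing_dualizing (R : Type) [CommRing R] [IsNoetherianRing R] [IsLocalRing R]
    (hdim : ringKrullDim R = 1)
    (hS1 : ∀ P ∈ associatedPrimes R R, P ∈ minimalPrimes R)
    (Ω : Type) [AddCommGroup Ω] [Module R Ω] [Module.Finite R Ω] (hΩ : IsDualizing1 R Ω)
    (M : Type) [AddCommGroup M] [Module R M] [Module.Finite R M] :
    (∀ i : ℕ, 2 ≤ i → Subsingleton (extM R M Ω i)) ∧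
      ((∀ P ∈ associatedPrimes R M, P ∈ minimalPrimes R) →
        Subsingleton (extM R M Ω 1)) := by
  have hall : ∀ (N : Type) [AddCommGroup N] [Module R N] [Module.Finite R N] (i : ℕ), 2 ≤ i →
      Subsingleton (Abelian.Ext (ModuleCat.of R N) (ModuleCat.of R Ω) i) := by
    intro N _ _ _ i hi
    refine ext_dev R (ModuleCat.of R Ω) Set.univ (fun q _ => ?_) N (Set.subset_univ _) i hi
    refine ext_prime R (ModuleCat.of R Ω) (fun i hi => ?_) q
    obtain ⟨j, rfl⟩ : ∃ j, i = j + 1 := ⟨i - 1, by lia⟩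
    exact (bridge R _ _ j).1 (hΩ.1 (j + 1) (by lia))
  refine ⟨fun i hi => ?_, fun hM => ?_⟩
  · obtain ⟨j, rfl⟩ : ∃ j, i = j + 1 := ⟨i - 1, by lia⟩
    exact (bridge R _ _ j).2 (hall M (j + 1) hi)
  · refine (bridge R _ _ 0).2 ?_
    have hmin : maximalIdeal R ∉ minimalPrimes R := by
      intro h
      have : Ring.KrullDimLE 0 R := by
        refine Ring.krullDimLE_zero_iff.2 fun I hI => ?_
        have hle := le_maximalIdeal hI.ne_top
        have := h.2 ⟨hI, bot_le⟩ hle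
        rw [le_antisymm hle this]
        infer_instance
      have h0 := (Ring.krullDimLE_iff (n := 0) (R := R)).1 this
      rw [hdim] at h0
      exact absurd h0 (by decide)
    obtain ⟨x, hx, hreg⟩ : ∃ x ∈ maximalIdeal R, IsSMulRegular M x := by
      by_contra! hcon
      obtain ⟨p, hp, hle⟩ : ∃ p ∈ associatedPrimes R M, maximalIdeal R ≤ p := by
        refine (Ideal.subset_union_prime_finite (associatedPrimes.finite R M) (f := id) 0 0
          (fun I hI _ _ => IsAssociatedPrime.isPrime hI)).mp ?_
        simp only [id]
        rw [biUnion_associatedPrimes_eq_compl_regular R M]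
        exact fun r hr => hcon r hr
      have := (IsAssociatedPrime.isPrime hp)
      exact hmin (le_antisymm hle (le_maximalIdeal this.ne_top) ▸ hM p hp)
    exact ext_nak R (ModuleCat.of R M) (ModuleCat.of R Ω) x hx hreg 1 (hall _ 2 le_rfl)
end

section
/- Let (R, m) be a 1-dimensional Noetherian S₁ local ring with dualizing module Ω, and write M* = Hom_R(M, Ω). If Q₁ ⊆ Q₂ are finite torsion-free R-modules with length_R(Q₂/Q₁) finite, then length_R(Q₁*/Q₂*) = length_R(Q₂/Q₁). -/
open CategoryTheory IsLocalRing

theorem ldq_smul_extMk {R : Type} [CommRing R] {X Y : ModuleCat.{0} R}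
    (P : ProjectiveResolution X) {n : ℕ} (f : P.complex.X n ⟶ Y) (m : ℕ) (hm : n + 1 = m)
    (hf : P.complex.d m n ≫ f = 0) (r : R) :
    P.extMk (r • f) m hm (by simp [hf]) = r • P.extMk f m hm hf := by
  rw [Abelian.Ext.smul_eq_comp_mk₀, P.extMk_comp_mk₀]
  simp

/-- Cocycles map linearly onto Ext. -/
noncomputable def ldqMk {R : Type} [CommRing R] {X : ModuleCat.{0} R}
    (P : ProjectiveResolution X) (Y : ModuleCat.{0} R) (i n : ℕ) :
    LinearMap.ker ((P.complex.linearYonedaObj R Y).sc' i n (n+1)).g.hom →ₗ[R]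
      Abelian.Ext X Y n where
  toFun f := P.extMk f.1 (n+1) rfl f.2
  map_add' f g := (P.add_extMk f.1 g.1 (n+1) rfl f.2 g.2).symm
  map_smul' r f := ldq_smul_extMk P f.1 (n+1) rfl f.2 r

theorem ldqMk_surj {R : Type} [CommRing R] {X : ModuleCat.{0} R}
    (P : ProjectiveResolution X) (Y : ModuleCat.{0} R) (i n : ℕ) :
    Function.Surjective (ldqMk P Y i n) := by
  intro α
  obtain ⟨f, hf, h⟩ := P.extMk_surjective α (n+1) rfl
  exact ⟨⟨f, hf⟩, h⟩

theorem ldqMk_ker {R : Type} [CommRing R] {X : ModuleCat.{0} R}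
    (P : ProjectiveResolution X) (Y : ModuleCat.{0} R) (n : ℕ) :
    LinearMap.range ((P.complex.linearYonedaObj R Y).sc' n (n+1) (n+1+1)).moduleCatToCycles =
      LinearMap.ker (ldqMk P Y n (n+1)) := by
  ext ⟨f, hf⟩
  refine Iff.trans ?_ (P.extMk_eq_zero_iff f (n+1+1) rfl hf n rfl).symm
  constructor
  · rintro ⟨g, hg⟩
    exact ⟨g, congrArg Subtype.val hg⟩
  · rintro ⟨g, hg⟩
    exact ⟨g, Subtype.ext hg⟩

theorem ldq_ext_succ (R : Type) [CommRing R] (M N : Type)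
    [AddCommGroup M] [Module R M] [AddCommGroup N] [Module R N] (n : ℕ) :
    Nonempty (extM R M N (n+1) ≃ₗ[R]
      Abelian.Ext (ModuleCat.of R M) (ModuleCat.of R N) (n+1)) := by
  let P := projectiveResolution (ModuleCat.of R M)
  let K := P.complex.linearYonedaObj R (ModuleCat.of R N)
  let e : extM R M N (n+1) ≅ _ := P.isoExt (R := R) (n+1) (ModuleCat.of R N) ≪≫
    K.homologyIsoSc' n (n+1) (n+1+1) (by simp) (by simp) ≪≫
    (K.sc' n (n+1) (n+1+1)).moduleCatHomologyIso
  let e1 := e.toLinearEquiv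
  let e2 : (LinearMap.ker (K.sc' n (n+1) (n+1+1)).g.hom ⧸
      LinearMap.range (K.sc' n (n+1) (n+1+1)).moduleCatToCycles) ≃ₗ[R] _ :=
    Submodule.quotEquivOfEq _ _ (ldqMk_ker P (ModuleCat.of R N) n)
  let e3 := LinearMap.quotKerEquivOfSurjective _ (ldqMk_surj P (ModuleCat.of R N) n (n+1))
  exact ⟨LinearEquiv.trans (M₂ := LinearMap.ker (K.sc' n (n+1) (n+1+1)).g.hom ⧸
      LinearMap.range (K.sc' n (n+1) (n+1+1)).moduleCatToCycles) e1 (e2.trans e3)⟩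

theorem ldq_ext_zero (R : Type) [CommRing R] (M N : Type)
    [AddCommGroup M] [Module R M] [AddCommGroup N] [Module R N]
    (h : Subsingleton (extM R M N 0)) :
    Subsingleton (Abelian.Ext (ModuleCat.of R M) (ModuleCat.of R N) 0) := by
  let P := projectiveResolution (ModuleCat.of R M)
  let K := P.complex.linearYonedaObj R (ModuleCat.of R N)
  let e : extM R M N 0 ≅ _ := P.isoExt (R := R) 0 (ModuleCat.of R N) ≪≫
    K.homologyIsoSc' 0 0 1 (by simp) (by simp) ≪≫
    (K.sc' 0 0 1).moduleCatHomologyIso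
  have h1 := e.symm.toLinearEquiv.toEquiv.subsingleton
  have h2 : Subsingleton (LinearMap.ker (K.sc' 0 0 1).g.hom ⧸
    LinearMap.range (K.sc' 0 0 1).moduleCatToCycles) := h1
  rw [Submodule.Quotient.subsingleton_iff] at h2
  have h3 : (K.sc' 0 0 1).moduleCatToCycles = 0 := by
    have : (K.sc' 0 0 1).f = 0 := K.shape 0 0 (by simp)
    ext x
    change (K.sc' 0 0 1).f.hom x = 0
    rw [this]; rfl
  rw [h3, LinearMap.range_zero] at h2
  refine subsingleton_of_forall_eq 0 fun α => ?_
  obtain ⟨f, rfl⟩ := ldqMk_surj P (ModuleCat.of R N) 0 0 α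
  have : f ∈ (⊥ : Submodule R _) := h2 ▸ Submodule.mem_top
  rw [(Submodule.mem_bot R).1 this, map_zero]

open Abelian in
theorem ldq_exact {R : Type} [CommRing R] {S : ShortComplex (ModuleCat.{0} R)} (hS : S.ShortExact)
    (Y : ModuleCat.{0} R) (h0 : Subsingleton (Ext S.X₁ Y 0)) (h2 : Subsingleton (Ext S.X₃ Y 2)) :
    Module.length R (Ext S.X₂ Y 1) =
      Module.length R (Ext S.X₃ Y 1) + Module.length R (Ext S.X₁ Y 1) := by
  refine Module.length_eq_add_of_exact ((Ext.mk₀ S.g).precompOfLinear R Y (zero_add 1))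
    ((Ext.mk₀ S.f).precompOfLinear R Y (zero_add 1)) ?_ ?_ ?_
  · rw [injective_iff_map_eq_zero]
    intro x hx
    obtain ⟨y, rfl⟩ := Ext.contravariant_sequence_exact₃ hS Y x hx (n₀ := 0) rfl
    rw [Subsingleton.elim y 0, Ext.comp_zero]
  · intro x
    obtain ⟨y, hy⟩ := Ext.contravariant_sequence_exact₁ hS Y x (n₁ := 2) rfl (Subsingleton.elim _ _)
    exact ⟨y, hy⟩
  · intro x
    constructor
    · intro hx
      exact Ext.contravariant_sequence_exact₂ hS Y x hx
    · rintro ⟨y, rfl⟩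
      change (Ext.mk₀ S.f).comp ((Ext.mk₀ S.g).comp y (zero_add 1)) (zero_add 1) = 0
      simp [Ext.mk₀_comp_mk₀_assoc]

theorem ldq_ses {R M : Type} [CommRing R] [AddCommGroup M] [Module R M] (N : Submodule R M) :
    (ShortComplex.mk (ModuleCat.ofHom N.subtype) (ModuleCat.ofHom N.mkQ)
      (by ext x; simp)).ShortExact := by
  refine { exact := ?_, mono_f := ?_, epi_g := ?_ }
  · rw [ShortComplex.ShortExact.moduleCat_exact_iff_function_exact]
    exact LinearMap.exact_subtype_mkQ N
  · exact (ModuleCat.mono_iff_injective _).2 N.subtype_injective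
  · exact (ModuleCat.epi_iff_surjective _).2 N.mkQ_surjective

open Abelian in
theorem ldq_finite {R : Type} [CommRing R] [IsLocalRing R] (Y : ModuleCat.{0} R)
    (h0 : Subsingleton (Ext (ModuleCat.of R (ResidueField R)) Y 0))
    (h2 : Subsingleton (Ext (ModuleCat.of R (ResidueField R)) Y 2))
    (h1 : Module.length R (Ext (ModuleCat.of R (ResidueField R)) Y 1) = 1)
    {T : Type} [AddCommGroup T] [Module R T] (hT : IsFiniteLength R T) :
    Subsingleton (Ext (ModuleCat.of R T) Y 0) ∧ Subsingleton (Ext (ModuleCat.of R T) Y 2) ∧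
    Module.length R (Ext (ModuleCat.of R T) Y 1) = Module.length R T := by
  induction hT with
  | @of_subsingleton M _ _ _ =>
    have key : ∀ n, Subsingleton (Ext (ModuleCat.of R M) Y n) := by
      intro n
      refine subsingleton_of_forall_eq 0 fun x => ?_
      have : 𝟙 (ModuleCat.of R M) = 0 := by
        ext x; exact Subsingleton.elim (α := M) _ _
      rw [← Ext.mk₀_id_comp x, this, Ext.mk₀_zero, Ext.zero_comp]
    have := key 1
    exact ⟨key 0, key 2, by rw [Module.length_eq_zero, Module.length_eq_zero]⟩
  | @of_simple_quotient M _ _ N hs hN ih =>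
    obtain ⟨i0, i2, i1⟩ := ih
    obtain ⟨e⟩ : Nonempty ((M ⧸ N) ≃ₗ[R] ResidueField R) := by
      obtain ⟨I, hI, ⟨e⟩⟩ := isSimpleModule_iff_quot_maximal.1 hs
      obtain rfl := IsLocalRing.eq_maximalIdeal hI
      exact ⟨e⟩
    let i := e.toModuleIso
    have hinj : ∀ n, Function.Injective fun x : Ext (ModuleCat.of R (M ⧸ N)) Y n =>
        (Ext.mk₀ i.inv).comp x (zero_add n) := by
      intro n
      refine Function.LeftInverse.injective
        (g := fun x => (Ext.mk₀ i.hom).comp x (zero_add n)) fun x => ?_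
      simp [Ext.mk₀_comp_mk₀_assoc]
    have q0 : Subsingleton (Ext (ModuleCat.of R (M ⧸ N)) Y 0) := (hinj 0).subsingleton
    have q2 : Subsingleton (Ext (ModuleCat.of R (M ⧸ N)) Y 2) := (hinj 2).subsingleton
    have q1 : Module.length R (Ext (ModuleCat.of R (M ⧸ N)) Y 1) = 1 := by
      rw [← h1]
      refine LinearEquiv.length_eq (LinearEquiv.ofBijective
        ((Ext.mk₀ i.inv).precompOfLinear R Y (zero_add 1)) ⟨hinj 1, fun x =>
          ⟨(Ext.mk₀ i.hom).comp x (zero_add 1), ?_⟩⟩)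
      change (Ext.mk₀ i.inv).comp ((Ext.mk₀ i.hom).comp x (zero_add 1)) (zero_add 1) = x
      simp [Ext.mk₀_comp_mk₀_assoc]
    have hS := ldq_ses N
    have mid : ∀ n, Subsingleton (Ext (ModuleCat.of R (M ⧸ N)) Y n) →
        Subsingleton (Ext (ModuleCat.of R N) Y n) → Subsingleton (Ext (ModuleCat.of R M) Y n) := by
      intro n a b
      refine subsingleton_of_forall_eq 0 fun x => ?_
      obtain ⟨y, hy⟩ := Ext.contravariant_sequence_exact₂ hS Y x (b.elim _ _)
      rw [← hy, a.elim y 0, Ext.comp_zero]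
    refine ⟨mid 0 q0 i0, mid 2 q2 i2, ?_⟩
    refine (ldq_exact hS Y i0 q2).trans ?_
    refine Eq.trans (congrArg₂ (· + ·) q1 i1) ?_
    rw [Module.length_eq_add_of_exact N.subtype N.mkQ N.subtype_injective N.mkQ_surjective
      (LinearMap.exact_subtype_mkQ N), add_comm]
    congr 1
    exact (Module.length_eq_one R _).symm

theorem ldq_exists_regular {R : Type} [CommRing R] [IsNoetherianRing R] [IsLocalRing R]
    (hdim : ringKrullDim R = 1) : ∃ x ∈ maximalIdeal R, ∀ P ∈ minimalPrimes R, x ∉ P := by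
  by_contra! h
  have hsub : (maximalIdeal R : Set R) ⊆ ⋃ P ∈ minimalPrimes R, (P : Set R) := by
    intro x hx
    obtain ⟨P, hP, hxP⟩ := h x hx
    exact Set.mem_biUnion hP hxP
  rw [Ideal.subset_union_prime_finite (minimalPrimes.finite_of_isNoetherianRing R) ⊥ ⊥
    (fun P hP _ _ => hP.1.1)] at hsub
  obtain ⟨P, hP, hle⟩ := hsub
  have := hP.1.1
  obtain rfl : P = maximalIdeal R := le_antisymm (IsLocalRing.le_maximalIdeal this.ne_top) hle
  have h0 : Ring.KrullDimLE 0 R := by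
    rw [Ring.krullDimLE_zero_iff_forall_minimalPrimes_isMaximal]
    intro I hI
    have hIp := hI.1.1
    have h1 := hP.2 ⟨hIp, bot_le⟩ (IsLocalRing.le_maximalIdeal hIp.ne_top)
    rw [le_antisymm (IsLocalRing.le_maximalIdeal hIp.ne_top) h1]
    infer_instance
  rw [Ring.krullDimLE_iff, hdim] at h0
  norm_num at h0

theorem ldq_quot_finite {R : Type} [CommRing R] [IsNoetherianRing R] [IsLocalRing R]
    (hdim : ringKrullDim R = 1) (x : R) (hx : ∀ P ∈ minimalPrimes R, x ∉ P)
    (Q : Type) [AddCommGroup Q] [Module R Q] [Module.Finite R Q] :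
    IsFiniteLength R (QuotSMulTop x Q) := by
  have hd1 : Ring.KrullDimLE 1 R := by rw [Ring.krullDimLE_iff, hdim]; simp
  rw [Ring.krullDimLE_one_iff] at hd1
  have h0 : Ring.KrullDimLE 0 (R ⧸ Ideal.span {x}) := by
    refine Ring.KrullDimLE.mk₀ fun I hI => ?_
    have hc : (I.comap (Ideal.Quotient.mk (Ideal.span {x}))).IsPrime := Ideal.comap_isPrime _ _
    have hmem : x ∈ I.comap (Ideal.Quotient.mk (Ideal.span {x})) := by
      rw [Ideal.mem_comap, Ideal.Quotient.eq_zero_iff_mem.2 (Ideal.mem_span_singleton_self x)]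
      exact I.zero_mem
    have hmax := (hd1 _ hc).resolve_left fun h => hx _ h hmem
    have hm := Ideal.map_eq_top_or_isMaximal_of_surjective
      (Ideal.Quotient.mk (Ideal.span {x})) Ideal.Quotient.mk_surjective hmax
    rw [Ideal.map_comap_of_surjective _ Ideal.Quotient.mk_surjective] at hm
    exact hm.resolve_left hI.ne_top
  have hart : IsArtinianRing (R ⧸ Ideal.span {x}) := isArtinianRing_iff_krullDimLE_zero.2 h0
  have : IsArtinian R (R ⧸ Ideal.span {x}) :=
    isArtinian_of_surjective_algebraMap (R := R ⧸ Ideal.span {x}) Ideal.Quotient.mk_surjective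
  rw [isFiniteLength_iff_isNoetherian_isArtinian]
  refine ⟨inferInstance, ?_⟩
  let := (Module.isTorsionBy_quotient_element_smul Q x).module
  have : IsScalarTower R (R ⧸ Ideal.span {x}) (QuotSMulTop x Q) :=
    ((Module.isTorsionBySet_span_singleton_iff x).2
      (Module.isTorsionBy_quotient_element_smul Q x)).isScalarTower
  have : Module.Finite (R ⧸ Ideal.span {x}) (QuotSMulTop x Q) :=
    Module.Finite.of_restrictScalars_finite R _ _
  exact isArtinian_of_surjective_algebraMap (R := R ⧸ Ideal.span {x}) Ideal.Quotient.mk_surjective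

open Abelian in
theorem ldq_ext_one_zero {R : Type} [CommRing R] [IsNoetherianRing R] [IsLocalRing R]
    (hdim : ringKrullDim R = 1) (Y : ModuleCat.{0} R) [Module.Finite R Y]
    (hY : ∀ (T : Type) [AddCommGroup T] [Module R T], IsFiniteLength R T →
      Subsingleton (Ext (ModuleCat.of R T) Y 2))
    (Q : Type) [AddCommGroup Q] [Module R Q] [Module.Finite R Q]
    (htf : ∀ P ∈ associatedPrimes R Q, P ∈ minimalPrimes R) :
    Subsingleton (Ext (ModuleCat.of R Q) Y 1) := by
  obtain ⟨x, hxm, hx⟩ := ldq_exists_regular hdim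
  have reg : IsSMulRegular (ModuleCat.of R Q) x := by
    by_contra hc
    have : x ∈ ⋃ p ∈ associatedPrimes R Q, (p : Set R) := by
      rw [biUnion_associatedPrimes_eq_compl_regular R Q]
      exact hc
    simp only [Set.mem_iUnion] at this
    obtain ⟨p, hp, hxp⟩ := this
    exact hx p (htf p hp) hxp
  have hS := reg.smulShortComplex_shortExact
  have h2 := hY _ (ldq_quot_finite hdim x hx Q)
  have hfin : Module.Finite R (Ext (ModuleCat.of R Q) Y 1) := ModuleCat.finite_ext R _ _ 1
  have hbot : (⊤ : Submodule R (Ext (ModuleCat.of R Q) Y 1)) = ⊥ := by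
    refine Submodule.eq_bot_of_le_smul_of_le_jacobson_bot (maximalIdeal R) _ hfin.1 ?_
      (IsLocalRing.maximalIdeal_le_jacobson _)
    intro y _
    obtain ⟨z, hz⟩ := Ext.contravariant_sequence_exact₁ hS Y (n₀ := 1) (n₁ := 2) y rfl
      (h2.elim _ _)
    have hz' : y = x • z := by
      refine hz.symm.trans ?_
      change (Ext.mk₀ (x • 𝟙 (ModuleCat.of R Q))).comp
        (show Ext (ModuleCat.of R Q) Y 1 from z) (zero_add 1) = _
      rw [Ext.mk₀_smul, Ext.smul_comp, Ext.mk₀_id_comp]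
      rfl
    rw [hz']
    exact Submodule.smul_mem_smul hxm Submodule.mem_top
  exact (Submodule.subsingleton_iff R).1 (subsingleton_of_bot_eq_top hbot.symm)


open Abelian in
theorem ldq_coker {R : Type} [CommRing R] (Ω : Type) [AddCommGroup Ω] [Module R Ω]
    (Q₂ : Type) [AddCommGroup Q₂] [Module R Q₂] (Q₁ : Submodule R Q₂)
    (h : Subsingleton (Ext (ModuleCat.of R Q₂) (ModuleCat.of R Ω) 1)) :
    Nonempty (((Q₁ →ₗ[R] Ω) ⧸
        LinearMap.range (LinearMap.lcomp R Ω (Q₁.subtype) : (Q₂ →ₗ[R] Ω) →ₗ[R] (Q₁ →ₗ[R] Ω)))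
      ≃ₗ[R] Ext (ModuleCat.of R (Q₂ ⧸ Q₁)) (ModuleCat.of R Ω) 1) := by
  have hS := ldq_ses Q₁
  let φ : (Q₁ →ₗ[R] Ω) →ₗ[R] Ext (ModuleCat.of R (Q₂ ⧸ Q₁)) (ModuleCat.of R Ω) 1 :=
    (hS.extClass.precompOfLinear R (ModuleCat.of R Ω) (add_zero 1)).comp
      ((Ext.linearEquiv₀ (R := R) (X := ModuleCat.of R Q₁) (Y := ModuleCat.of R Ω)).symm.toLinearMap.comp
        (ModuleCat.homLinearEquiv (S := R) (M := ModuleCat.of R Q₁)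
          (N := ModuleCat.of R Ω)).symm.toLinearMap)
  have hφ : ∀ f, φ f = hS.extClass.comp (Ext.mk₀ (ModuleCat.ofHom f)) (add_zero 1) :=
    fun f => rfl
  have hsurj : Function.Surjective φ := by
    intro y
    obtain ⟨z, hz⟩ := Ext.contravariant_sequence_exact₃ hS (ModuleCat.of R Ω) y (h.elim _ _)
      (n₀ := 0) rfl
    obtain ⟨f, rfl⟩ := Ext.homEquiv₀.symm.surjective z
    exact ⟨f.hom, hz⟩
  have hker : LinearMap.range (LinearMap.lcomp R Ω Q₁.subtype) = LinearMap.ker φ := by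
    ext f
    rw [LinearMap.mem_ker, hφ]
    constructor
    · rintro ⟨g, rfl⟩
      have : ModuleCat.ofHom (LinearMap.lcomp R Ω Q₁.subtype g) =
        ModuleCat.ofHom Q₁.subtype ≫ ModuleCat.ofHom g := rfl
      rw [this, ← Ext.mk₀_comp_mk₀]
      exact hS.extClass_comp_assoc _
    · intro hf
      obtain ⟨z, hz⟩ := Ext.contravariant_sequence_exact₁ hS (ModuleCat.of R Ω) _ (add_zero 1) hf
      obtain ⟨g, rfl⟩ := Ext.homEquiv₀.symm.surjective z
      refine ⟨g.hom, ?_⟩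
      have h3 : Ext.mk₀ (ModuleCat.ofHom Q₁.subtype ≫ g) = Ext.mk₀ (ModuleCat.ofHom f) := by
        rw [← Ext.mk₀_comp_mk₀]; exact hz
      exact congrArg ModuleCat.Hom.hom (Ext.homEquiv₀.symm.injective h3)
  exact ⟨(Submodule.quotEquivOfEq _ _ hker).trans (φ.quotKerEquivOfSurjective hsurj)⟩

/-- Over a 1-dimensional Noetherian `S₁` local ring with dualizing module `Ω`, if
`Q₁ ⊆ Q₂` are finite torsion-free modules with `Q₂/Q₁` of finite length, then
`length(Q₁*/Q₂*) = length(Q₂/Q₁)`, where `(-)* = Hom_R(-, Ω)` and `Q₂*` sits inside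
`Q₁*` via restriction. -/
theorem length_dual_quotient (R : Type) [CommRing R] [IsNoetherianRing R] [IsLocalRing R]
    (hdim : ringKrullDim R = 1)
    (hS1 : ∀ P ∈ associatedPrimes R R, P ∈ minimalPrimes R)
    (Ω : Type) [AddCommGroup Ω] [Module R Ω] [Module.Finite R Ω] (hΩ : IsDualizing1 R Ω)
    (Q₂ : Type) [AddCommGroup Q₂] [Module R Q₂] [Module.Finite R Q₂]
    (htf : ∀ P ∈ associatedPrimes R Q₂, P ∈ minimalPrimes R)
    (Q₁ : Submodule R Q₂)
    (hfin : IsFiniteLength R (Q₂ ⧸ Q₁)) :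
    mlen R ((Q₁ →ₗ[R] Ω) ⧸
        LinearMap.range (LinearMap.lcomp R Ω (Q₁.subtype) : (Q₂ →ₗ[R] Ω) →ₗ[R] (Q₁ →ₗ[R] Ω))) =
      mlen R (Q₂ ⧸ Q₁) := by
  obtain ⟨hv, ⟨e1⟩⟩ := hΩ
  have h0 := ldq_ext_zero R (ResidueField R) Ω (hv 0 (by norm_num))
  have h2 : Subsingleton
      (Abelian.Ext (ModuleCat.of R (ResidueField R)) (ModuleCat.of R Ω) 2) := by
    obtain ⟨e⟩ := ldq_ext_succ R (ResidueField R) Ω 1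
    have := hv 2 (by norm_num)
    exact e.symm.toEquiv.subsingleton
  have h1 : Module.length R
      (Abelian.Ext (ModuleCat.of R (ResidueField R)) (ModuleCat.of R Ω) 1) = 1 := by
    obtain ⟨e⟩ := ldq_ext_succ R (ResidueField R) Ω 0
    rw [← e.length_eq]
    refine e1.length_eq.trans ?_
    rw [Module.length_eq_one_iff, isSimpleModule_iff_quot_maximal]
    exact ⟨maximalIdeal R, inferInstance, ⟨LinearEquiv.refl R _⟩⟩
  have hT := fun (T : Type) [AddCommGroup T] [Module R T] (h : IsFiniteLength R T) =>
    ldq_finite (ModuleCat.of R Ω) h0 h2 h1 h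
  have : Module.Finite R (ModuleCat.of R Ω) := ‹Module.Finite R Ω›
  have hz := ldq_ext_one_zero hdim (ModuleCat.of R Ω) (fun T _ _ h => (hT T h).2.1) Q₂ htf
  obtain ⟨e⟩ := ldq_coker Ω Q₂ Q₁ hz
  rw [mlen, mlen, ← Module.coe_length, ← Module.coe_length, e.length_eq, (hT _ hfin).2.2]
end

section
/- Let (R, m) be a Noetherian local Cohen–Macaulay ring of dimension n with residue field k, and Ω a finite R-module such that Ext^i_R(k, Ω) = 0 for i < n, Ext^n_R(k, Ω) ≅ k, and length_{R_P}(Ω_P) ≥ length_{R_P}(R_P) for every minimal prime P of R. Then Ω is a dualizing (canonical) module for R, i.e., Ext^i_R(k, Ω) = 0 for all i ≠ n. -/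
open CategoryTheory IsLocalRing

section
variable {R : Type} [CommRing R] {X Y : ModuleCat.{0} R} (P : ProjectiveResolution X)

lemma bridge_d (i j : ℕ) (f : P.complex.X i ⟶ Y) :
    ((P.complex.linearYonedaObj R Y).d i j).hom f = P.complex.d j i ≫ f := rfl

lemma bridge_zero_iff (f : P.complex.X 0 ⟶ Y) (m : ℕ) (hm : 0 + 1 = m)
    (hf : P.complex.d m 0 ≫ f = 0) : P.extMk f m hm hf = 0 ↔ f = 0 := by
  constructor
  · intro h
    rw [← P.extEquivCohomologyClass.apply_eq_iff_eq,
      ProjectiveResolution.extEquivCohomologyClass_extMk,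
      ProjectiveResolution.extEquivCohomologyClass_zero,
      CochainComplex.HomComplex.CohomologyClass.mk_eq_zero_iff,
      CochainComplex.HomComplex.Cocycle.toSingleMk_mem_coboundaries_iff _ _ _ _ _ (1 : ℤ) (by simp)] at h
    obtain ⟨g, hg⟩ := h
    have hz : Limits.IsZero (P.cochainComplex.X 1) :=
      CochainComplex.isZero_of_isStrictlyLE P.cochainComplex 0 1
    rw [hz.eq_of_src g 0, Limits.comp_zero] at hg
    rw [← cancel_epi (P.cochainComplexXIso (-(0:ℕ)) 0 rfl).hom, ← hg]
    simp
  · rintro rfl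
    simp

lemma smul_extMk {n : ℕ} (r : R) (f : P.complex.X n ⟶ Y) (m : ℕ) (hm : n + 1 = m)
    (hf : P.complex.d m n ≫ f = 0) :
    P.extMk (r • f) m hm (by rw [Linear.comp_smul, hf, smul_zero]) = r • P.extMk f m hm hf := by
  rw [Abelian.Ext.smul_eq_comp_mk₀, ProjectiveResolution.extMk_comp_mk₀]
  congr 1

/-- The map from cocycles to `Ext`. -/
noncomputable def cocToExt (i n : ℕ) :
    LinearMap.ker ((P.complex.linearYonedaObj R Y).sc' i n (n+1)).g.hom →ₗ[R] Abelian.Ext X Y n where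
  toFun f := P.extMk (Y := Y) (n := n) f.1 (n+1) rfl f.2
  map_add' _ _ := (P.add_extMk _ _ _ _ _ _).symm
  map_smul' r f := smul_extMk P r (show P.complex.X n ⟶ Y from f.1) (n+1) rfl f.2

lemma cocToExt_surj (i n : ℕ) : Function.Surjective (cocToExt (Y := Y) P i n) := by
  intro a
  obtain ⟨f, hf, h⟩ := P.extMk_surjective a (n+1) rfl
  exact ⟨⟨f, hf⟩, h⟩

lemma cocToExt_ker (n : ℕ) : LinearMap.range ((P.complex.linearYonedaObj R Y).sc' (n-1) n (n+1)).moduleCatToCycles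
    = LinearMap.ker (cocToExt (Y := Y) P (n-1) n) := by
  ext ⟨f, hf⟩
  rw [LinearMap.mem_ker]
  change _ ↔ P.extMk (Y := Y) (n := n) f (n+1) rfl hf = 0
  rcases n with _ | n
  · refine Iff.trans ?_ (bridge_zero_iff P (show P.complex.X 0 ⟶ Y from f) _ rfl hf).symm
    constructor
    · rintro ⟨g, hg⟩
      have h1 : P.complex.d 0 0 ≫ (show P.complex.X 0 ⟶ Y from g) = (show P.complex.X 0 ⟶ Y from f) :=
        congrArg Subtype.val hg
      rw [← h1, P.complex.shape _ _ (by simp), Limits.zero_comp]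
    · intro h
      exact ⟨0, by rw [map_zero]; exact Subtype.ext h.symm⟩
  · refine Iff.trans ?_ (P.extMk_eq_zero_iff (show P.complex.X (n+1) ⟶ Y from f) _ rfl hf n rfl).symm
    constructor
    · rintro ⟨g, hg⟩
      exact ⟨g, congrArg Subtype.val hg⟩
    · rintro ⟨g, hg⟩
      exact ⟨g, Subtype.ext hg⟩

/-- `Ext` as homology of the complex versus `Ext` in the derived category. -/
noncomputable def bridgeEquiv (n : ℕ) :
    (((Ext R (ModuleCat R) n).obj (Opposite.op X)).obj Y) ≃ₗ[R] Abelian.Ext X Y n :=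
  let P := ProjectiveResolution.of X
  (P.isoExt n Y).toLinearEquiv ≪≫ₗ
    ((P.complex.linearYonedaObj R Y).homologyIsoSc' (n-1) n (n+1) (by cases n <;> simp) (by simp)).toLinearEquiv ≪≫ₗ
    (ShortComplex.moduleCatHomologyIso _).toLinearEquiv ≪≫ₗ
    Submodule.quotEquivOfEq _ _ (cocToExt_ker P n) ≪≫ₗ
    (cocToExt (Y := Y) P (n-1) n).quotKerEquivOfSurjective (cocToExt_surj P _ _)
end

/-- the derived category version of Ext. -/
abbrev E (R : Type) [CommRing R] (M N : Type)
    [AddCommGroup M] [Module R M] [AddCommGroup N] [Module R N] (n : ℕ) : Type :=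
  Abelian.Ext (ModuleCat.of R M) (ModuleCat.of R N) n

noncomputable def extMEquiv (R : Type) [CommRing R] (M N : Type)
    [AddCommGroup M] [Module R M] [AddCommGroup N] [Module R N] (n : ℕ) :
    extM R M N n ≃ₗ[R] E R M N n := bridgeEquiv n



section
variable {R : Type} [CommRing R] 
  {A B C : Type} [AddCommGroup A] [Module R A] [AddCommGroup B] [Module R B]
  [AddCommGroup C] [Module R C] (Y : Type) [AddCommGroup Y] [Module R Y]

/-- short complex attached to linear maps -/
abbrev scOf (f : A →ₗ[R] B) (g : B →ₗ[R] C) (h : Function.Exact f g) : ShortComplex (ModuleCat.{0} R) :=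
  ShortComplex.mk (ModuleCat.ofHom f) (ModuleCat.ofHom g)
    (by rw [← ModuleCat.ofHom_comp, h.linearMap_comp_eq_zero]; rfl)

lemma scOf_shortExact (f : A →ₗ[R] B) (g : B →ₗ[R] C) (h : Function.Exact f g)
    (hf : Function.Injective f) (hg : Function.Surjective g) : (scOf f g h).ShortExact where
  exact := (ShortComplex.moduleCat_exact_iff _).2 fun x hx => (h x).1 hx
  mono_f := (ModuleCat.mono_iff_injective _).2 hf
  epi_g := (ModuleCat.epi_iff_surjective _).2 hg

/-- contravariant functoriality -/
noncomputable abbrev epre (f : A →ₗ[R] B) (n : ℕ) : E R B Y n →ₗ[R] E R A Y n :=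
  (Abelian.Ext.mk₀ (ModuleCat.ofHom f)).precompOfLinear R (ModuleCat.of R Y) (zero_add n)

variable {Y}
lemma epre_exact (f : A →ₗ[R] B) (g : B →ₗ[R] C) (h : Function.Exact f g)
    (hf : Function.Injective f) (hg : Function.Surjective g) (n : ℕ) :
    Function.Exact (epre Y g n) (epre Y f n) := by
  intro x
  constructor
  · intro hx
    exact Abelian.Ext.contravariant_sequence_exact₂ (scOf_shortExact f g h hf hg) (ModuleCat.of R Y) x hx
  · rintro ⟨y, rfl⟩
    change (Abelian.Ext.mk₀ (ModuleCat.ofHom _)).comp ((Abelian.Ext.mk₀ (ModuleCat.ofHom _)).comp y (zero_add n)) (zero_add n) = 0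
    rw [Abelian.Ext.mk₀_comp_mk₀_assoc, ← ModuleCat.ofHom_comp, h.linearMap_comp_eq_zero]
    simp

lemma econn (f : A →ₗ[R] B) (g : B →ₗ[R] C) (h : Function.Exact f g)
    (hf : Function.Injective f) (hg : Function.Surjective g) (n : ℕ) :
    ∃ d : E R A Y n →ₗ[R] E R C Y (n+1), Function.Exact (epre Y f n) d ∧ Function.Exact d (epre Y g (n+1)) := by
  have hS := scOf_shortExact f g h hf hg
  refine ⟨hS.extClass.precompOfLinear R (ModuleCat.of R Y) (add_comm 1 n), ?_, ?_⟩
  · intro x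
    constructor
    · intro hx
      exact Abelian.Ext.contravariant_sequence_exact₁ hS (ModuleCat.of R Y) x (add_comm 1 n) hx
    · rintro ⟨y, rfl⟩
      change hS.extClass.comp ((Abelian.Ext.mk₀ (scOf f g h).f).comp y (zero_add n)) (add_comm 1 n) = 0
      rw [← Abelian.Ext.comp_assoc _ _ _ rfl (by omega) (by omega), hS.extClass_comp]
      simp
  · intro x
    constructor
    · intro hx
      exact Abelian.Ext.contravariant_sequence_exact₃ hS (ModuleCat.of R Y) x hx (add_comm 1 n)
    · rintro ⟨y, rfl⟩
      change (Abelian.Ext.mk₀ (scOf f g h).g).comp (hS.extClass.comp y (add_comm 1 n)) (zero_add (n+1)) = 0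
      rw [← Abelian.Ext.comp_assoc _ _ _ rfl (by omega) (by omega), hS.comp_extClass]
      simp

lemma epre_smul (x : R) (n : ℕ) (a : E R A Y n) : epre Y (LinearMap.lsmul R A x) n a = x • a := by
  change (Abelian.Ext.mk₀ (ModuleCat.ofHom _)).comp a (zero_add n) = _
  rw [show ModuleCat.ofHom (LinearMap.lsmul R A x) = x • 𝟙 (ModuleCat.of R A) from rfl,
    Abelian.Ext.mk₀_smul, Abelian.Ext.smul_comp, Abelian.Ext.mk₀_id_comp]

lemma E_sub_of_exact (f : A →ₗ[R] B) (g : B →ₗ[R] C) (h : Function.Exact f g)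
    (hf : Function.Injective f) (hg : Function.Surjective g) (n : ℕ) [Subsingleton (E R A Y n)]
    [Subsingleton (E R C Y n)] : Subsingleton (E R B Y n) := by
  rw [subsingleton_iff_forall_eq 0]
  intro b
  obtain ⟨c, rfl⟩ := (epre_exact (Y := Y) f g h hf hg n b).1 (Subsingleton.elim _ _)
  rw [Subsingleton.elim c 0, map_zero]

lemma E_sub_conn (f : A →ₗ[R] B) (g : B →ₗ[R] C) (h : Function.Exact f g)
    (hf : Function.Injective f) (hg : Function.Surjective g) (n : ℕ) [Subsingleton (E R A Y n)]
    [Subsingleton (E R B Y (n+1))] : Subsingleton (E R C Y (n+1)) := by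
  obtain ⟨d, h1, h2⟩ := econn (Y := Y) f g h hf hg n
  rw [subsingleton_iff_forall_eq 0]
  intro b
  obtain ⟨c, rfl⟩ := (h2 b).1 (Subsingleton.elim _ _)
  rw [Subsingleton.elim c 0, map_zero]

open Pointwise

variable {M : Type} [AddCommGroup M] [Module R M]

lemma smul_exact (x : R) : Function.Exact (LinearMap.lsmul R A x) (x • (⊤ : Submodule R A)).mkQ :=
  LinearMap.exact_lsmul_mkQ_smul_top A x

lemma E_quot_vanish (x : R) (hx : IsSMulRegular A x) (j : ℕ)
    (hv : ∀ i, j < i → Subsingleton (E R A Y i)) :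
    ∀ i, j + 1 < i → Subsingleton (E R (QuotSMulTop x A) Y i) := by
  intro i hi
  obtain ⟨i, rfl⟩ : ∃ i', i = i' + 1 := ⟨i - 1, by omega⟩
  have := hv i (by omega)
  have := hv (i+1) (by omega)
  exact E_sub_conn (LinearMap.lsmul R A x) (x • (⊤ : Submodule R A)).mkQ (smul_exact x) hx
    (Submodule.mkQ_surjective _) i

lemma E_quot_equiv (x : R) (hx : IsSMulRegular A x) (j : ℕ)
    (hv : ∀ i, j < i → Subsingleton (E R A Y i)) (e : E R A Y j ≃ₗ[R] M) :
    Nonempty (E R (QuotSMulTop x A) Y (j+1) ≃ₗ[R] QuotSMulTop x M) := by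
  have := hv (j+1) (by omega)
  obtain ⟨d, h1, h2⟩ := econn (Y := Y) (LinearMap.lsmul R A x) (x • (⊤ : Submodule R A)).mkQ (smul_exact x) hx
    (Submodule.mkQ_surjective _) j
  have hd : Function.Surjective d := fun b => (h2 b).1 (Subsingleton.elim _ _)
  have hk : LinearMap.ker d = x • (⊤ : Submodule R (E R A Y j)) := by
    ext b
    rw [LinearMap.mem_ker, h1 b, Submodule.mem_smul_pointwise_iff_exists]
    constructor
    · rintro ⟨y, rfl⟩
      exact ⟨y, trivial, (epre_smul x j y).symm⟩
    · rintro ⟨y, -, rfl⟩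
      exact ⟨y, epre_smul x j y⟩
  exact ⟨(d.quotKerEquivOfSurjective hd).symm ≪≫ₗ Submodule.quotEquivOfEq _ _ hk ≪≫ₗ
    QuotSMulTop.congr x e⟩

lemma E_cov_vanish (x : R) (hx : IsSMulRegular Y x) (d : ℕ)
    (hv : ∀ i, i < d + 1 → Subsingleton (E R A Y i)) :
    ∀ i, i < d → Subsingleton (E R A (QuotSMulTop x Y) i) := by
  intro i hi
  have := hv i (by omega)
  have := hv (i+1) (by omega)
  have hS := scOf_shortExact (LinearMap.lsmul R Y x) (x • (⊤ : Submodule R Y)).mkQ (smul_exact x) hx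
    (Submodule.mkQ_surjective _)
  rw [subsingleton_iff_forall_eq 0]
  intro b
  obtain ⟨c, hc⟩ := Abelian.Ext.covariant_sequence_exact₃ (ModuleCat.of R A) hS b rfl
    (Subsingleton.elim (α := E R A Y (i+1)) _ _)
  rw [← hc, Subsingleton.elim (α := E R A Y i) c 0]
  simp

lemma E_self_vanish (i : ℕ) (hi : 0 < i) : Subsingleton (E R R Y i) := by
  obtain ⟨i, rfl⟩ : ∃ i', i = i' + 1 := ⟨i - 1, by omega⟩
  have : Projective (ModuleCat.of R R) := ModuleCat.projective_of_free (Module.Basis.singleton Unit R)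
  rw [subsingleton_iff_forall_eq 0]
  intro b
  exact b.eq_zero_of_projective

noncomputable def E_self_equiv : E R R Y 0 ≃ₗ[R] Y :=
  Abelian.Ext.linearEquiv₀ ≪≫ₗ ModuleCat.homLinearEquiv (S := R) ≪≫ₗ LinearMap.ringLmapEquivSelf R R Y

noncomputable def E_hom_equiv : E R A Y 0 ≃ₗ[R] (A →ₗ[R] Y) :=
  Abelian.Ext.linearEquiv₀ ≪≫ₗ ModuleCat.homLinearEquiv (S := R)

noncomputable def E_congr (e : A ≃ₗ[R] B) (n : ℕ) : E R B Y n ≃ₗ[R] E R A Y n :=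
  LinearEquiv.ofLinearMap (epre Y e.toLinearMap n) (epre Y e.symm.toLinearMap n)
    (by
      ext x
      change (Abelian.Ext.mk₀ (ModuleCat.ofHom _)).comp ((Abelian.Ext.mk₀ (ModuleCat.ofHom _)).comp x (zero_add n)) (zero_add n) = x
      rw [Abelian.Ext.mk₀_comp_mk₀_assoc, ← ModuleCat.ofHom_comp]
      simp)
    (by
      ext x
      change (Abelian.Ext.mk₀ (ModuleCat.ofHom _)).comp ((Abelian.Ext.mk₀ (ModuleCat.ofHom _)).comp x (zero_add n)) (zero_add n) = x
      rw [Abelian.Ext.mk₀_comp_mk₀_assoc, ← ModuleCat.ofHom_comp]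
      simp)

end



section
variable {R : Type} [CommRing R] [IsLocalRing R]
  {Y : Type} [AddCommGroup Y] [Module R Y]

lemma length_range_add {S A B C : Type*} [Ring S] [AddCommGroup A] [Module S A] [AddCommGroup B] [Module S B]
    [AddCommGroup C] [Module S C] (f : A →ₗ[S] B) (g : B →ₗ[S] C) (h : Function.Exact f g) :
    Module.length S B = Module.length S (LinearMap.range f) + Module.length S (LinearMap.range g) := by
  rw [← LinearMap.exact_iff.1 h]
  refine Module.length_eq_add_of_exact (LinearMap.ker g).subtype g.rangeRestrict (Submodule.subtype_injective _)
    g.surjective_rangeRestrict ?_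
  rw [LinearMap.exact_iff]
  simp

lemma length_le_add_of_exact {S A B C : Type*} [Ring S] [AddCommGroup A] [Module S A] [AddCommGroup B] [Module S B]
    [AddCommGroup C] [Module S C] (f : A →ₗ[S] B) (g : B →ₗ[S] C) (h : Function.Exact f g) :
    Module.length S B ≤ Module.length S A + Module.length S C := by
  rw [length_range_add f g h]
  exact add_le_add (Module.length_le_of_surjective _ f.surjective_rangeRestrict)
    (Module.length_le_of_injective _ (Submodule.subtype_injective _))

lemma subm_exact {A : Type} [AddCommGroup A] [Module R A] (K : Submodule R A) :
    Function.Exact K.subtype K.mkQ := by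
  rw [LinearMap.exact_iff]; simp

lemma simple_equiv {A : Type} [AddCommGroup A] [Module R A] [IsSimpleModule R A] :
    Nonempty (A ≃ₗ[R] ResidueField R) := by
  obtain ⟨m, hm, ⟨e⟩⟩ := isSimpleModule_iff_quot_maximal.mp (inferInstance : IsSimpleModule R A)
  rw [eq_maximalIdeal hm] at e
  exact ⟨e⟩

lemma dev_length (n : ℕ) (hk : Module.length R (E R (ResidueField R) Y n) ≤ 1)
    {X : Type} [AddCommGroup X] [Module R X] (hX : IsFiniteLength R X) :
    Module.length R (E R X Y n) ≤ Module.length R X := by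
  induction hX with
  | @of_subsingleton X _ _ _ =>
    have : Subsingleton (E R X Y n) := by
      rw [subsingleton_iff_forall_eq 0]
      intro b
      have : 𝟙 (ModuleCat.of R X) = 0 := by ext x; exact Subsingleton.elim _ _
      rw [← Abelian.Ext.mk₀_id_comp b, this]
      simp
    simp
  | @of_simple_quotient X _ _ K _ hK ih =>
    obtain ⟨e⟩ := simple_equiv (R := R) (A := X ⧸ K)
    rw [Module.length_eq_add_of_exact K.subtype K.mkQ (Submodule.subtype_injective _)
      (Submodule.mkQ_surjective _) (subm_exact K), Module.length_eq_one R (X ⧸ K), add_comm]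
    refine (length_le_add_of_exact _ _ (epre_exact (Y := Y) K.subtype K.mkQ (subm_exact K)
      (Submodule.subtype_injective _) (Submodule.mkQ_surjective _) n)).trans (add_le_add ?_ ih)
    rwa [← (E_congr (Y := Y) e n).length_eq]

lemma dev_vanish (n : ℕ) (hk : Subsingleton (E R (ResidueField R) Y n))
    {X : Type} [AddCommGroup X] [Module R X] (hX : IsFiniteLength R X) :
    Subsingleton (E R X Y n) := by
  induction hX with
  | @of_subsingleton X _ _ _ =>
      rw [subsingleton_iff_forall_eq 0]
      intro b
      have : 𝟙 (ModuleCat.of R X) = 0 := by ext x; exact Subsingleton.elim _ _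
      rw [← Abelian.Ext.mk₀_id_comp b, this]
      simp
  | @of_simple_quotient X _ _ K _ hK ih =>
    obtain ⟨e⟩ := simple_equiv (R := R) (A := X ⧸ K)
    have : Subsingleton (E R (X ⧸ K) Y n) := (E_congr (Y := Y) e n).symm.subsingleton
    exact E_sub_of_exact K.subtype K.mkQ (subm_exact K)
      (Submodule.subtype_injective _) (Submodule.mkQ_surjective _) n

lemma final_step (n : ℕ) (hk : Module.length R (E R (ResidueField R) Y n) ≤ 1)
    {N : Type} [AddCommGroup N] [Module R N] [Nontrivial N] [Module.Finite R N]
    (hN : IsFiniteLength R N) (hv : ∀ i, n < i → Subsingleton (E R N Y i))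
    (hl : Module.length R N ≤ Module.length R (E R N Y n)) :
    ∀ i, n < i → Subsingleton (E R (ResidueField R) Y i) := by
  obtain ⟨K, hK⟩ := IsCoatomic.exists_coatom (Submodule R N)
  have hs : IsSimpleModule R (N ⧸ K) := isSimpleModule_iff_isCoatom.2 hK
  obtain ⟨e⟩ := simple_equiv (R := R) (A := N ⧸ K)
  have hKf : IsFiniteLength R K := hN.of_injective (f := K.subtype) (Submodule.subtype_injective _)
  have hi := Submodule.subtype_injective K
  have hsu := Submodule.mkQ_surjective K
  suffices ∀ i, Subsingleton (E R (N ⧸ K) Y (n+1+i)) by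
    intro i hi
    obtain ⟨j, rfl⟩ := Nat.exists_eq_add_of_le (show n + 1 ≤ i by omega)
    have := this j
    exact (E_congr (Y := Y) e _).subsingleton
  intro i
  induction i with
  | zero =>
    have hN1 := hv (n+1) (by omega)
    have h1 := length_range_add _ _ (epre_exact (Y := Y) K.subtype K.mkQ (subm_exact K) hi hsu n)
    have h2 : Module.length R (LinearMap.range (epre Y K.mkQ n)) ≤ 1 := by
      refine (Module.length_le_of_surjective _ (epre Y K.mkQ n).surjective_rangeRestrict).trans ?_
      rwa [← (E_congr (Y := Y) e n).length_eq]
    have h3 := Module.length_eq_add_of_exact K.subtype K.mkQ hi hsu (subm_exact K)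
    rw [Module.length_eq_one R (N ⧸ K)] at h3
    have h4 := dev_length n hk hKf
    have h5 : Module.length R K ≠ ⊤ := Module.length_ne_top_iff.2 hKf
    have h6 : Module.length R (E R K Y n) ≤ Module.length R (LinearMap.range (epre Y K.subtype n)) := by
      refine h4.trans ?_
      rw [h1, h3] at hl
      have : Module.length R K + 1 ≤ Module.length R (LinearMap.range (epre Y K.subtype n)) + 1 := by
        rw [add_comm _ (1 : ℕ∞)]
        rw [add_comm _ (1 : ℕ∞)] at hl ⊢
        exact hl.trans (add_le_add_left h2 _)
      exact (ENat.add_le_add_iff_right (by simp)).1 this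
    have hfin : IsFiniteLength R (E R K Y n) :=
      Module.length_ne_top_iff.1 (ne_top_of_le_ne_top h5 h4)
    obtain ⟨_, _⟩ := isFiniteLength_iff_isNoetherian_isArtinian.1 hfin
    have htop : LinearMap.range (epre Y K.subtype n) = ⊤ := by
      by_contra hne
      exact absurd h6 (not_le.2 (Submodule.length_lt hne))
    obtain ⟨d, hd1, hd2⟩ := econn (Y := Y) K.subtype K.mkQ (subm_exact K) hi hsu n
    rw [subsingleton_iff_forall_eq 0]
    intro b
    obtain ⟨c, rfl⟩ := (hd2 b).1 (Subsingleton.elim (α := E R N Y (n+1)) _ _)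
    exact (hd1 c).2 (LinearMap.range_eq_top.1 htop c)
  | succ i ih =>
    have : Subsingleton (E R K Y (n+1+i)) :=
      dev_vanish _ ((E_congr (Y := Y) e _).subsingleton) hKf
    have := hv (n+1+i+1) (by omega)
    exact E_sub_conn K.subtype K.mkQ (subm_exact K) hi hsu (n+1+i)

end



section
open scoped Pointwise
variable {R : Type} [CommRing R]

/-- length of the localization at a prime -/
noncomputable def lam (P : PrimeSpectrum R) (L : Type) [AddCommGroup L] [Module R L] : ℕ∞ :=
  Module.length (Localization.AtPrime P.asIdeal) (LocalizedModule P.asIdeal.primeCompl L)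

variable {A B C : Type} [AddCommGroup A] [Module R A] [AddCommGroup B] [Module R B]
  [AddCommGroup C] [Module R C]

lemma lam_add (P : PrimeSpectrum R) (f : A →ₗ[R] B) (g : B →ₗ[R] C) (hf : Function.Injective f)
    (hg : Function.Surjective g) (h : Function.Exact f g) : lam P B = lam P A + lam P C :=
  Module.length_eq_add_of_exact (LocalizedModule.map P.asIdeal.primeCompl f)
    (LocalizedModule.map P.asIdeal.primeCompl g)
    (LocalizedModule.map_injective _ f hf) (LocalizedModule.map_surjective _ g hg)
    (LocalizedModule.map_exact _ f g h)

lemma lam_le_inj (P : PrimeSpectrum R) (f : A →ₗ[R] B) (hf : Function.Injective f) :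
    lam P A ≤ lam P B :=
  Module.length_le_of_injective _ (LocalizedModule.map_injective P.asIdeal.primeCompl f hf)

lemma lam_le_surj (P : PrimeSpectrum R) (f : A →ₗ[R] B) (hf : Function.Surjective f) :
    lam P B ≤ lam P A :=
  Module.length_le_of_surjective _ (LocalizedModule.map_surjective P.asIdeal.primeCompl f hf)

lemma lam_congr (P : PrimeSpectrum R) (e : A ≃ₗ[R] B) : lam P A = lam P B :=
  le_antisymm (lam_le_inj P e.toLinearMap e.injective) (lam_le_surj P e.toLinearMap e.surjective)

lemma lam_eq_zero (P : PrimeSpectrum R) (h : P ∉ Module.support R A) : lam P A = 0 :=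
  Module.length_eq_zero_iff.2 (Module.notMem_support_iff.1 h)

lemma lam_sub (P : PrimeSpectrum R) [Subsingleton A] : lam P A = 0 :=
  lam_eq_zero P (by simp [Module.support_eq_empty])

lemma lam_range_add (P : PrimeSpectrum R) (f : A →ₗ[R] B) (g : B →ₗ[R] C) (h : Function.Exact f g) :
    lam P B = lam P (LinearMap.range f) + lam P (LinearMap.range g) := by
  rw [← LinearMap.exact_iff.1 h]
  refine lam_add P (LinearMap.ker g).subtype g.rangeRestrict (Submodule.subtype_injective _)
    g.surjective_rangeRestrict ?_
  rw [LinearMap.exact_iff]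
  simp

lemma lam_ker_range (P : PrimeSpectrum R) (g : B →ₗ[R] C) :
    lam P B = lam P (LinearMap.ker g) + lam P (LinearMap.range g) := by
  refine lam_add P (LinearMap.ker g).subtype g.rangeRestrict (Submodule.subtype_injective _)
    g.surjective_rangeRestrict ?_
  rw [LinearMap.exact_iff]
  simp

lemma lam_range_surj (P : PrimeSpectrum R) (f : A →ₗ[R] B) (hf : Function.Surjective f) :
    lam P (LinearMap.range f) = lam P B :=
  lam_congr P (LinearEquiv.ofTop _ (LinearMap.range_eq_top.2 hf))

lemma lam_range_inj (P : PrimeSpectrum R) (f : A →ₗ[R] B) (hf : Function.Injective f) :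
    lam P (LinearMap.range f) = lam P A :=
  (lam_congr P (LinearEquiv.ofInjective f hf)).symm

lemma lam_self (P : PrimeSpectrum R) : lam P (R ⧸ P.asIdeal) = 1 := by
  unfold lam
  rw [Module.length_eq_one_iff]
  rw [isSimpleModule_iff_toSpanSingleton_surjective]
  constructor
  · rw [← Module.mem_support_iff, Module.support_of_algebra]
    simp
  · intro m hm y
    induction m using LocalizedModule.induction_on with
    | h m s =>
    obtain ⟨r, rfl⟩ := Ideal.Quotient.mk_surjective m
    induction y using LocalizedModule.induction_on with
    | h y t =>
    obtain ⟨u, rfl⟩ := Ideal.Quotient.mk_surjective y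
    have hr : r ∉ P.asIdeal := by
      intro hr
      apply hm
      rw [Ideal.Quotient.eq_zero_iff_mem.2 hr]
      simp
    refine ⟨Localization.mk (u * s) (⟨r, hr⟩ * t), ?_⟩
    rw [LinearMap.toSpanSingleton_apply, LocalizedModule.mk_smul_mk, LocalizedModule.mk_eq]
    refine ⟨1, ?_⟩
    simp only [one_smul, Submonoid.smul_def, Submonoid.coe_mul, ← Ideal.Quotient.mk_eq_mk,
      ← Submodule.Quotient.mk_smul, smul_eq_mul]
    congr 1
    ring

/-- kernel of multiplication -/
abbrev kerx (x : R) (L : Type) [AddCommGroup L] [Module R L] : Submodule R L :=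
  LinearMap.ker (LinearMap.lsmul R L x)

/-- induced map on kernels -/
def kerMap (x : R) (f : A →ₗ[R] B) : kerx x A →ₗ[R] kerx x B :=
  f.restrict (fun a ha => by
    have ha' : x • a = 0 := ha
    change x • f a = 0
    rw [← map_smul, ha', map_zero])

lemma kerMap_coe (x : R) (f : A →ₗ[R] B) (a) : (kerMap x f a : B) = f a := rfl

lemma quot_exact (x : R) : Function.Exact (LinearMap.lsmul R A x) (Submodule.mkQ (x • ⊤ : Submodule R A)) := by
  intro y
  simp only [Submodule.mkQ_apply, Submodule.Quotient.mk_eq_zero]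
  constructor
  · rintro ⟨a, -, rfl⟩
    exact ⟨a, rfl⟩
  · rintro ⟨a, rfl⟩
    exact ⟨a, trivial, rfl⟩

lemma chi_add (P : PrimeSpectrum R) (x : R) (f : A →ₗ[R] B) (g : B →ₗ[R] C)
    (hf : Function.Injective f) (hg : Function.Surjective g) (h : Function.Exact f g) :
    lam P (QuotSMulTop x B) + (lam P (kerx x A) + lam P (kerx x C)) =
      lam P (QuotSMulTop x A) + lam P (QuotSMulTop x C) + lam P (kerx x B) ∧
    lam P (kerx x B) ≤ lam P (kerx x A) + lam P (kerx x C) := by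
  have h₁ : f.comp (LinearMap.lsmul R A x) = (LinearMap.lsmul R B x).comp f := by
    ext a; simp
  have h₂ : g.comp (LinearMap.lsmul R B x) = (LinearMap.lsmul R C x).comp g := by
    ext a; simp
  have eK : ∀ (L : Type) [AddCommGroup L] [Module R L],
      Function.Exact (kerx x L).subtype (LinearMap.lsmul R L x) := by
    intro L _ _
    rw [LinearMap.exact_iff]
    simp
  set δ := SnakeLemma.δ' (LinearMap.lsmul R A x) (LinearMap.lsmul R B x) (LinearMap.lsmul R C x)
    f g h f g h h₁ h₂ (kerx x C).subtype (eK C) (Submodule.mkQ (x • ⊤ : Submodule R A)) (quot_exact x) hg hf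
    with hδ
  have e3 : Function.Exact (kerMap x g) δ :=
    SnakeLemma.exact_δ'_right _ _ _ _ _ _ _ _ _ _ _ (kerx x B).subtype (eK B) _ _ _ _ _ _ _
      (by ext a; rfl) (Submodule.subtype_injective _)
  have e4 : Function.Exact δ (QuotSMulTop.map x f) :=
    SnakeLemma.exact_δ'_left _ _ _ _ _ _ _ _ _ _ _ _ _ _ _ (Submodule.mkQ (x • ⊤ : Submodule R B)) (quot_exact x) _ _ _
      (by ext a; rfl) (Submodule.mkQ_surjective _)
  have e2 : Function.Exact (kerMap x f) (kerMap x g) := by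
    rintro ⟨b, hb⟩
    constructor
    · intro hb'
      have hb0 : g b = 0 := congrArg Subtype.val hb'
      obtain ⟨a, rfl⟩ := (h b).1 hb0
      have hb2 : x • f a = 0 := hb
      refine ⟨⟨a, ?_⟩, rfl⟩
      change x • a = 0
      apply hf
      rw [map_smul, hb2, map_zero]
    · rintro ⟨a, ha⟩
      rw [← ha]
      exact Subtype.ext (h.apply_apply_eq_zero a.1)
  have e5 : Function.Exact (QuotSMulTop.map x f) (QuotSMulTop.map x g) :=
    QuotSMulTop.map_exact x h hg
  have i1 : Function.Injective (kerMap x f) := by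
    intro a b hab
    exact Subtype.ext (hf (congrArg Subtype.val hab))
  have s6 : Function.Surjective (QuotSMulTop.map x g) := QuotSMulTop.map_surjective x hg
  have q1 := lam_range_inj P _ i1
  have q2 := lam_range_add P _ _ e2
  have q3 := lam_range_add P _ _ e3
  have q4 := lam_range_add P _ _ e4
  have q5 := lam_range_add P _ _ e5
  have q6 := lam_range_surj P _ s6
  constructor
  · rw [q5, q4, q3, q2, q6, q1]
    ring
  · rw [q2, q3, q1, ← add_assoc]
    exact le_self_add

lemma prime_min [IsNoetherianRing R] (Z : Set (PrimeSpectrum R)) (hZ : ∀ q r : PrimeSpectrum R, q ≤ r → q ∈ Z → r ∈ Z)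
    (x : R) (p : PrimeSpectrum R) (hxp : x ∈ p.asIdeal)
    (hp : ∀ q ∈ Z, x ∈ q.asIdeal → q ≤ p → q = p) (q : PrimeSpectrum R) (hqp : q ≤ p)
    (hxq : x ∉ q.asIdeal) : ∀ r ∈ Z, r ≤ q → r = q := by
  intro r hr hrq
  have hlt : q.asIdeal < p.asIdeal := lt_of_le_of_ne hqp (fun h => hxq (h ▸ hxp))
  have := Ideal.mem_minimalPrimes_span_of_mem_minimalPrimes_span_insert (q := q.asIdeal) (p := p.asIdeal) hlt x
    (r.asIdeal : Set R) ⟨⟨p.2, ?_⟩, ?_⟩ (r.asIdeal : Set R) hrq ?_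
  · rw [Ideal.span_eq] at this
    exact le_antisymm hrq (this.2 ⟨r.2, le_rfl⟩ hrq)
  · rw [Ideal.span_le, Set.insert_subset_iff]
    exact ⟨hxp, fun y hy => hqp (hrq hy)⟩
  · rintro I ⟨hI, hI2⟩ hIp
    rw [Ideal.span_le, Set.insert_subset_iff] at hI2
    have := hp ⟨I, hI⟩ (hZ r ⟨I, hI⟩ hI2.2 hr) hI2.1 hIp
    rw [← this]
  · intro y hy
    exact Ideal.le_radical (Ideal.subset_span (Set.mem_insert_of_mem _ hy))

lemma quot_supp (q Q : PrimeSpectrum R) : Q ∈ Module.support R (R ⧸ q.asIdeal) ↔ q ≤ Q := by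
  rw [Module.support_of_algebra]
  simp

lemma formula [IsNoetherianRing R] (Z : Set (PrimeSpectrum R))
    (hZ : ∀ q r : PrimeSpectrum R, q ≤ r → q ∈ Z → r ∈ Z)
    (x : R) (p : PrimeSpectrum R) (hxp : x ∈ p.asIdeal)
    (hp : ∀ q ∈ Z, x ∈ q.asIdeal → q ≤ p → q = p) (S : Finset (PrimeSpectrum R))
    (hS : ∀ Q, Q ∈ S ↔ (Q ∈ Z ∧ ∀ r ∈ Z, r ≤ Q → r = Q) ∧ Q ≤ p ∧ x ∉ Q.asIdeal)
    (L : Type) [AddCommGroup L] [Module R L] [hL : Module.Finite R L] :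
    Module.support R L ⊆ Z →
    lam p (kerx x L) < ⊤ ∧
      lam p (QuotSMulTop x L) = lam p (kerx x L) + ∑ Q ∈ S, lam Q L * lam p (QuotSMulTop x (R ⧸ Q.asIdeal)) := by
  induction hL using IsNoetherianRing.induction_on_isQuotientEquivQuotientPrime R with
  | subsingleton L =>
    intro _
    have : Subsingleton (QuotSMulTop x L) := (Submodule.mkQ_surjective _).subsingleton
    simp [lam_sub]
  | quotient L q e =>
    intro hsupp
    have hle := LinearEquiv.support_eq e
    have hqZ : q ∈ Z := hsupp (by rw [hle, quot_supp])
    have hlam : ∀ Q, ¬ q ≤ Q → lam Q L = 0 := by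
      intro Q hQ
      exact lam_eq_zero Q (by rwa [hle, quot_supp])
    have hlamq : lam q L = 1 := by rw [lam_congr q e, lam_self]
    by_cases hqp : q ≤ p
    · by_cases hxq : x ∈ q.asIdeal
      · have hz : LinearMap.lsmul R L x = 0 := by
          ext l
          apply e.injective
          obtain ⟨r, hr⟩ := Ideal.Quotient.mk_surjective (e l)
          simp only [LinearMap.lsmul_apply, LinearMap.zero_apply, map_zero, map_smul]
          rw [← hr, ← Ideal.Quotient.mk_eq_mk, ← Submodule.Quotient.mk_smul, Submodule.Quotient.mk_eq_zero]
          exact Ideal.mul_mem_right _ _ hxq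
        have h1 := lam_ker_range p (LinearMap.lsmul R L x)
        have h2 := lam_range_add p _ _ (quot_exact (A := L) x)
        have h3 : lam p (LinearMap.range (LinearMap.lsmul R L x)) = 0 := by
          rw [hz, LinearMap.range_zero, lam_sub]
        rw [lam_range_surj p _ (Submodule.mkQ_surjective _), h3, zero_add] at h2
        rw [h3, add_zero] at h1
        have hqp' := hp q hqZ hxq hqp
        subst hqp'
        refine ⟨by rw [← h1, hlamq]; exact ENat.one_lt_top, ?_⟩
        have h4 : ∑ Q ∈ S, lam Q L * lam q (QuotSMulTop x (R ⧸ Q.asIdeal)) = 0 := by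
          refine Finset.sum_eq_zero (fun Q hQ => ?_)
          rw [hlam Q (fun h => ((hS Q).1 hQ).2.2 (h hxq)), zero_mul]
        rw [h4, add_zero, ← h1]
        exact h2.symm
      · have hmin := prime_min Z hZ x p hxp hp q hqp hxq
        have hqS : q ∈ S := (hS q).2 ⟨⟨hqZ, hmin⟩, hqp, hxq⟩
        have hk : Subsingleton (kerx x L) := by
          rw [Submodule.subsingleton_iff_eq_bot, LinearMap.ker_eq_bot']
          intro l hl
          apply e.injective
          have h0 : x • e l = 0 := by rw [← map_smul, show x • l = 0 from hl, map_zero]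
          obtain ⟨r, hr⟩ := Ideal.Quotient.mk_surjective (e l)
          rw [← hr, ← Ideal.Quotient.mk_eq_mk, ← Submodule.Quotient.mk_smul, Submodule.Quotient.mk_eq_zero] at h0
          rw [← hr, map_zero, Ideal.Quotient.eq_zero_iff_mem]
          exact (q.2.mem_or_mem h0).resolve_left hxq
        refine ⟨by rw [lam_sub]; exact ENat.top_pos, ?_⟩
        rw [lam_sub (A := kerx x L), zero_add, Finset.sum_eq_single q, hlamq, one_mul]
        · exact lam_congr p (QuotSMulTop.congr x e)
        · intro Q hQ hne
          rw [hlam Q (fun h => hne (((hS Q).1 hQ).1.2 q hqZ h).symm), zero_mul]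
        · exact fun h => absurd hqS h
    · have h0 := hlam p hqp
      have h1 : lam p (kerx x L) = 0 := le_antisymm
        ((lam_le_inj p (kerx x L).subtype (Submodule.subtype_injective _)).trans h0.le) (zero_le)
      have h2 : lam p (QuotSMulTop x L) = 0 := le_antisymm
        ((lam_le_surj p _ (Submodule.mkQ_surjective _)).trans h0.le) (zero_le)
      refine ⟨by rw [h1]; exact ENat.top_pos, ?_⟩
      rw [h1, h2, zero_add, eq_comm]
      refine Finset.sum_eq_zero (fun Q hQ => ?_)
      rw [hlam Q (fun h => hqp (h.trans ((hS Q).1 hQ).2.1)), zero_mul]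
  | exact L₁ L₂ L₃ f g hf hg h ih₁ ih₃ =>
    intro hsupp
    obtain ⟨b1, c1⟩ := ih₁ ((Module.support_subset_of_injective f hf).trans hsupp)
    obtain ⟨b3, c3⟩ := ih₃ ((Module.support_subset_of_surjective g hg).trans hsupp)
    obtain ⟨e1, e2⟩ := chi_add p x f g hf hg h
    have hfin : lam p (kerx x L₁) + lam p (kerx x L₃) < ⊤ := by
      exact ENat.add_lt_top.2 ⟨b1, b3⟩
    refine ⟨e2.trans_lt hfin, ?_⟩
    have hs : ∑ Q ∈ S, lam Q L₂ * lam p (QuotSMulTop x (R ⧸ Q.asIdeal)) =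
        ∑ Q ∈ S, lam Q L₁ * lam p (QuotSMulTop x (R ⧸ Q.asIdeal)) +
        ∑ Q ∈ S, lam Q L₃ * lam p (QuotSMulTop x (R ⧸ Q.asIdeal)) := by
      rw [← Finset.sum_add_distrib]
      refine Finset.sum_congr rfl (fun Q _ => ?_)
      rw [lam_add Q f g hf hg h, add_mul]
    refine ENat.add_left_injective_of_ne_top hfin.ne (e1.trans ?_)
    rw [c1, c3, hs]
    ring

/-- comparison of supports and of lengths at minimal primes -/
def HH (N M : Type) [AddCommGroup N] [Module R N] [AddCommGroup M] [Module R M] : Prop :=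
  Module.support R M ⊆ Module.support R N ∧
    ∀ P ∈ Module.support R N, (∀ Q ∈ Module.support R N, Q ≤ P → Q = P) → lam P N ≤ lam P M

lemma HH_step [IsNoetherianRing R] {N M : Type} [AddCommGroup N] [Module R N] [AddCommGroup M] [Module R M]
    [Module.Finite R N] [Module.Finite R M] (x : R) (hx : IsSMulRegular N x)
    (h : HH (R := R) N M) : HH (R := R) (QuotSMulTop x N) (QuotSMulTop x M) := by
  obtain ⟨hs, hl⟩ := h
  refine ⟨?_, ?_⟩
  · rw [Module.support_quotSMulTop, Module.support_quotSMulTop]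
    exact Set.inter_subset_inter_left _ hs
  · intro p hp hmin
    rw [Module.support_quotSMulTop] at hp hmin
    have hmem : ∀ q : PrimeSpectrum R, q ∈ PrimeSpectrum.zeroLocus {x} ↔ x ∈ q.asIdeal := by
      intro q; simp [PrimeSpectrum.mem_zeroLocus]
    have hZ : ∀ q r : PrimeSpectrum R, q ≤ r → q ∈ Module.support R N → r ∈ Module.support R N :=
      fun q r => Module.mem_support_mono
    have hfin : {Q : PrimeSpectrum R | (Q ∈ Module.support R N ∧ ∀ r ∈ Module.support R N, r ≤ Q → r = Q) ∧ Q ≤ p ∧ x ∉ Q.asIdeal}.Finite := by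
      have := Ideal.finite_minimalPrimes_of_isNoetherianRing R (Module.annihilator R N)
      refine (this.preimage (f := PrimeSpectrum.asIdeal) (fun a _ b _ hab => PrimeSpectrum.ext hab)).subset ?_
      rintro Q ⟨⟨hQ, hQ2⟩, -⟩
      rw [Module.support_eq_zeroLocus] at hQ hQ2
      refine ⟨⟨Q.2, hQ⟩, ?_⟩
      rintro I ⟨hI, hI2⟩ hIQ
      rw [← hQ2 ⟨I, hI⟩ hI2 hIQ]
    have hF := formula (Module.support R N) hZ x p ((hmem p).1 hp.2)
      (fun q hq hxq hqp => hmin q ⟨hq, (hmem q).2 hxq⟩ hqp) hfin.toFinset (by simp)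
    obtain ⟨-, hN⟩ := hF N subset_rfl
    obtain ⟨-, hM⟩ := hF M hs
    have : Subsingleton (kerx x N) := by
      rw [Submodule.subsingleton_iff_eq_bot, LinearMap.ker_eq_bot]
      exact hx
    rw [hN, hM, lam_sub (A := kerx x N), zero_add]
    refine le_add_left (Finset.sum_le_sum (fun Q hQ => ?_))
    rw [Set.Finite.mem_toFinset] at hQ
    gcongr
    exact hl Q hQ.1.1 hQ.1.2
end



section
open scoped Pointwise
variable {R : Type} [CommRing R] [IsNoetherianRing R] [IsLocalRing R]

lemma length_lam (L : Type) [AddCommGroup L] [Module R L] [hL : Module.Finite R L] :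
    (∀ Q ∈ Module.support R L, Q = closedPoint R) →
    Module.length R L < ⊤ ∧ Module.length R L = lam (closedPoint R) L := by
  induction hL using IsNoetherianRing.induction_on_isQuotientEquivQuotientPrime R with
  | subsingleton L =>
    intro _
    simp [lam_sub]
  | quotient L q e =>
    intro hs
    have hq := hs q (by rw [LinearEquiv.support_eq e, quot_supp])
    subst hq
    rw [lam_congr _ e, lam_self, LinearEquiv.length_eq e]
    have : IsSimpleModule R (R ⧸ (closedPoint R).asIdeal) := by
      rw [isSimpleModule_iff_isCoatom]
      exact (maximalIdeal.isMaximal R).out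
    rw [Module.length_eq_one]
    exact ⟨ENat.one_lt_top, rfl⟩
  | exact L₁ L₂ L₃ f g hf hg h ih₁ ih₃ =>
    intro hs
    obtain ⟨b1, c1⟩ := ih₁ (fun Q hQ => hs Q (Module.support_subset_of_injective f hf hQ))
    obtain ⟨b3, c3⟩ := ih₃ (fun Q hQ => hs Q (Module.support_subset_of_surjective g hg hQ))
    rw [Module.length_eq_add_of_exact f g hf hg h, lam_add _ f g hf hg h, c1, c3]
    rw [c1] at b1
    rw [c3] at b3
    exact ⟨ENat.add_lt_top.2 ⟨b1, b3⟩, rfl⟩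

/-- induction invariant -/
structure IndInv (Ω : Type) [AddCommGroup Ω] [Module R Ω] (n j : ℕ)
    (N M : Type) [AddCommGroup N] [Module R N] [AddCommGroup M] [Module R M] : Prop where
  nt : Nontrivial N
  finN : Module.Finite R N
  finM : Module.Finite R M
  hh : HH (R := R) N M
  van : ∀ i, j < i → Subsingleton (E R N Ω i)
  eqv : Nonempty (E R N Ω j ≃ₗ[R] M)
  dep : ∀ i < n - j, Subsingleton (E R (ResidueField R) N i)
  dim : Module.supportDim R N + (j : WithBot ℕ∞) = n

lemma IndInv_step (Ω : Type) [AddCommGroup Ω] [Module R Ω] (n j : ℕ) (hj : j < n)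
    (N M : Type) [AddCommGroup N] [Module R N] [AddCommGroup M] [Module R M]
    (h : IndInv (R := R) Ω n j N M) :
    ∃ x : R, IndInv (R := R) Ω n (j + 1) (QuotSMulTop x N) (QuotSMulTop x M) := by
  obtain ⟨nt, finN, finM, hh, van, ⟨e⟩, dep, dim⟩ := h
  have h0 := dep 0 (by omega)
  have : Subsingleton (ResidueField R →ₗ[R] N) := (E_hom_equiv (R := R)).symm.toEquiv.subsingleton
  obtain ⟨x, hxa, hx⟩ := IsSMulRegular.subsingleton_linearMap_iff.1 this
  have hxm : x ∈ maximalIdeal R := by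
    have := Module.mem_annihilator.1 hxa (1 : ResidueField R)
    rw [Algebra.smul_def, mul_one] at this
    exact (residue_eq_zero_iff x).1 this
  refine ⟨x, ?_, inferInstance, inferInstance, HH_step x hx hh, E_quot_vanish x hx j van,
    E_quot_equiv x hx j van e, ?_, ?_⟩
  · rw [Submodule.Quotient.nontrivial_iff]
    exact (Submodule.top_ne_pointwise_smul_of_mem_jacobson_annihilator
      (IsLocalRing.maximalIdeal_le_jacobson _ hxm)).symm
  · exact E_cov_vanish x hx _ (fun i hi => dep i (by omega))
  · rw [← dim, ← Module.supportDim_quotSMulTop_succ_eq_supportDim hx hxm]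
    push_cast
    rw [add_assoc, add_comm (1 : WithBot ℕ∞)]

lemma IndInv_end (Ω : Type) [AddCommGroup Ω] [Module R Ω] (n : ℕ)
    (N M : Type) [AddCommGroup N] [Module R N] [AddCommGroup M] [Module R M]
    (h : IndInv (R := R) Ω n n N M)
    (hk : Module.length R (E R (ResidueField R) Ω n) ≤ 1) :
    ∀ i, n < i → Subsingleton (E R (ResidueField R) Ω i) := by
  obtain ⟨nt, finN, finM, hh, van, ⟨e⟩, dep, dim⟩ := h
  have hd : Module.supportDim R N = 0 := by
    have h1 : Module.supportDim R N + (n : WithBot ℕ∞) = 0 + n := by rw [dim, zero_add]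
    have h2 : Module.supportDim R N ≠ ⊥ := (Module.supportDim_ne_bot_iff_nontrivial R N).2 nt
    obtain ⟨d, hd⟩ := WithBot.ne_bot_iff_exists.1 h2
    rw [← hd] at h1 ⊢
    have h3 : d + (n : ℕ∞) = 0 + n := by exact_mod_cast h1
    have := ENat.add_left_injective_of_ne_top (ENat.natCast_ne_top n) h3
    rw [this]; rfl
  have hs := support_of_supportDim_eq_zero R N hd
  rw [PrimeSpectrum.zeroLocus_eq_singleton] at hs
  have hsN : ∀ Q ∈ Module.support R N, Q = closedPoint R := by
    intro Q hQ
    rw [hs] at hQ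
    exact hQ
  obtain ⟨f1, l1⟩ := length_lam N hsN
  obtain ⟨f2, l2⟩ := length_lam M (fun Q hQ => hsN Q (hh.1 hQ))
  refine final_step n hk (N := N) (Module.length_ne_top_iff.1 f1.ne) van ?_
  rw [LinearEquiv.length_eq e, l1, l2]
  refine hh.2 _ ?_ (fun Q hQ _ => hsN Q hQ)
  rw [hs]; rfl

lemma IndInv_all (Ω : Type) [AddCommGroup Ω] [Module R Ω] (n : ℕ)
    (hk : Module.length R (E R (ResidueField R) Ω n) ≤ 1) (d : ℕ) :
    ∀ (j : ℕ) (N M : Type) [AddCommGroup N] [Module R N] [AddCommGroup M] [Module R M],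
      j + d = n → IndInv (R := R) Ω n j N M →
      ∀ i, n < i → Subsingleton (E R (ResidueField R) Ω i) := by
  induction d with
  | zero =>
    intro j N M _ _ _ _ hj h
    obtain rfl : j = n := by omega
    exact IndInv_end Ω _ N M h hk
  | succ d ih =>
    intro j N M _ _ _ _ hj h
    obtain ⟨x, hx⟩ := IndInv_step Ω n j (by omega) N M h
    exact ih (j + 1) _ _ (by omega) hx
end


/-- Let `(R, m)` be local CM of dimension `n` with residue field `k`. If a finite module `Ω`
satisfies `Ext^i(k, Ω) = 0` for `i < n`, `Ext^n(k, Ω) ≅ k` and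
`length_{R_P}(Ω_P) ≥ length_{R_P}(R_P)` at all minimal primes, then `Ω` is dualizing, i.e.
`Ext^i(k, Ω) = 0` for all `i ≠ n`. -/
theorem dualizing_of_partial_ext (R : Type) [CommRing R] [IsNoetherianRing R] [IsLocalRing R]
    (n : ℕ) (hdim : ringKrullDim R = n)
    (hCM : ∀ i : ℕ, i < n → Subsingleton (extM R (ResidueField R) R i))
    (Ω : Type) [AddCommGroup Ω] [Module R Ω] [Module.Finite R Ω]
    (hlow : ∀ i : ℕ, i < n → Subsingleton (extM R (ResidueField R) Ω i))
    (htop : Nonempty ((extM R (ResidueField R) Ω n) ≃ₗ[R] ResidueField R))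
    (hmin : ∀ P : PrimeSpectrum R, P.asIdeal ∈ minimalPrimes R →
      locLen R R P ≤ locLen R Ω P) :
    ∀ i : ℕ, i ≠ n → Subsingleton (extM R (ResidueField R) Ω i) := by
  intro i hi
  rcases lt_or_gt_of_ne hi with hlt | hgt
  · exact hlow i hlt
  obtain ⟨e⟩ := htop
  have hk : Module.length R (E R (ResidueField R) Ω n) ≤ 1 := by
    rw [← LinearEquiv.length_eq (extMEquiv R (ResidueField R) Ω n), LinearEquiv.length_eq e]
    have : IsSimpleModule R (ResidueField R) := by
      change IsSimpleModule R (R ⧸ maximalIdeal R)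
      rw [isSimpleModule_iff_isCoatom]
      exact (maximalIdeal.isMaximal R).out
    rw [Module.length_eq_one]
  have hsR : Module.support R R = Set.univ := by
    rw [Module.support_of_algebra]
    ext Q
    simp only [Set.mem_univ, iff_true, PrimeSpectrum.mem_zeroLocus]
    intro y hy
    have hy0 : y = 0 := hy
    rw [hy0]
    exact Q.asIdeal.zero_mem
  have hInv : IndInv (R := R) Ω n 0 R Ω := by
    refine ⟨inferInstance, inferInstance, inferInstance, ⟨?_, ?_⟩, fun i hi => E_self_vanish i hi,
      ⟨E_self_equiv⟩, ?_, ?_⟩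
    · rw [hsR]; exact Set.subset_univ _
    · intro P _ hP
      have h1 := hmin P ⟨⟨P.2, bot_le⟩, by
        rintro I ⟨hI, _⟩ hIP
        rw [← hP ⟨I, hI⟩ (by rw [hsR]; trivial) hIP]⟩
      unfold locLen mlen at h1
      rw [← Module.coe_length, ← Module.coe_length] at h1
      exact WithBot.coe_le_coe.1 h1
    · intro i hi
      have := hCM i (by omega)
      exact (extMEquiv R (ResidueField R) R i).symm.toEquiv.subsingleton
    · rw [Module.supportDim_self_eq_ringKrullDim, hdim]
      simp
  have := IndInv_all Ω n hk n 0 R Ω (by omega) hInv i hgt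
  exact (extMEquiv R (ResidueField R) Ω i).toEquiv.subsingleton
end

section
/- Let (R, m) be a Noetherian local ring of dimension 1, and let M, N be finite R-modules of dimension 1 with N Cohen–Macaulay (i.e., torsion free) and length_{R_P}(M_P) ≥ length_{R_P}(N_P) for every minimal prime P of dimension-1 support. Then for any non-zerodivisor x ∈ m (on R and N), length(M/xM) ≥ length(N/xN), with equality if and only if M is torsion free and length_{R_P}(M_P) = length_{R_P}(N_P) for all 1-dimensional primes P. -/
open CategoryTheory IsLocalRing

namespace LC

lemma enat_cancel {a b c : ℕ∞} (h0 : c ≠ 0) (ht : c ≠ ⊤) (h : a * c = b * c) : a = b := by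
  lift c to ℕ using ht
  induction a using ENat.recTopCoe with
  | top =>
    induction b using ENat.recTopCoe with
    | top => rfl
    | coe b =>
      rw [ENat.top_mul h0] at h
      exact absurd h.symm (ENat.natCast_ne_top (b * c))
  | coe a =>
    induction b using ENat.recTopCoe with
    | top =>
      rw [ENat.top_mul h0] at h
      exact absurd h (ENat.natCast_ne_top (a * c))
    | coe b =>
      norm_cast at h h0 ⊢
      exact Nat.eq_of_mul_eq_mul_right (Nat.pos_of_ne_zero h0) h

lemma length_ker_range {R A B : Type} [CommRing R] [AddCommGroup A] [Module R A]
    [AddCommGroup B] [Module R B] (f : A →ₗ[R] B) :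
    Module.length R A = Module.length R (LinearMap.ker f) + Module.length R (LinearMap.range f) :=
  Module.length_eq_add_of_exact (LinearMap.ker f).subtype f.rangeRestrict
    (Submodule.subtype_injective _) f.surjective_rangeRestrict (by
      intro y
      simp [← LinearMap.mem_ker])

lemma six_term {R A B C D E F : Type} [CommRing R] [AddCommGroup A] [Module R A]
    [AddCommGroup B] [Module R B] [AddCommGroup C] [Module R C] [AddCommGroup D] [Module R D]
    [AddCommGroup E] [Module R E] [AddCommGroup F] [Module R F]
    (f₁ : A →ₗ[R] B) (f₂ : B →ₗ[R] C) (f₃ : C →ₗ[R] D) (f₄ : D →ₗ[R] E) (f₅ : E →ₗ[R] F)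
    (h₁ : Function.Injective f₁) (h₁₂ : Function.Exact f₁ f₂) (h₂₃ : Function.Exact f₂ f₃)
    (h₃₄ : Function.Exact f₃ f₄) (h₄₅ : Function.Exact f₄ f₅) (h₅ : Function.Surjective f₅) :
    Module.length R A + Module.length R C + Module.length R E =
      Module.length R B + Module.length R D + Module.length R F ∧
    Module.length R E ≤ Module.length R D + Module.length R F := by
  have e1 := length_ker_range f₂
  have e2 := length_ker_range f₃
  have e3 := length_ker_range f₄
  have e4 := length_ker_range f₅
  rw [LinearMap.exact_iff.mp h₁₂, ← (LinearEquiv.ofInjective f₁ h₁).length_eq] at e1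
  rw [LinearMap.exact_iff.mp h₂₃] at e2
  rw [LinearMap.exact_iff.mp h₃₄] at e3
  rw [LinearMap.exact_iff.mp h₄₅, LinearMap.range_eq_top.mpr h₅, Module.length_top] at e4
  constructor
  · rw [e1, e2, e3, e4]; ring
  · rw [e3, e4, add_assoc]; exact le_add_self

/-- multiplication by `x` -/
abbrev mulx {R : Type} [CommRing R] (x : R) (M : Type) [AddCommGroup M] [Module R M] :
    M →ₗ[R] M := LinearMap.lsmul R M x

/-- length of kernel of mult by `x` -/
noncomputable def lk {R : Type} [CommRing R] (x : R) (M : Type) [AddCommGroup M] [Module R M] : ℕ∞ :=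
  Module.length R (LinearMap.ker (mulx x M))

/-- length of cokernel of mult by `x` -/
noncomputable def lc {R : Type} [CommRing R] (x : R) (M : Type) [AddCommGroup M] [Module R M] : ℕ∞ :=
  Module.length R (M ⧸ LinearMap.range (mulx x M))

/-- local length -/
noncomputable def ll {R : Type} [CommRing R] (M : Type) [AddCommGroup M] [Module R M]
    (P : PrimeSpectrum R) : ℕ∞ :=
  Module.length (Localization.AtPrime P.asIdeal) (LocalizedModule P.asIdeal.primeCompl M)

lemma snake {R A B C : Type} [CommRing R] (x : R) [AddCommGroup A] [Module R A]
    [AddCommGroup B] [Module R B] [AddCommGroup C] [Module R C]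
    (f : A →ₗ[R] B) (g : B →ₗ[R] C) (hf : Function.Injective f) (hg : Function.Surjective g)
    (H : Function.Exact f g) :
    lk x A + lk x C + lc x B = lk x B + lc x A + lc x C ∧ lc x B ≤ lc x A + lc x C := by
  have hfx : ∀ a, f (x • a) = x • f a := fun a => map_smul f x a
  have hgx : ∀ a, g (x • a) = x • g a := fun a => map_smul g x a
  let F₁ : LinearMap.ker (mulx x A) →ₗ[R] LinearMap.ker (mulx x B) :=
    f.restrict (fun a ha => by
      have ha' : x • a = 0 := ha
      change x • f a = 0
      rw [← hfx, ha', map_zero])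
  let F₂ : LinearMap.ker (mulx x B) →ₗ[R] LinearMap.ker (mulx x C) :=
    g.restrict (fun a ha => by
      have ha' : x • a = 0 := ha
      change x • g a = 0
      rw [← hgx, ha', map_zero])
  let G₁ : (A ⧸ LinearMap.range (mulx x A)) →ₗ[R] (B ⧸ LinearMap.range (mulx x B)) :=
    Submodule.mapQ _ _ f (by
      rintro _ ⟨a, rfl⟩
      exact ⟨f a, (hfx a).symm⟩)
  let G₂ : (B ⧸ LinearMap.range (mulx x B)) →ₗ[R] (C ⧸ LinearMap.range (mulx x C)) :=
    Submodule.mapQ _ _ g (by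
      rintro _ ⟨a, rfl⟩
      exact ⟨g a, (hgx a).symm⟩)
  have c1 : f.comp (mulx x A) = (mulx x B).comp f := by ext a; simp
  have c2 : g.comp (mulx x B) = (mulx x C).comp g := by ext a; simp
  have k3 := LinearMap.exact_subtype_ker_map (mulx x C)
  have k2 := LinearMap.exact_subtype_ker_map (mulx x B)
  have p1 := LinearMap.exact_map_mkQ_range (mulx x A)
  have p2 := LinearMap.exact_map_mkQ_range (mulx x B)
  refine six_term F₁ F₂
    (SnakeLemma.δ' (mulx x A) (mulx x B) (mulx x C) f g H f g H c1 c2 _ k3 _ p1 hg hf) G₁ G₂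
    ?_ ?_ ?_ ?_ ?_ ?_
  · intro a b h
    apply Subtype.ext
    apply hf
    exact congrArg Subtype.val h
  · rintro ⟨b, hb⟩
    constructor
    · intro h
      have h' : g b = 0 := congrArg Subtype.val h
      obtain ⟨a, rfl⟩ := (H b).mp h'
      refine ⟨⟨a, ?_⟩, rfl⟩
      have hb' : x • f a = 0 := hb
      change x • a = 0
      apply hf
      rw [hfx, hb', map_zero]
    · rintro ⟨⟨a, ha⟩, h⟩
      have h' : f a = b := congrArg Subtype.val h
      apply Subtype.ext
      change g b = 0
      exact (H b).mpr ⟨a, h'⟩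
  · exact SnakeLemma.exact_δ'_right _ _ _ _ _ _ _ _ _ _ _ _ k2 _ _ _ _ hg hf F₂ rfl
      (Submodule.subtype_injective _)
  · exact SnakeLemma.exact_δ'_left _ _ _ _ _ _ _ _ _ _ _ _ _ _ _ _ p2 hg hf G₁ rfl
      (Submodule.mkQ_surjective _)
  · intro y
    obtain ⟨b, rfl⟩ := Submodule.mkQ_surjective _ y
    constructor
    · intro h
      have h' : g b ∈ LinearMap.range (mulx x C) := (Submodule.Quotient.mk_eq_zero _).mp h
      obtain ⟨c, hc⟩ := h'
      obtain ⟨b', rfl⟩ := hg c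
      have hc' : x • g b' = g b := hc
      obtain ⟨a, ha⟩ := (H (b - x • b')).mp (by rw [map_sub, hgx, hc', sub_self])
      refine ⟨Submodule.Quotient.mk a, ?_⟩
      change Submodule.Quotient.mk (f a) = Submodule.Quotient.mk b
      rw [Submodule.Quotient.eq, ha]
      exact ⟨-b', by simp⟩
    · rintro ⟨a, ha⟩
      obtain ⟨a, rfl⟩ := Submodule.mkQ_surjective _ a
      rw [← ha]
      change Submodule.Quotient.mk (g (f a)) = _
      rw [H.apply_apply_eq_zero, Submodule.Quotient.mk_zero]
  · intro y
    obtain ⟨c, rfl⟩ := Submodule.mkQ_surjective _ y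
    obtain ⟨b, rfl⟩ := hg c
    exact ⟨Submodule.Quotient.mk b, rfl⟩

lemma ll_exact {R A B C : Type} [CommRing R] [AddCommGroup A] [Module R A]
    [AddCommGroup B] [Module R B] [AddCommGroup C] [Module R C]
    (f : A →ₗ[R] B) (g : B →ₗ[R] C) (hf : Function.Injective f) (hg : Function.Surjective g)
    (H : Function.Exact f g) (P : PrimeSpectrum R) : ll B P = ll A P + ll C P :=
  Module.length_eq_add_of_exact (LocalizedModule.map P.asIdeal.primeCompl f)
    (LocalizedModule.map P.asIdeal.primeCompl g)
    (LocalizedModule.map_injective _ _ hf) (LocalizedModule.map_surjective _ _ hg)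
    (LocalizedModule.map_exact _ f g H)

lemma inv_of_equiv {R A B : Type} [CommRing R] (x : R) [AddCommGroup A] [Module R A]
    [AddCommGroup B] [Module R B] (e : A ≃ₗ[R] B) :
    lk x A = lk x B ∧ lc x A = lc x B ∧ ∀ P : PrimeSpectrum R, ll A P = ll B P := by
  refine ⟨?_, ?_, ?_⟩
  · refine (e.ofSubmodules _ _ ?_).length_eq
    ext b
    simp only [Submodule.mem_map, LinearMap.mem_ker, LinearMap.lsmul_apply]
    constructor
    · rintro ⟨a, ha, rfl⟩
      change x • e a = 0
      rw [← map_smul, ha, map_zero]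
    · intro h
      exact ⟨e.symm b, by rw [← map_smul, h, map_zero], by simp⟩
  · refine (Submodule.Quotient.equiv _ _ e ?_).length_eq
    ext b
    constructor
    · rintro ⟨_, ⟨a, rfl⟩, rfl⟩
      exact ⟨e a, by simp⟩
    · rintro ⟨a, rfl⟩
      exact ⟨x • e.symm a, ⟨e.symm a, rfl⟩, by simp⟩
  · intro P
    have := ll_exact (C := PUnit) e.toLinearMap 0 e.injective
      (Function.surjective_to_subsingleton _)
      ((e.toLinearMap.exact_zero_iff_surjective _).2 e.surjective) P
    have h0 : ll (R := R) PUnit P = 0 := by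
      unfold ll
      exact Module.length_eq_zero
    rw [this, h0, add_zero]

lemma ll_quot_self {R : Type} [CommRing R] (P : PrimeSpectrum R) : ll (R ⧸ P.asIdeal) P = 1 := by
  unfold ll
  rw [Module.length_eq_one_iff, isSimpleModule_iff_toSpanSingleton_surjective]
  constructor
  · rw [← not_subsingleton_iff_nontrivial, LocalizedModule.subsingleton_iff]
    intro h
    obtain ⟨r, hr, h⟩ := h 1
    apply hr
    change r ∈ P.asIdeal
    rw [← Ideal.Quotient.eq_zero_iff_mem]
    simpa [Algebra.smul_def] using h
  · intro v hv w
    induction v using LocalizedModule.induction_on with | _ a s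
    induction w using LocalizedModule.induction_on with | _ b t
    obtain ⟨a, rfl⟩ := Ideal.Quotient.mk_surjective a
    obtain ⟨b, rfl⟩ := Ideal.Quotient.mk_surjective b
    have ha : a ∈ P.asIdeal.primeCompl := by
      intro h
      apply hv
      rw [Ideal.Quotient.eq_zero_iff_mem.mpr h, LocalizedModule.zero_mk]
    refine ⟨Localization.mk (b * s) (⟨a, ha⟩ * t), ?_⟩
    rw [LinearMap.toSpanSingleton_apply, LocalizedModule.mk_smul_mk, LocalizedModule.mk_eq]
    refine ⟨1, ?_⟩
    simp only [one_smul, Submonoid.smul_def, Submonoid.coe_mul, Algebra.smul_def,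
      Ideal.Quotient.algebraMap_eq, map_mul]
    ring

lemma ll_quot_ne {R : Type} [CommRing R] (P Q : PrimeSpectrum R) (h : ¬ P.asIdeal ≤ Q.asIdeal) :
    ll (R ⧸ P.asIdeal) Q = 0 := by
  unfold ll
  rw [Module.length_eq_zero_iff, LocalizedModule.subsingleton_iff]
  intro m
  obtain ⟨r, hr, hr'⟩ := SetLike.not_le_iff_exists.mp h
  refine ⟨r, hr', ?_⟩
  rw [Algebra.smul_def, Ideal.Quotient.algebraMap_eq, Ideal.Quotient.eq_zero_iff_mem.mpr hr,
    zero_mul]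

section main
variable {R : Type} [CommRing R] [IsNoetherianRing R] [IsLocalRing R]

lemma lc_quot_ne_top (hdim : ringKrullDim R = 1) (x : R) (hxR : x ∈ nonZeroDivisors R)
    (I : Ideal R) : lc x (R ⧸ I) ≠ ⊤ := by
  have : Ring.KrullDimLE 1 R := by
    rw [Ring.KrullDimLE, Order.krullDimLE_iff]
    exact hdim.le
  have h := Ring.ord_ne_top (R := R) hxR
  refine ne_top_of_le_ne_top h ?_
  refine Module.length_le_of_surjective
    (Submodule.mapQ (Ideal.span {x}) (LinearMap.range (mulx x (R ⧸ I))) (Submodule.mkQ I) ?_) ?_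
  · rw [Ideal.span, Submodule.span_le, Set.singleton_subset_iff]
    refine ⟨1, ?_⟩
    change x • (1 : R ⧸ I) = Ideal.Quotient.mk I x
    rw [Algebra.smul_def, mul_one]; rfl
  · intro y
    obtain ⟨y, rfl⟩ := Submodule.mkQ_surjective _ y
    obtain ⟨y, rfl⟩ := Submodule.mkQ_surjective _ y
    exact ⟨Submodule.Quotient.mk y, rfl⟩

lemma not_mem_min (x : R) (hxR : x ∈ nonZeroDivisors R) {P : Ideal R} (hP : P ∈ minimalPrimes R) :
    x ∉ P := fun h => notMem_nonZeroDivisors_of_mem_mem_minimalPrimes h hP hxR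

lemma herbrand (hdim : ringKrullDim R = 1) (x : R) (hx : x ∈ maximalIdeal R)
    (hxR : x ∈ nonZeroDivisors R) (S : Finset (PrimeSpectrum R))
    (hS : ∀ P : PrimeSpectrum R, P ∈ S ↔ P.asIdeal ∈ minimalPrimes R)
    (M : Type) [AddCommGroup M] [Module R M] [hM : Module.Finite R M] :
    lc x M ≠ ⊤ ∧ lc x M = lk x M + ∑ P ∈ S, ll M P * lc x (R ⧸ P.asIdeal) := by
  induction hM using IsNoetherianRing.induction_on_isQuotientEquivQuotientPrime R with
  | subsingleton N =>
    have h1 : lc x N = 0 := Module.length_eq_zero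
    have h2 : lk x N = 0 := Module.length_eq_zero
    have h3 : ∀ P : PrimeSpectrum R, ll N P = 0 := fun P => Module.length_eq_zero
    simp [h1, h2, h3]
  | quotient N p e =>
    obtain ⟨e1, e2, e3⟩ := inv_of_equiv x e
    rw [e1, e2]
    simp only [e3]
    refine ⟨lc_quot_ne_top hdim x hxR _, ?_⟩
    by_cases hp : p ∈ S
    · have hk : lk x (R ⧸ p.asIdeal) = 0 := by
        unfold lk
        rw [Module.length_eq_zero_iff, Submodule.subsingleton_iff_eq_bot, LinearMap.ker_eq_bot']
        intro m hm
        obtain ⟨m, rfl⟩ := Ideal.Quotient.mk_surjective m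
        have hm' : Ideal.Quotient.mk p.asIdeal (x * m) = 0 := by
          rw [map_mul]; exact hm
        rw [Ideal.Quotient.eq_zero_iff_mem] at hm' ⊢
        exact (p.2.mem_or_mem hm').resolve_left (not_mem_min x hxR ((hS p).mp hp))
      rw [hk, zero_add, Finset.sum_eq_single p, ll_quot_self, one_mul]
      · intro Q hQ hne
        rw [ll_quot_ne, zero_mul]
        intro hle
        apply hne
        apply PrimeSpectrum.ext
        exact le_antisymm (((hS Q).mp hQ).2 ⟨p.2, bot_le⟩ hle) hle
      · exact fun h => absurd hp h
    · have : Ring.KrullDimLE 1 R := by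
        rw [Ring.KrullDimLE, Order.krullDimLE_iff]
        exact hdim.le
      have hmax : p.asIdeal = maximalIdeal R :=
        eq_maximalIdeal ((Ring.krullDimLE_one_iff.mp this p.asIdeal p.2).resolve_left
          (fun h => hp ((hS p).mpr h)))
      have hz : mulx x (R ⧸ p.asIdeal) = 0 := by
        ext
        change x • (1 : R ⧸ p.asIdeal) = 0
        rw [Algebra.smul_def, mul_one]
        exact Ideal.Quotient.eq_zero_iff_mem.mpr (hmax ▸ hx)
      rw [Finset.sum_eq_zero, add_zero]
      · unfold lc lk
        rw [hz, LinearMap.range_zero, LinearMap.ker_zero, Module.length_top]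
        exact (Submodule.quotEquivOfEqBot ⊥ rfl).length_eq
      · intro Q hQ
        rw [ll_quot_ne, zero_mul]
        intro hle
        exact not_mem_min x hxR ((hS Q).mp hQ) (hle (hmax ▸ hx))
  | exact A B C f g hf hg H hA hC =>
    obtain ⟨hA1, hA2⟩ := hA
    obtain ⟨hC1, hC2⟩ := hC
    obtain ⟨s1, s2⟩ := snake x f g hf hg H
    refine ⟨ne_top_of_le_ne_top (WithTop.add_ne_top.mpr ⟨hA1, hC1⟩) s2, ?_⟩
    have hA0 : lk x A ≠ ⊤ := ne_top_of_le_ne_top hA1 (hA2 ▸ le_self_add)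
    have hC0 : lk x C ≠ ⊤ := ne_top_of_le_ne_top hC1 (hC2 ▸ le_self_add)
    have : lk x A + lk x C ≠ ⊤ := WithTop.add_ne_top.mpr ⟨hA0, hC0⟩
    simp only [ll_exact f g hf hg H, add_mul, Finset.sum_add_distrib]
    refine ENat.add_right_injective_of_ne_top this ?_
    dsimp only
    rw [s1, hA2, hC2]
    ring

lemma lk_eq_zero_iff (hdim : ringKrullDim R = 1) (x : R) (hx : x ∈ maximalIdeal R)
    (hxR : x ∈ nonZeroDivisors R)
    (M : Type) [AddCommGroup M] [Module R M] [Module.Finite R M] :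
    lk x M = 0 ↔ ∀ P ∈ associatedPrimes R M, P ∈ minimalPrimes R := by
  have hd : Ring.KrullDimLE 1 R := by
    rw [Ring.KrullDimLE, Order.krullDimLE_iff]
    exact hdim.le
  unfold lk
  rw [Module.length_eq_zero_iff, Submodule.subsingleton_iff_eq_bot, LinearMap.ker_eq_bot']
  constructor
  · intro h P hP
    by_contra hmin
    have hmax := eq_maximalIdeal ((Ring.krullDimLE_one_iff.mp hd P hP.1).resolve_left hmin)
    obtain ⟨hPp, v, hv⟩ := isAssociatedPrime_iff.mp hP
    have hxv : x • v = 0 := by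
      have : x ∈ P := hmax ▸ hx
      rw [hv] at this
      simpa [Submodule.mem_colon_singleton] using this
    have hv0 : v = 0 := h v hxv
    apply hPp.ne_top
    rw [hv, hv0, Ideal.eq_top_iff_one]
    simp
  · intro h v hv
    by_contra hv0
    obtain ⟨P, hP, hle⟩ := exists_le_isAssociatedPrime_of_isNoetherianRing R v hv0
    apply not_mem_min x hxR (h P hP)
    apply hle
    simpa [Submodule.mem_colon_singleton] using hv

lemma lc_quot_ne_zero (x : R) (hx : x ∈ maximalIdeal R) (P : Ideal R) (hP : P ≠ ⊤) :
    lc x (R ⧸ P) ≠ 0 := by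
  unfold lc
  rw [Ne, Module.length_eq_zero_iff, Submodule.Quotient.subsingleton_iff]
  intro h
  obtain ⟨y, hy⟩ : (1 : R ⧸ P) ∈ LinearMap.range (mulx x (R ⧸ P)) := h ▸ Submodule.mem_top
  obtain ⟨y, rfl⟩ := Ideal.Quotient.mk_surjective y
  have hy' : Ideal.Quotient.mk P (x * y) = Ideal.Quotient.mk P 1 := by
    rw [map_mul, map_one]; exact hy
  rw [Ideal.Quotient.eq] at hy'
  have h1 : (1 : R) ∈ maximalIdeal R := by
    have := Ideal.sub_mem _ (Ideal.mul_mem_right y _ hx) (le_maximalIdeal hP hy')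
    simpa using this
  exact (maximalIdeal.isMaximal R).ne_top ((Ideal.eq_top_iff_one _).mpr h1)

lemma dim_quot (hdim : ringKrullDim R = 1) (x : R) (hx : x ∈ maximalIdeal R)
    (hxR : x ∈ nonZeroDivisors R) (P : Ideal R) (hP : P ∈ minimalPrimes R) :
    ringKrullDim (R ⧸ P) = 1 := by
  have : P.IsPrime := hP.1.1
  refine le_antisymm (hdim ▸ ringKrullDim_quotient_le P) ?_
  refine Order.succ_le_of_lt (a := (0 : WithBot ℕ∞)) (lt_of_not_ge fun h => ?_)
  have h0 : Ring.KrullDimLE 0 (R ⧸ P) := Ring.krullDimLE_iff.mpr h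
  have hf : IsField (R ⧸ P) := Ring.KrullDimLE.isField_of_isDomain
  have hm : P.IsMaximal := Ideal.Quotient.maximal_of_isField P hf
  exact not_mem_min x hxR hP (eq_maximalIdeal hm ▸ hx)

end main

lemma mlen_quot {R : Type} [CommRing R] (x : R) (M : Type) [AddCommGroup M] [Module R M] :
    mlen R (M ⧸ ((Ideal.span {x} : Ideal R) • (⊤ : Submodule R M))) = (lc x M : WithBot ℕ∞) := by
  have h : (Ideal.span {x} : Ideal R) • (⊤ : Submodule R M) = LinearMap.range (mulx x M) := by
    ext y
    rw [Submodule.ideal_span_singleton_smul, Submodule.mem_smul_pointwise_iff_exists]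
    simp
  rw [h]
  exact (Module.coe_length _ _).symm

end LC

/-- Length comparison under dimension reduction: if `M, N` are finite modules of dimension 1
over a 1-dimensional Noetherian local ring, `N` is torsion free (CM), and
`length_{R_P}(M_P) ≥ length_{R_P}(N_P)` at all 1-dimensional primes, then for a
non-zerodivisor `x ∈ m` one has `length(M/xM) ≥ length(N/xN)`, with equality iff `M` is
torsion free and the localized lengths agree. -/
theorem length_comparison (R : Type) [CommRing R] [IsNoetherianRing R] [IsLocalRing R]
    (hdim : ringKrullDim R = 1)
    (M N : Type) [AddCommGroup M] [Module R M] [AddCommGroup N] [Module R N]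
    [Module.Finite R M] [Module.Finite R N]
    (hMdim : ringKrullDim (R ⧸ Module.annihilator R M) = 1)
    (hNdim : ringKrullDim (R ⧸ Module.annihilator R N) = 1)
    (hNtf : ∀ P ∈ associatedPrimes R N, P ∈ minimalPrimes R)
    (hlen : ∀ P : PrimeSpectrum R, P.asIdeal ∈ minimalPrimes R →
      ringKrullDim (R ⧸ P.asIdeal) = 1 → locLen R N P ≤ locLen R M P)
    (x : R) (hx : x ∈ maximalIdeal R)
    (hxR : ∀ a : R, x * a = 0 → a = 0) (hxN : ∀ v : N, x • v = 0 → v = 0) :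
    mlen R (N ⧸ ((Ideal.span {x} : Ideal R) • (⊤ : Submodule R N))) ≤
      mlen R (M ⧸ ((Ideal.span {x} : Ideal R) • (⊤ : Submodule R M))) ∧
    (mlen R (M ⧸ ((Ideal.span {x} : Ideal R) • (⊤ : Submodule R M))) =
        mlen R (N ⧸ ((Ideal.span {x} : Ideal R) • (⊤ : Submodule R N))) ↔
      ((∀ P ∈ associatedPrimes R M, P ∈ minimalPrimes R) ∧
        ∀ P : PrimeSpectrum R, P.asIdeal ∈ minimalPrimes R →
          ringKrullDim (R ⧸ P.asIdeal) = 1 → locLen R M P = locLen R N P)) := by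
  classical
  have hxR' : x ∈ nonZeroDivisors R := by
    rw [mem_nonZeroDivisors_iff]
    exact ⟨hxR, fun a ha => hxR a (by rw [mul_comm]; exact ha)⟩
  have hfin : {P : PrimeSpectrum R | P.asIdeal ∈ minimalPrimes R}.Finite :=
    (minimalPrimes.finite_of_isNoetherianRing R).preimage
      (fun P _ Q _ h => PrimeSpectrum.ext h)
  set S := hfin.toFinset with hSdef
  have hS : ∀ P : PrimeSpectrum R, P ∈ S ↔ P.asIdeal ∈ minimalPrimes R := by
    intro P; simp [hSdef]
  obtain ⟨hM1, hM2⟩ := LC.herbrand hdim x hx hxR' S hS M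
  obtain ⟨-, hN2⟩ := LC.herbrand hdim x hx hxR' S hS N
  have hloc : ∀ (K : Type) [AddCommGroup K] [Module R K] (P : PrimeSpectrum R),
      locLen R K P = (LC.ll K P : WithBot ℕ∞) := fun K _ _ P => (Module.coe_length _ _).symm
  have hN0 : LC.lk x N = 0 := (LC.lk_eq_zero_iff hdim x hx hxR' N).mpr hNtf
  rw [hN0, zero_add] at hN2
  have hle : ∀ P ∈ S, LC.ll N P ≤ LC.ll M P := by
    intro P hP
    have h := (hS P).mp hP
    have := hlen P h (LC.dim_quot hdim x hx hxR' _ h)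
    rw [hloc, hloc] at this
    exact_mod_cast this
  have hle' : ∀ P ∈ S, LC.ll N P * LC.lc x (R ⧸ P.asIdeal) ≤
      LC.ll M P * LC.lc x (R ⧸ P.asIdeal) := fun P hP => mul_le_mul_left (hle P hP) _
  have hsum := Finset.sum_le_sum hle'
  rw [LC.mlen_quot, LC.mlen_quot, ← LC.lk_eq_zero_iff hdim x hx hxR' M]
  have hMsum : ∑ P ∈ S, LC.ll M P * LC.lc x (R ⧸ P.asIdeal) ≠ ⊤ :=
    ne_top_of_le_ne_top hM1 (hM2 ▸ le_add_self)
  have hNsum : ∑ P ∈ S, LC.ll N P * LC.lc x (R ⧸ P.asIdeal) ≠ ⊤ :=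
    ne_top_of_le_ne_top hMsum hsum
  constructor
  · have : LC.lc x N ≤ LC.lc x M := by
      rw [hM2, hN2]
      exact hsum.trans le_add_self
    exact_mod_cast this
  · have key : LC.lc x M = LC.lc x N ↔ LC.lk x M = 0 ∧ ∀ P ∈ S, LC.ll M P = LC.ll N P := by
      rw [hM2, hN2]
      constructor
      · intro h
        have hs : ∑ P ∈ S, LC.ll M P * LC.lc x (R ⧸ P.asIdeal) =
            ∑ P ∈ S, LC.ll N P * LC.lc x (R ⧸ P.asIdeal) :=
          le_antisymm (h ▸ le_add_self) hsum
        refine ⟨?_, ?_⟩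
        · rw [hs] at h
          refine ENat.add_left_injective_of_ne_top hNsum ?_
          dsimp only
          rw [h, zero_add]
        · intro P hP
          have hterm : LC.ll M P * LC.lc x (R ⧸ P.asIdeal) =
              LC.ll N P * LC.lc x (R ⧸ P.asIdeal) := by
            refine le_antisymm ?_ (hle' P hP)
            have hr : ∑ Q ∈ S.erase P, LC.ll N Q * LC.lc x (R ⧸ Q.asIdeal) ≤
                ∑ Q ∈ S.erase P, LC.ll M Q * LC.lc x (R ⧸ Q.asIdeal) :=
              Finset.sum_le_sum fun Q hQ => hle' Q (Finset.mem_of_mem_erase hQ)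
            rw [← Finset.add_sum_erase S _ hP, ← Finset.add_sum_erase S _ hP] at hs
            rw [← Finset.add_sum_erase S _ hP] at hNsum
            have hrn := (WithTop.add_ne_top.mp hNsum).2
            refine (ENat.add_le_add_iff_right hrn).mp ?_
            rw [← hs]
            exact add_le_add le_rfl hr
          have hc0 := LC.lc_quot_ne_zero x hx P.asIdeal P.2.ne_top
          have hct := LC.lc_quot_ne_top hdim x hxR' P.asIdeal
          exact LC.enat_cancel hc0 hct hterm
      · rintro ⟨h0, h⟩
        rw [h0, zero_add]
        exact Finset.sum_congr rfl fun P hP => by rw [h P hP]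
    rw [WithBot.coe_inj, key]
    refine and_congr_right fun _ => ?_
    constructor
    · intro h P hP _
      rw [hloc, hloc, h P ((hS P).mpr hP)]
    · intro h P hP
      have := h P ((hS P).mp hP) (LC.dim_quot hdim x hx hxR' _ ((hS P).mp hP))
      rw [hloc, hloc] at this
      exact_mod_cast this
end
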